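/- Fix k ∈ ℕ and real numbers m_ρ, m^I_1,...,m^I_k, m^D_1,...,m^D_k. Then lim_{n→∞} ( P_n[ρ̃_∞(σ) < m_ρ and Ĩ_j(σ) > m^I_j and D̃_j(σ) > m^D_j for all j ∈ {1,...,k}] − P_n[ρ̃_∞(σ) < m_ρ]·P_n[Ĩ_j(σ) > m^I_j and D̃_j(σ) > m^D_j for all j ∈ {1,...,k}] ) = 0. -/

import Mathlib

open scoped BigOperators Classical
open Finset Filter

/-- Probability of an event under the uniform measure on `S_n`. -/
noncomputable def Pn {n : ℕ} (p : Equiv.Perm (Fin n) → Prop) : ℝ :=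
  ((Finset.univ.filter p).card : ℝ) / (Fintype.card (Equiv.Perm (Fin n)) : ℝ)

/-- Spearman's uniform metric `ρ_∞(σ) = max_i |σ(i) − i|` (as a natural number). -/
def rhoInf {n : ℕ} (σ : Equiv.Perm (Fin n)) : ℕ :=
  Finset.univ.sup fun i : Fin n => (((σ i : ℕ) : ℤ) - ((i : ℕ) : ℤ)).natAbs

/-- Normalized Spearman's uniform metric `ρ̃_∞ = (n − ρ_∞)/√n`. -/
noncomputable def rhoInfTilde {n : ℕ} (σ : Equiv.Perm (Fin n)) : ℝ :=
  ((n : ℝ) - (rhoInf σ : ℝ)) / Real.sqrt n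

/-- The maximum cardinality of a union of `j` increasing subsequences of `σ`.
By Greene's theorem this equals `I_1(σ) + ⋯ + I_j(σ)`, the sum of the lengths of the
first `j` rows of the RSK Young diagram of `σ`. -/
noncomputable def maxIncUnion {n : ℕ} (j : ℕ) (σ : Equiv.Perm (Fin n)) : ℕ :=
  Finset.univ.sup fun c : Fin j → Finset (Fin n) =>
    if ∀ t : Fin j, StrictMonoOn (fun i => σ i) ((c t : Finset (Fin n)) : Set (Fin n))
    then (Finset.univ.biUnion c).card else 0

/-- The maximum cardinality of a union of `j` decreasing subsequences of `σ`.
By Greene's theorem this equals `D_1(σ) + ⋯ + D_j(σ)`, the sum of the lengths of the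
first `j` columns of the RSK Young diagram of `σ`. -/
noncomputable def maxDecUnion {n : ℕ} (j : ℕ) (σ : Equiv.Perm (Fin n)) : ℕ :=
  Finset.univ.sup fun c : Fin j → Finset (Fin n) =>
    if ∀ t : Fin j, StrictAntiOn (fun i => σ i) ((c t : Finset (Fin n)) : Set (Fin n))
    then (Finset.univ.biUnion c).card else 0

/-- `I_j(σ)`, the length of the `j`-th row of the RSK Young diagram of `σ`, defined
via Greene's theorem by the partial-sum relation. -/
noncomputable def rowLen {n : ℕ} (j : ℕ) (σ : Equiv.Perm (Fin n)) : ℕ :=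
  maxIncUnion j σ - maxIncUnion (j - 1) σ

/-- `D_j(σ)`, the length of the `j`-th column of the RSK Young diagram of `σ`, defined
via Greene's theorem by the partial-sum relation. -/
noncomputable def colLen {n : ℕ} (j : ℕ) (σ : Equiv.Perm (Fin n)) : ℕ :=
  maxDecUnion j σ - maxDecUnion (j - 1) σ

/-- The normalized row length `Ĩ_j = (I_j − 2√n)/n^{1/6}`. -/
noncomputable def rowLenTilde {n : ℕ} (j : ℕ) (σ : Equiv.Perm (Fin n)) : ℝ :=
  ((rowLen j σ : ℝ) - 2 * Real.sqrt n) / (n : ℝ) ^ ((1 : ℝ) / 6)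

/-- The normalized column length `D̃_j = (D_j − 2√n)/n^{1/6}`. -/
noncomputable def colLenTilde {n : ℕ} (j : ℕ) (σ : Equiv.Perm (Fin n)) : ℝ :=
  ((colLen j σ : ℝ) - 2 * Real.sqrt n) / (n : ℝ) ^ ((1 : ℝ) / 6)


noncomputable def ee (l : ℕ) : ℕ → ℕ := Pi.single l 1

lemma ee_apply (l i : ℕ) : ee l i = if i = l then 1 else 0 := by
  simp [ee, Pi.single_apply]

noncomputable def Lam (B n : ℕ) : Finset (ℕ → ℕ) := Finset.piAntidiag (range B) n

lemma mem_Lam {B n : ℕ} {f : ℕ → ℕ} : f ∈ Lam B n ↔ ∑ i ∈ range B, f i = n ∧ ∀ i, B ≤ i → f i = 0 := by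
  unfold Lam
  rw [Finset.mem_piAntidiag]
  refine and_congr Iff.rfl (forall_congr' fun i => ?_)
  rw [mem_range]
  constructor
  · intro h h2; by_contra h3; have := h h3; omega
  · intro h h2; by_contra h3; exact h2 (h (by omega))

noncomputable def ff (B : ℕ) : ℕ → (ℕ → ℕ) → ℕ
  | 0, lam => if lam = 0 then 1 else 0
  | n + 1, mu => if Antitone mu then ∑ l ∈ range B, if 0 < mu l then ff B n (mu - ee l) else 0 else 0

lemma add_ee_mem {B n l : ℕ} {f : ℕ → ℕ} (hf : f ∈ Lam B n) (hl : l < B) : f + ee l ∈ Lam B (n + 1) := by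
  rw [mem_Lam] at *
  refine ⟨?_, fun i hi => ?_⟩
  · simp [sum_add_distrib, hf.1, ee_apply, hl]
  · have : i ≠ l := by omega
    simp [hf.2 i hi, ee_apply, this]

lemma sub_add_ee {l : ℕ} {f : ℕ → ℕ} (h : 0 < f l) : f - ee l + ee l = f := by
  funext i
  simp only [Pi.add_apply, Pi.sub_apply, ee_apply]
  split_ifs with h1
  · subst h1; omega
  · omega

lemma add_sub_ee {l : ℕ} {f : ℕ → ℕ} : f + ee l - ee l = f := by
  funext i
  simp only [Pi.add_apply, Pi.sub_apply, ee_apply]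
  omega

lemma sub_ee_mem {B n l : ℕ} {f : ℕ → ℕ} (hf : f ∈ Lam B (n + 1)) (hl : 0 < f l) : f - ee l ∈ Lam B n := by
  have hB : l < B := by
    by_contra h
    have := (mem_Lam.1 hf).2 l (by omega)
    omega
  rw [mem_Lam] at *
  refine ⟨?_, fun i hi => ?_⟩
  · have h1 := hf.1
    rw [← sub_add_ee hl] at h1
    simp only [Pi.add_apply, sum_add_distrib] at h1
    have : ∑ x ∈ range B, ee l x = 1 := by simp [ee_apply, hB]
    omega
  · simp [hf.2 i hi]

lemma ff_supp {B : ℕ} : ∀ {n : ℕ} {f : ℕ → ℕ}, ff B n f ≠ 0 → Antitone f ∧ f ∈ Lam B n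
  | 0, f, h => by
    simp only [ff, ne_eq, ite_eq_right_iff, one_ne_zero, imp_false, not_not] at h
    subst h
    exact ⟨fun _ _ _ => le_rfl, by simp [mem_Lam]⟩
  | n + 1, f, h => by
    simp only [ff] at h
    split_ifs at h with h1
    · refine ⟨h1, ?_⟩
      obtain ⟨l, hl, h2⟩ := exists_ne_zero_of_sum_ne_zero h
      split_ifs at h2 with h3
      · have := (ff_supp h2).2
        have := add_ee_mem this (mem_range.1 hl)
        rwa [sub_add_ee h3] at this
      · exact absurd rfl h2
    · exact absurd rfl h

lemma antitone_iff {f : ℕ → ℕ} : Antitone f ↔ ∀ i, f (i + 1) ≤ f i :=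
  ⟨fun h i => h (Nat.le_succ i), antitone_nat_of_succ_le⟩

lemma anti_aux {f : ℕ → ℕ} (hf : Antitone f) {l m : ℕ} (hlm : l ≠ m) (hm : 0 < f m)
    (h : Antitone (f - ee m + ee l)) : Antitone (f + ee l) ∧ Antitone (f - ee m) := by
  rw [antitone_iff] at h hf
  refine ⟨antitone_iff.2 fun i => ?_, antitone_iff.2 fun i => ?_⟩
  all_goals
    have h1 := h i
    have h2 := hf i
    simp only [Pi.add_apply, Pi.sub_apply, ee_apply] at *
    split_ifs at * <;> first | omega | (subst_vars; omega)

lemma card_add_rem {B n : ℕ} (hn : n < B) {f : ℕ → ℕ} (hf : Antitone f) (hL : f ∈ Lam B n) :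
    ((range B).filter fun l => Antitone (f + ee l)).card =
    ((range B).filter fun m => 0 < f m ∧ Antitone (f - ee m)).card + 1 := by
  have hadd : ∀ l, Antitone (f + ee l) ↔ l = 0 ∨ (0 < l ∧ f l < f (l - 1)) := by
    intro l
    rw [antitone_iff] at *
    constructor
    · intro h
      rcases Nat.eq_zero_or_pos l with h0 | h0
      · exact Or.inl h0
      · right
        have := h (l - 1)
        have e : l - 1 + 1 = l := by omega
        have e2 : l - 1 ≠ l := by omega
        simp only [Pi.add_apply, ee_apply, e, e2, if_true, if_false] at this
        omega
    · intro h i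
      have h2 := hf i
      simp only [Pi.add_apply, ee_apply]
      split_ifs with h3 h4
      · omega
      · subst h3
        simp at h; omega
      · omega
      · omega
  have hrem : ∀ m, (0 < f m ∧ Antitone (f - ee m)) ↔ f (m + 1) < f m := by
    intro m
    rw [antitone_iff] at *
    constructor
    · rintro ⟨h0, h⟩
      have := h m
      simp [ee_apply] at this
      omega
    · intro h
      refine ⟨by omega, fun i => ?_⟩
      have h2 := hf i
      simp only [Pi.sub_apply, ee_apply]
      split_ifs <;> first | omega | (subst_vars; omega)
  simp only [hadd, hrem]
  have hlast : f (B - 1) = 0 := by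
    by_contra h
    have h1 := (mem_Lam.1 hL).1
    have : ∑ i ∈ range B, 1 ≤ ∑ i ∈ range B, f i := sum_le_sum fun i hi => by
      have := hf (show i ≤ B - 1 by have := mem_range.1 hi; omega)
      omega
    simp at this
    omega
  have : (range B).filter (fun l => l = 0 ∨ 0 < l ∧ f l < f (l - 1)) =
      insert 0 (((range B).filter fun m => f (m + 1) < f m).image Nat.succ) := by
    ext l
    simp only [mem_filter, mem_range, mem_insert, mem_image]
    constructor
    · rintro ⟨h1, h2 | h2⟩
      · exact Or.inl h2
      · right
        refine ⟨l - 1, ⟨by omega, ?_⟩, by omega⟩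
        have e : l - 1 + 1 = l := by omega
        rw [e]; exact h2.2
    · rintro (h | ⟨m, ⟨h1, h2⟩, rfl⟩)
      · subst h; exact ⟨by omega, Or.inl rfl⟩
      · refine ⟨?_, Or.inr ⟨by omega, by simpa using h2⟩⟩
        by_contra h3
        have : m = B - 1 := by omega
        subst this; omega
  rw [this, card_insert_of_notMem (by simp), card_image_of_injective _ Nat.succ_injective]

lemma ff_up {B : ℕ} : ∀ {n : ℕ}, n < B → ∀ {f : ℕ → ℕ}, Antitone f → f ∈ Lam B n →
    ∑ l ∈ range B, ff B (n + 1) (f + ee l) = (n + 1) * ff B n f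
  | 0, hn, f, ha, hf => by
    have hf0 : f = 0 := by
      funext i
      rw [mem_Lam] at hf
      by_cases hi : i < B
      · simpa using (sum_eq_zero_iff.1 hf.1) i (mem_range.2 hi)
      · exact hf.2 i (by omega)
    subst hf0
    rw [sum_eq_single 0]
    · have h1 : Antitone (0 + ee 0) := by
        rw [antitone_iff]; intro i; simp [ee_apply]
      simp only [ff, if_pos h1]
      rw [sum_eq_single 0]
      · simp [add_sub_ee, ee_apply]
      · intro b _ hb
        simp [ee_apply, hb]
      · intro h; simp at h; omega
    · intro l _ hl
      have h1 : ¬ Antitone (0 + ee l) := by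
        intro h
        have := h (Nat.zero_le l)
        simp [ee_apply, Ne.symm hl] at this
      simp only [ff, if_neg h1]
    · intro h; simp at h; omega
  | n + 1, hn, f, ha, hf => by
    have key : ∀ l ∈ range B, ff B (n + 2) (f + ee l) =
        (if Antitone (f + ee l) then ff B (n + 1) f else 0) +
        ∑ m ∈ range B, if l ≠ m ∧ 0 < f m then ff B (n + 1) (f - ee m + ee l) else 0 := by
      intro l hl
      rw [ff]
      split_ifs with h1
      · rw [← add_sum_erase _ _ hl, ← add_sum_erase (range B) (fun m => if l ≠ m ∧ 0 < f m then _ else _) hl]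
        simp only [add_sub_ee]
        have : 0 < (f + ee l) l := by simp [ee_apply]
        simp only [this, if_true, ne_eq, not_true, false_and, if_false, zero_add]
        congr 1
        refine sum_congr rfl fun m hm => ?_
        have hne : m ≠ l := ne_of_mem_erase hm
        have h2 : (f + ee l) m = f m := by simp [ee_apply, hne]
        rw [h2]
        by_cases h3 : 0 < f m
        · simp only [h3, if_true, hne.symm, not_false_iff, and_self]
          congr 1
          funext i
          simp only [Pi.add_apply, Pi.sub_apply, ee_apply]
          split_ifs <;> (subst_vars; omega)
        · simp [h3]
      · symm
        simp only [zero_add]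
        refine sum_eq_zero fun m hm => ?_
        split_ifs with h2
        · by_contra h3
          exact h1 (anti_aux ha h2.1 h2.2 (ff_supp h3).1).1
        · rfl
    have key2 : ∀ m ∈ range B, (if 0 < f m then (n + 1) * ff B n (f - ee m) else 0) =
        (if 0 < f m ∧ Antitone (f - ee m) then ff B (n + 1) f else 0) +
        ∑ l ∈ range B, if l ≠ m ∧ 0 < f m then ff B (n + 1) (f - ee m + ee l) else 0 := by
      intro m hm
      by_cases h0 : 0 < f m
      · simp only [h0, if_true, true_and, and_true]
        by_cases h1 : Antitone (f - ee m)
        · rw [← ff_up (by omega) h1 (sub_ee_mem hf h0)]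
          rw [← add_sum_erase _ _ hm, ← add_sum_erase (range B) (fun l => if l ≠ m then _ else _) hm]
          simp only [sub_add_ee h0, h1, if_true, ne_eq, not_true, if_false, zero_add]
          congr 1
          refine sum_congr rfl fun l hl => ?_
          rw [if_pos (ne_of_mem_erase hl)]
        · have : ff B n (f - ee m) = 0 := by
            by_contra h3; exact h1 (ff_supp h3).1
          simp only [this, h1, if_false, mul_zero, zero_add]
          symm
          refine sum_eq_zero fun l hl => ?_
          split_ifs with h2
          · by_contra h3
            exact h1 (anti_aux ha h2 h0 (ff_supp h3).1).2
          · rfl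
      · simp [h0]
    rw [sum_congr rfl key, sum_add_distrib, sum_comm]
    have e1 : (n + 1) * ff B (n + 1) f = ∑ m ∈ range B, if 0 < f m then (n + 1) * ff B n (f - ee m) else 0 := by
      rw [ff, if_pos ha, mul_sum]
      refine sum_congr rfl fun m _ => ?_
      split_ifs <;> simp
    have e2 := sum_congr rfl key2
    rw [← e1, sum_add_distrib] at e2
    have e3 := card_add_rem hn ha hf
    have e4 : (n + 1 + 1) * ff B (n + 1) f = (n + 1) * ff B (n + 1) f + ff B (n + 1) f := by ring
    rw [e4, e2]
    rw [← sum_filter, ← sum_filter, sum_const, sum_const, e3]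
    simp only [smul_eq_mul]
    ring

lemma reindex {M : Type*} [AddCommMonoid M] (B n : ℕ) (G : (ℕ → ℕ) → ℕ → M) :
    ∑ mu ∈ Lam B (n + 1), ∑ l ∈ range B, (if 0 < mu l then G (mu - ee l) l else 0) =
    ∑ lam ∈ Lam B n, ∑ l ∈ range B, G lam l := by
  simp only [← sum_filter]
  rw [sum_sigma', sum_sigma']
  refine sum_bij' (fun x _ => ⟨x.1 - ee x.2, x.2⟩) (fun x _ => ⟨x.1 + ee x.2, x.2⟩) ?_ ?_ ?_ ?_ ?_
  · rintro ⟨a, l⟩ h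
    simp only [mem_sigma, mem_filter] at h ⊢
    exact ⟨sub_ee_mem h.1 h.2.2, h.2.1⟩
  · rintro ⟨a, l⟩ h
    simp only [mem_sigma, mem_filter] at h ⊢
    exact ⟨add_ee_mem h.1 (mem_range.1 h.2), h.2, by simp [ee_apply]⟩
  · rintro ⟨a, l⟩ h
    simp only [mem_sigma, mem_filter] at h ⊢
    simp [sub_add_ee h.2.2]
  · rintro ⟨a, l⟩ h
    simp [add_sub_ee]
  · rintro ⟨a, l⟩ h
    rfl

/-- master step -/
lemma ff_step (B n : ℕ) (φ : (ℕ → ℕ) → ℝ) :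
    ∑ mu ∈ Lam B (n + 1), φ mu * (ff B (n + 1) mu : ℝ) ^ 2 =
    ∑ lam ∈ Lam B n, ∑ l ∈ range B, φ (lam + ee l) * ff B n lam * ff B (n + 1) (lam + ee l) := by
  rw [← reindex B n (fun lam l => φ (lam + ee l) * ff B n lam * ff B (n + 1) (lam + ee l))]
  refine sum_congr rfl fun mu hmu => ?_
  by_cases h : Antitone mu
  · have : (ff B (n + 1) mu : ℝ) = ∑ l ∈ range B, if 0 < mu l then (ff B n (mu - ee l) : ℝ) else 0 := by
      rw [ff, if_pos h]; push_cast; rfl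
    have e : φ mu * (ff B (n + 1) mu : ℝ) ^ 2 =
        (∑ l ∈ range B, if 0 < mu l then (ff B n (mu - ee l) : ℝ) else 0) * (φ mu * (ff B (n + 1) mu : ℝ)) := by
      rw [← this]; ring
    rw [e, sum_mul]
    refine sum_congr rfl fun l _ => ?_
    split_ifs with h2
    · rw [sub_add_ee h2]; ring
    · simp
  · have : ff B (n + 1) mu = 0 := by rw [ff, if_neg h]
    rw [this]
    simp only [Nat.cast_zero]
    symm
    rw [zero_pow two_ne_zero, mul_zero]
    refine sum_eq_zero fun l _ => ?_
    split_ifs with h2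
    · rw [sub_add_ee h2, this]; simp
    · rfl

lemma ff_up' {B n : ℕ} (hn : n < B) {lam : ℕ → ℕ} (h : lam ∈ Lam B n) :
    (ff B n lam : ℝ) * ∑ l ∈ range B, (ff B (n + 1) (lam + ee l) : ℝ) = (n + 1) * (ff B n lam : ℝ) ^ 2 := by
  by_cases h0 : ff B n lam = 0
  · simp [h0]
  · have := ff_up hn (ff_supp h0).1 h
    have h2 : ∑ l ∈ range B, (ff B (n + 1) (lam + ee l) : ℝ) = (n + 1) * ff B n lam := by
      exact_mod_cast this
    rw [h2]; ring

lemma ff_total (B : ℕ) : ∀ n, n ≤ B → ∑ lam ∈ Lam B n, (ff B n lam : ℝ) ^ 2 = (n.factorial : ℝ)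
  | 0, _ => by
    rw [sum_eq_single 0]
    · simp [ff]
    · intro b _ hb; simp [ff, hb]
    · intro h; exact absurd (mem_Lam.2 ⟨by simp, by simp⟩) h
  | n + 1, h => by
    have := ff_step B n (fun _ => 1)
    simp only [one_mul] at this
    rw [this]
    simp only [← mul_sum]
    rw [sum_congr rfl fun lam hl => ff_up' (by omega) hl, ← mul_sum, ff_total B n (by omega)]
    push_cast [Nat.factorial_succ]
    ring

/-- flow into row i -/
noncomputable def vv (B n i : ℕ) : ℝ :=
  (∑ lam ∈ Lam B n, (ff B n lam : ℝ) * ff B (n + 1) (lam + ee i)) / ((n + 1).factorial : ℝ)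

lemma ff_row (B n i : ℕ) (hn : n < B) (hi : i < B) (g : ℕ → ℝ) :
    (∑ mu ∈ Lam B (n + 1), g (mu i) * (ff B (n + 1) mu : ℝ) ^ 2) / ((n + 1).factorial : ℝ) =
    (∑ lam ∈ Lam B n, g (lam i) * (ff B n lam : ℝ) ^ 2) / (n.factorial : ℝ) +
    (∑ lam ∈ Lam B n, (g (lam i + 1) - g (lam i)) * ((ff B n lam : ℝ) * ff B (n + 1) (lam + ee i)))
      / ((n + 1).factorial : ℝ) := by
  rw [ff_step B n (fun mu => g (mu i))]
  have : ∀ lam ∈ Lam B n, ∑ l ∈ range B, g ((lam + ee l) i) * ff B n lam * ff B (n + 1) (lam + ee l) =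
      g (lam i) * ((n + 1) * (ff B n lam : ℝ) ^ 2) +
      (g (lam i + 1) - g (lam i)) * ((ff B n lam : ℝ) * ff B (n + 1) (lam + ee i)) := by
    intro lam hl
    rw [← ff_up' hn hl, mul_sum, mul_sum]
    have h1 : (g (lam i + 1) - g (lam i)) * ((ff B n lam : ℝ) * ff B (n + 1) (lam + ee i)) =
        ∑ l ∈ range B, if l = i then (g (lam i + 1) - g (lam i)) * ((ff B n lam : ℝ) * ff B (n + 1) (lam + ee l)) else 0 := by
      rw [sum_ite_eq']; simp [hi]
    rw [h1, ← sum_add_distrib]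
    refine sum_congr rfl fun l _ => ?_
    by_cases h : l = i
    · subst h; simp [ee_apply]; ring
    · have h' : ¬ i = l := fun h2 => h h2.symm
      simp [ee_apply, h, h']; ring
  rw [sum_congr rfl this, sum_add_distrib, add_div]
  congr 1
  have h2 : ∑ lam ∈ Lam B n, g (lam i) * ((n + 1) * (ff B n lam : ℝ) ^ 2) =
    (n + 1) * ∑ lam ∈ Lam B n, g (lam i) * (ff B n lam : ℝ) ^ 2 := by
    rw [mul_sum]; refine sum_congr rfl fun _ _ => by ring
  rw [h2, Nat.factorial_succ]
  push_cast
  rw [mul_div_mul_left _ _ (by positivity)]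

/-- shifted sum -/
lemma shift_sum (B n i : ℕ) (hi : i < B) (φ : (ℕ → ℕ) → ℝ) :
    ∑ mu ∈ (Lam B (n + 1)).filter (fun mu => 0 < mu i), φ mu = ∑ lam ∈ Lam B n, φ (lam + ee i) := by
  refine sum_bij' (fun x _ => x - ee i) (fun x _ => x + ee i) ?_ ?_ ?_ ?_ ?_
  · intro a h; rw [mem_filter] at h; exact sub_ee_mem h.1 h.2
  · intro a h; rw [mem_filter]; exact ⟨add_ee_mem h hi, by simp [ee_apply]⟩
  · intro a h; rw [mem_filter] at h; exact sub_add_ee h.2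
  · intro a h; exact add_sub_ee
  · intro a h; rw [mem_filter] at h; simp only [sub_add_ee h.2]

lemma y_sum_le (B n i : ℕ) (hn : n < B) (hi : i < B) :
    ∑ lam ∈ Lam B n, (ff B (n + 1) (lam + ee i) : ℝ) ^ 2 ≤ ((n + 1).factorial : ℝ) := by
  rw [← ff_total B (n + 1) (by omega), ← shift_sum B n i hi (fun mu => (ff B (n + 1) mu : ℝ) ^ 2)]
  exact sum_le_sum_of_subset_of_nonneg (filter_subset _ _) fun _ _ _ => by positivity

lemma vv_nonneg (B n i : ℕ) : 0 ≤ vv B n i := by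
  unfold vv; positivity

lemma vv_le (B n i : ℕ) (hn : n < B) (hi : i < B) : √(n + 1) * vv B n i ≤ 1 := by
  have h1 := Finset.sum_mul_sq_le_sq_mul_sq (Lam B n) (fun lam => (ff B n lam : ℝ))
    (fun lam => (ff B (n + 1) (lam + ee i) : ℝ))
  rw [ff_total B n (by omega)] at h1
  have h2 := y_sum_le B n i hn hi
  unfold vv
  set S := ∑ lam ∈ Lam B n, (ff B n lam : ℝ) * ff B (n + 1) (lam + ee i)
  have hf : (0:ℝ) < n.factorial := by positivity
  have h3 : S ^ 2 ≤ (n.factorial : ℝ) * ((n + 1).factorial : ℝ) := h1.trans (by gcongr)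
  have h4 : (√(n + 1) * (S / ((n + 1).factorial : ℝ))) ^ 2 ≤ 1 := by
    rw [mul_pow, Real.sq_sqrt (by positivity), div_pow]
    rw [Nat.factorial_succ] at *
    push_cast at *
    rw [mul_div_assoc', div_le_one (by positivity)]
    nlinarith
  exact (abs_le_of_sq_le_sq' (by simpa using h4) zero_le_one).2

lemma vv_mono (B n k : ℕ) (hn : n + 1 < B) (hk : k ≤ B) :
    ∑ i ∈ range k, vv B (n + 1) i ≤ ∑ i ∈ range k, vv B n i := by
  have e1 : ∑ i ∈ range k, vv B (n + 1) i = (∑ lam ∈ Lam B n, (ff B n lam : ℝ) *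
      ∑ i ∈ range k, ∑ l ∈ range B, if Antitone (lam + ee l) then (ff B (n + 2) (lam + ee l + ee i) : ℝ) else 0)
        / ((n + 2).factorial : ℝ) := by
    unfold vv
    rw [← sum_div, sum_comm]
    congr 1
    have : ∀ mu ∈ Lam B (n + 1), ∑ i ∈ range k, (ff B (n + 1) mu : ℝ) * ff B (n + 1 + 1) (mu + ee i) =
      ∑ l ∈ range B, if 0 < mu l then (fun lam l => (ff B n lam : ℝ) * ∑ i ∈ range k,
        if Antitone (lam + ee l) then (ff B (n + 2) (lam + ee l + ee i) : ℝ) else 0) (mu - ee l) l else 0 := by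
      intro mu _
      by_cases h : Antitone mu
      · have : (ff B (n + 1) mu : ℝ) = ∑ l ∈ range B, if 0 < mu l then (ff B n (mu - ee l) : ℝ) else 0 := by
          rw [ff, if_pos h]; push_cast; rfl
        rw [← mul_sum, this, sum_mul]
        refine sum_congr rfl fun l _ => ?_
        split_ifs with h2
        · simp only [sub_add_ee h2, if_pos h]
        · simp
      · have h0 : ff B (n + 1) mu = 0 := by rw [ff, if_neg h]
        rw [h0]
        simp only [Nat.cast_zero, zero_mul, sum_const_zero]
        symm
        refine sum_eq_zero fun l _ => ?_
        by_cases h2 : 0 < mu l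
        · simp only [sub_add_ee h2, if_neg h]; simp
        · simp [h2]
    refine (sum_congr rfl this).trans ((reindex B n (fun lam l => (ff B n lam : ℝ) * ∑ i ∈ range k,
        if Antitone (lam + ee l) then (ff B (n + 2) (lam + ee l + ee i) : ℝ) else 0)).trans ?_)
    refine sum_congr rfl fun lam _ => ?_
    rw [← mul_sum, sum_comm]
  have e2 : ∑ i ∈ range k, vv B n i = (∑ lam ∈ Lam B n, (ff B n lam : ℝ) *
      ∑ i ∈ range k, ∑ l ∈ range B, if Antitone (lam + ee i) then (ff B (n + 2) (lam + ee i + ee l) : ℝ) else 0)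
        / ((n + 2).factorial : ℝ) := by
    unfold vv
    rw [← sum_div, sum_comm]
    rw [Nat.factorial_succ (n + 1)]
    push_cast
    rw [← mul_div_mul_left _ _ (show ((n:ℝ) + 1 + 1) ≠ 0 by positivity), mul_sum]
    congr 1
    refine sum_congr rfl fun lam hl => ?_
    rw [mul_sum, mul_sum]
    refine sum_congr rfl fun i hi => ?_
    have hi' : i < B := by have := mem_range.1 hi; omega
    by_cases h : Antitone (lam + ee i)
    · have := ff_up hn h (add_ee_mem hl hi')
      have h2 : ∑ l ∈ range B, (ff B (n + 1 + 1) (lam + ee i + ee l) : ℝ) = (n + 1 + 1) * ff B (n + 1) (lam + ee i) := by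
        exact_mod_cast this
      simp only [if_pos h]
      rw [h2]; ring
    · have h0 : ff B (n + 1) (lam + ee i) = 0 := by rw [ff, if_neg h]
      simp [h, h0]
  rw [e1, e2]
  refine div_le_div_of_nonneg_right (sum_le_sum fun lam hl => ?_) (by positivity)
  by_cases hz : ff B n lam = 0
  · simp [hz]
  have hanti := (ff_supp hz).1
  refine mul_le_mul_of_nonneg_left ?_ (by positivity)
  -- split range B
  have hs : ∀ F : ℕ → ℕ → ℝ, ∑ i ∈ range k, ∑ l ∈ range B, F i l =
      ∑ i ∈ range k, ∑ l ∈ range k, F i l + ∑ i ∈ range k, ∑ l ∈ Ico k B, F i l := by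
    intro F
    rw [← sum_add_distrib]
    exact sum_congr rfl fun i _ => (sum_range_add_sum_Ico _ hk).symm
  rw [hs, hs]
  apply add_le_add
  · rw [sum_comm]
  · refine sum_le_sum fun i hi => sum_le_sum fun l hl => ?_
    have hi := mem_range.1 hi
    have hl := mem_Ico.1 hl
    split_ifs with h1 h2 h3
    · rw [add_right_comm]
    · apply le_of_eq
      norm_cast
      by_contra h3
      have h4 := (ff_supp h3).1
      apply h2
      rw [antitone_iff] at *
      intro j
      have a1 := h1 j
      have a2 := h4 j
      have a3 := hanti j
      simp only [Pi.add_apply, ee_apply] at *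
      split_ifs at * <;> omega
    · positivity
    · exact le_rfl

lemma tail_close (B n i : ℕ) (hn : n < B) (hi : i < B) (s : ℕ) :
    (∑ lam ∈ Lam B n with s ≤ lam i, (ff B n lam : ℝ) ^ 2) / (n.factorial : ℝ) -
    (∑ lam ∈ Lam B (n + 1) with s + 1 ≤ lam i, (ff B (n + 1) lam : ℝ) ^ 2) / ((n + 1).factorial : ℝ) ≤
    2 * √(2 * (1 - √(n + 1) * vv B n i)) := by
  have h0 : ∑ lam ∈ Lam B (n + 1) with s + 1 ≤ lam i, (ff B (n + 1) lam : ℝ) ^ 2 =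
      ∑ lam ∈ Lam B n with s ≤ lam i, (ff B (n + 1) (lam + ee i) : ℝ) ^ 2 := by
    rw [sum_filter, sum_filter]
    have := shift_sum B n i hi (fun mu => if s ≤ (mu i) - 1 then (ff B (n + 1) mu : ℝ) ^ 2 else 0)
    rw [sum_filter] at this
    refine Eq.trans ?_ (this.trans ?_)
    · refine sum_congr rfl fun mu _ => ?_
      split_ifs <;> first | rfl | omega
    · refine sum_congr rfl fun lam _ => ?_
      simp [ee_apply]
  rw [h0]
  set x : (ℕ → ℕ) → ℝ := fun lam => (ff B n lam : ℝ) / √(n.factorial : ℝ)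
  set y : (ℕ → ℕ) → ℝ := fun lam => (ff B (n + 1) (lam + ee i) : ℝ) / √((n + 1).factorial : ℝ)
  have hx2 : ∀ lam, x lam ^ 2 = (ff B n lam : ℝ) ^ 2 / (n.factorial : ℝ) := fun lam => by
    simp only [x, div_pow, Real.sq_sqrt (Nat.cast_nonneg _)]
  have hy2 : ∀ lam, y lam ^ 2 = (ff B (n + 1) (lam + ee i) : ℝ) ^ 2 / ((n + 1).factorial : ℝ) := fun lam => by
    simp only [y, div_pow, Real.sq_sqrt (Nat.cast_nonneg _)]
  have hX : ∑ lam ∈ Lam B n, x lam ^ 2 = 1 := by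
    simp only [hx2]; rw [← sum_div, ff_total B n (by omega)]; exact div_self (by positivity)
  have hY : ∑ lam ∈ Lam B n, y lam ^ 2 ≤ 1 := by
    simp only [hy2]; rw [← sum_div]; exact div_le_one_of_le₀ (y_sum_le B n i hn hi) (by positivity)
  have hXY : ∑ lam ∈ Lam B n, x lam * y lam = √(n + 1) * vv B n i := by
    simp only [x, y, vv]
    rw [mul_div_assoc', mul_sum, sum_div]
    refine sum_congr rfl fun lam _ => ?_
    have hs : √((n + 1).factorial : ℝ) = √(n + 1) * √(n.factorial : ℝ) := by
      rw [Nat.factorial_succ]; push_cast; rw [Real.sqrt_mul (by positivity)]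
    have h1 : ((n + 1).factorial : ℝ) = (√((n:ℝ) + 1) * √(n.factorial : ℝ)) * (√((n:ℝ) + 1) * √(n.factorial : ℝ)) := by
      rw [← hs]; exact (Real.mul_self_sqrt (by positivity)).symm
    rw [hs, h1]
    have h2 : √(n.factorial : ℝ) ≠ 0 := by positivity
    have h3 : √((n:ℝ) + 1) ≠ 0 := by positivity
    field_simp
  rw [sum_div, sum_div, ← sum_sub_distrib]
  simp only [← hx2, ← hy2]
  have hxn : ∀ lam, 0 ≤ x lam := fun _ => by positivity
  have hyn : ∀ lam, 0 ≤ y lam := fun _ => by positivity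
  have hle : ∑ lam ∈ Lam B n with s ≤ lam i, (x lam ^ 2 - y lam ^ 2) ≤
      ∑ lam ∈ Lam B n, |x lam - y lam| * (x lam + y lam) := by
    calc _ ≤ ∑ lam ∈ Lam B n with s ≤ lam i, |x lam - y lam| * (x lam + y lam) := by
          refine sum_le_sum fun lam _ => ?_
          have := hxn lam; have := hyn lam
          have := le_abs_self (x lam - y lam)
          nlinarith
      _ ≤ _ := sum_le_sum_of_subset_of_nonneg (filter_subset _ _) fun lam _ _ => by
          have := hxn lam; have := hyn lam; positivity
  refine hle.trans ?_
  have hcs := Finset.sum_mul_sq_le_sq_mul_sq (Lam B n) (fun lam => |x lam - y lam|) (fun lam => x lam + y lam)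
  simp only [sq_abs] at hcs
  have a1 : ∑ lam ∈ Lam B n, (x lam - y lam) ^ 2 ≤ 2 * (1 - √(n + 1) * vv B n i) := by
    have : ∑ lam ∈ Lam B n, (x lam - y lam) ^ 2 =
      ∑ lam ∈ Lam B n, x lam ^ 2 + ∑ lam ∈ Lam B n, y lam ^ 2 - 2 * ∑ lam ∈ Lam B n, x lam * y lam := by
      rw [mul_sum, ← sum_add_distrib, ← sum_sub_distrib]
      exact sum_congr rfl fun _ _ => by ring
    rw [this, hXY]; linarith
  have a2 : ∑ lam ∈ Lam B n, (x lam + y lam) ^ 2 ≤ 4 := by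
    have : ∑ lam ∈ Lam B n, (x lam + y lam) ^ 2 =
      ∑ lam ∈ Lam B n, x lam ^ 2 + ∑ lam ∈ Lam B n, y lam ^ 2 + 2 * ∑ lam ∈ Lam B n, x lam * y lam := by
      rw [mul_sum, ← sum_add_distrib, ← sum_add_distrib]
      exact sum_congr rfl fun _ _ => by ring
    rw [this, hXY]
    have := vv_le B n i hn hi
    linarith
  have a3 : 0 ≤ 2 * (1 - √(n + 1) * vv B n i) := by have := vv_le B n i hn hi; linarith
  have a4 : (∑ lam ∈ Lam B n, |x lam - y lam| * (x lam + y lam)) ^ 2 ≤ (2 * √(2 * (1 - √(n + 1) * vv B n i))) ^ 2 := by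
    refine hcs.trans ?_
    rw [mul_pow, Real.sq_sqrt a3]
    have : 0 ≤ ∑ lam ∈ Lam B n, (x lam + y lam) ^ 2 := by positivity
    nlinarith
  exact le_of_sq_le_sq a4 (by positivity)
  where
  le_of_sq_le_sq {a b : ℝ} (h : a ^ 2 ≤ b ^ 2) (hb : 0 ≤ b) : a ≤ b := abs_le_of_sq_le_sq' h hb |>.2

/-- atom bound -/
lemma atom_bound (B n i : ℕ) (hn : n < B) (hi : i < B) (s : ℕ) :
    (∑ lam ∈ Lam B n with lam i = s, (ff B n lam : ℝ) ^ 2) / (n.factorial : ℝ) ≤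
    vv B n i + 2 * √(2 * (1 - √(n + 1) * vv B n i)) := by
  have h1 := tail_close B n i hn hi s
  have h2 := ff_row B n i hn hi (fun t => if s + 1 ≤ t then 1 else 0)
  simp only [ite_mul, one_mul, zero_mul, ← sum_filter] at h2
  have h3 : ∑ lam ∈ Lam B n with s ≤ lam i, (ff B n lam : ℝ) ^ 2 =
    ∑ lam ∈ Lam B n with lam i = s, (ff B n lam : ℝ) ^ 2 + ∑ lam ∈ Lam B n with s + 1 ≤ lam i, (ff B n lam : ℝ) ^ 2 := by
    rw [sum_filter, sum_filter, sum_filter, ← sum_add_distrib]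
    refine sum_congr rfl fun lam _ => ?_
    split_ifs <;> first | omega | simp
  rw [h3, add_div, h2] at h1
  have h4 : (∑ lam ∈ Lam B n, ((if s + 1 ≤ lam i + 1 then (1:ℝ) else 0) - (if s + 1 ≤ lam i then 1 else 0)) *
      ((ff B n lam : ℝ) * ff B (n + 1) (lam + ee i))) / ((n + 1).factorial : ℝ) ≤ vv B n i := by
    unfold vv
    refine div_le_div_of_nonneg_right (sum_le_sum fun lam hl => ?_) (by positivity)
    have : (0:ℝ) ≤ (ff B n lam : ℝ) * ff B (n + 1) (lam + ee i) := by positivity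
    split_ifs <;> simp <;> linarith
  linarith


def KI (r : ℕ → ℕ → Prop) (k : ℕ) (s : Finset ℕ) : Prop :=
  ∃ c : ℕ → ℕ, (∀ a ∈ s, c a < k) ∧ ∀ a ∈ s, ∀ b ∈ s, a ≠ b → c a = c b → r a b ∨ r b a

lemma KI_flip {r : ℕ → ℕ → Prop} {k : ℕ} {s : Finset ℕ} (h : KI r k s) : KI (fun a b => r b a) k s := by
  obtain ⟨c, h1, h2⟩ := h
  exact ⟨c, h1, fun a ha b hb hab hc => (h2 a ha b hb hab hc).symm⟩

lemma KI_mono {r r' : ℕ → ℕ → Prop} (hr : ∀ a b, r a b → r' a b) {k : ℕ} {s : Finset ℕ} (h : KI r k s) : KI r' k s := by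
  obtain ⟨c, h1, h2⟩ := h
  exact ⟨c, h1, fun a ha b hb hab hc => (h2 a ha b hb hab hc).imp (hr _ _) (hr _ _)⟩

lemma exchange {r : ℕ → ℕ → Prop} (htr : ∀ a b c, r a b → r b c → r a c) (hirr : ∀ a, ¬ r a a)
    {x y z : ℕ} (hyz : r y z) (hyx : y ≠ x)
    (H1 : ∀ a, r a x → r a y) (H2 : ∀ b, r y b → b = z ∨ r x b) (H3 : ∀ a, r x a → ¬ r a z)
    {k : ℕ} {s : Finset ℕ} (h : KI r k s) :
    ∃ s', s'.card = s.card ∧ s' ⊆ insert y s ∧ KI (fun a b => r a b ∧ ¬ (a = x ∧ b = z)) k s' := by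
  obtain ⟨c, h1, h2⟩ := h
  have hyz' : y ≠ z := by rintro rfl; exact hirr _ hyz
  by_cases hC : x ∈ s ∧ z ∈ s ∧ c x = c z
  swap
  · refine ⟨s, rfl, subset_insert _ _, c, h1, fun a ha b hb hab hc => ?_⟩
    rcases h2 a ha b hb hab hc with h | h
    · refine Or.inl ⟨h, ?_⟩
      rintro ⟨rfl, rfl⟩
      exact hC ⟨ha, hb, hc⟩
    · refine Or.inr ⟨h, ?_⟩
      rintro ⟨rfl, rfl⟩
      exact hC ⟨hb, ha, hc.symm⟩
  obtain ⟨hx, hz, hxz⟩ := hC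
  by_cases hy : y ∈ s
  swap
  · -- replace x by y
    have key : ∀ b ∈ s, b ≠ x → c b = c x → r b y ∨ r y b := by
      intro b hb hbx hc
      rcases h2 b hb x hx hbx hc with h | h
      · exact Or.inl (H1 b h)
      · by_cases hbz : b = z
        · subst hbz; exact Or.inr hyz
        · rcases h2 b hb z hz hbz (hc.trans hxz) with h' | h'
          · exact absurd h' (H3 b h)
          · exact Or.inr (htr _ _ _ hyz h')
    refine ⟨insert y (s.erase x), ?_, insert_subset_insert _ (erase_subset _ _), Function.update c y (c x), ?_, ?_⟩
    · rw [card_insert_of_notMem (fun h => hy (mem_of_mem_erase h)), card_erase_of_mem hx]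
      have := card_pos.2 ⟨x, hx⟩
      omega
    · intro a ha
      by_cases hay : a = y
      · subst hay; simpa using h1 x hx
      · rw [Function.update_of_ne hay]
        exact h1 a (mem_of_mem_erase ((mem_insert.1 ha).resolve_left hay))
    · intro a ha b hb hab hc
      by_cases hay : a = y
      · subst hay
        have hb' := (mem_insert.1 hb).resolve_left (Ne.symm hab)
        rw [Function.update_self, Function.update_of_ne (Ne.symm hab)] at hc
        rcases key b (mem_of_mem_erase hb') (ne_of_mem_erase hb') hc.symm with h | h
        · exact Or.inr ⟨h, fun h => hyz' h.2⟩
        · exact Or.inl ⟨h, fun h => hyx h.1⟩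
      · have ha' := (mem_insert.1 ha).resolve_left hay
        by_cases hby : b = y
        · subst hby
          rw [Function.update_self, Function.update_of_ne hab] at hc
          rcases key a (mem_of_mem_erase ha') (ne_of_mem_erase ha') hc with h | h
          · exact Or.inl ⟨h, fun h => hyz' h.2⟩
          · exact Or.inr ⟨h, fun h => hyx h.1⟩
        · have hb' := (mem_insert.1 hb).resolve_left hby
          rw [Function.update_of_ne hay, Function.update_of_ne hby] at hc
          rcases h2 a (mem_of_mem_erase ha') b (mem_of_mem_erase hb') hab hc with h | h
          · exact Or.inl ⟨h, fun h => ne_of_mem_erase ha' h.1⟩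
          · exact Or.inr ⟨h, fun h => ne_of_mem_erase hb' h.1⟩
  · have hD : c y ≠ c x := by
      intro h
      rcases h2 y hy x hx hyx h with h' | h'
      · exact hirr _ (H1 y h')
      · exact H3 y h' hyz
    -- classification facts
    have hCl : ∀ a ∈ s, c a = c x → ¬ (a = z ∨ r z a) → a = x ∨ r a x := by
      intro a ha hc hn
      push Not at hn
      by_cases hax : a = x
      · exact Or.inl hax
      right
      rcases h2 a ha x hx hax hc with h | h
      · exact h
      · rcases h2 a ha z hz hn.1 (hc.trans hxz) with h' | h'
        · exact absurd h' (H3 a h)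
        · exact absurd h' hn.2
    have hDl : ∀ a ∈ s, c a = c y → ¬ r y a → a = y ∨ r a y := by
      intro a ha hc hn
      by_cases hay : a = y
      · exact Or.inl hay
      · exact Or.inr ((h2 a ha y hy hay hc).resolve_right hn)
    have mixC : ∀ a ∈ s, ∀ b ∈ s, c a = c x → ¬ (a = z ∨ r z a) → c b = c y → r y b →
        r a b ∧ ¬ (a = x ∧ b = z) := by
      intro a ha b hb hca hna hcb hyb
      have hbz : b ≠ z := by rintro rfl; exact hD (hcb.symm.trans hxz.symm)
      have hxb := (H2 b hyb).resolve_left hbz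
      refine ⟨?_, fun h => hbz h.2⟩
      rcases hCl a ha hca hna with h | h
      · subst h; exact hxb
      · exact htr _ _ _ h hxb
    have mixD : ∀ a ∈ s, ∀ b ∈ s, c a = c y → ¬ r y a → c b = c x → (b = z ∨ r z b) →
        r a b ∧ ¬ (a = x ∧ b = z) := by
      intro a ha b hb hca hna hcb hzb
      have hax : a ≠ x := by rintro rfl; exact hD hca.symm
      refine ⟨?_, fun h => hax h.1⟩
      have hyb : r y b := by
        rcases hzb with h | h
        · subst h; exact hyz
        · exact htr _ _ _ hyz h
      rcases hDl a ha hca hna with h | h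
      · subst h; exact hyb
      · exact htr _ _ _ h hyb
    have same : ∀ a ∈ s, ∀ b ∈ s, a ≠ b → c a = c b → ¬ (a = x ∧ b = z) → ¬ (b = x ∧ a = z) →
        ((r a b ∧ ¬ (a = x ∧ b = z)) ∨ (r b a ∧ ¬ (b = x ∧ a = z))) := by
      intro a ha b hb hab hc n1 n2
      exact (h2 a ha b hb hab hc).imp (fun h => ⟨h, n1⟩) (fun h => ⟨h, n2⟩)
    have hzz : x = z ∨ r z x → x = z := by
      rintro (h | h)
      · exact h
      · exact absurd (H1 z h) (fun h' => hirr _ (htr _ _ _ h' hyz))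
    by_cases hxz' : x = z
    · subst hxz'
      rcases H2 x hyz with _ | h
      all_goals exact absurd (H1 y hyz) (hirr y)
    refine ⟨s, rfl, subset_insert _ _, fun a => if c a = c x ∧ (a = z ∨ r z a) then c y else
      if c a = c y ∧ r y a then c x else c a, ?_, ?_⟩
    · intro a ha
      simp only
      split_ifs
      · exact h1 y hy
      · exact h1 x hx
      · exact h1 a ha
    · intro a ha b hb hab hc
      simp only at hc
      have nx : ¬ (x = z ∨ r z x) := fun h => hxz' (hzz h)
      by_cases pa : c a = c x ∧ (a = z ∨ r z a)
      · by_cases pb : c b = c x ∧ (b = z ∨ r z b)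
        · refine same a ha b hb hab (pa.1.trans pb.1.symm) ?_ ?_
          · rintro ⟨rfl, _⟩; exact nx pa.2
          · rintro ⟨rfl, _⟩; exact nx pb.2
        · rw [if_pos pa, if_neg pb] at hc
          by_cases qb : c b = c y ∧ r y b
          · rw [if_pos qb] at hc; exact absurd hc hD
          · rw [if_neg qb] at hc
            exact Or.inr (mixD b hb a ha hc.symm (fun h => qb ⟨hc.symm, h⟩) pa.1 pa.2)
      · rw [if_neg pa] at hc
        by_cases pb : c b = c x ∧ (b = z ∨ r z b)
        · rw [if_pos pb] at hc
          by_cases qa : c a = c y ∧ r y a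
          · rw [if_pos qa] at hc; exact absurd hc.symm hD
          · rw [if_neg qa] at hc
            exact Or.inl (mixD a ha b hb hc (fun h => qa ⟨hc, h⟩) pb.1 pb.2)
        · rw [if_neg pb] at hc
          have n1 : ¬ (a = x ∧ b = z) := by
            rintro ⟨_, rfl⟩; exact pb ⟨hxz.symm, Or.inl rfl⟩
          have n2 : ¬ (b = x ∧ a = z) := by
            rintro ⟨_, rfl⟩; exact pa ⟨hxz.symm, Or.inl rfl⟩
          by_cases qa : c a = c y ∧ r y a
          · rw [if_pos qa] at hc
            by_cases qb : c b = c y ∧ r y b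
            · exact same a ha b hb hab (qa.1.trans qb.1.symm) n1 n2
            · rw [if_neg qb] at hc
              exact Or.inr (mixC b hb a ha hc.symm (fun h => pb ⟨hc.symm, h⟩) qa.1 qa.2)
          · rw [if_neg qa] at hc
            by_cases qb : c b = c y ∧ r y b
            · rw [if_pos qb] at hc
              exact Or.inl (mixC a ha b hb hc (fun h => pa ⟨hc, h⟩) qb.1 qb.2)
            · rw [if_neg qb] at hc
              exact same a ha b hb hab hc n1 n2

def bef : List ℕ → ℕ → ℕ → Prop
  | [], _, _ => False
  | x :: l, a, b => (a = x ∧ b ∈ l) ∨ bef l a b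

lemma bef_append (l m : List ℕ) (a b : ℕ) :
    bef (l ++ m) a b ↔ bef l a b ∨ (a ∈ l ∧ b ∈ m) ∨ bef m a b := by
  induction l with
  | nil => simp [bef]
  | cons x l ih => simp only [List.cons_append, bef, ih, List.mem_append, List.mem_cons]; tauto

lemma bef_mem {l : List ℕ} {a b : ℕ} (h : bef l a b) : a ∈ l ∧ b ∈ l := by
  induction l with
  | nil => exact absurd h id
  | cons x l ih =>
    rcases h with ⟨rfl, h⟩ | h
    · exact ⟨by simp, by simp [h]⟩
    · exact ⟨List.mem_cons_of_mem _ (ih h).1, List.mem_cons_of_mem _ (ih h).2⟩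

lemma bef_trans {l : List ℕ} (hl : l.Nodup) {a b c : ℕ} (h : bef l a b) (h' : bef l b c) : bef l a c := by
  induction l with
  | nil => exact absurd h id
  | cons x l ih =>
    rw [List.nodup_cons] at hl
    rcases h' with ⟨rfl, h'⟩ | h'
    · rcases h with ⟨rfl, h⟩ | h
      · exact absurd h hl.1
      · exact absurd (bef_mem h).2 hl.1
    · rcases h with ⟨rfl, h⟩ | h
      · exact Or.inl ⟨rfl, (bef_mem h').2⟩
      · exact Or.inr (ih hl.2 h h')

lemma bef_pairwise {l : List ℕ} (hl : l.Pairwise (· < ·)) {a b : ℕ} (ha : a ∈ l) (hb : b ∈ l) (h : a < b) :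
    bef l a b := by
  induction l with
  | nil => simp at ha
  | cons x l ih =>
    rw [List.pairwise_cons] at hl
    rcases List.mem_cons.1 ha with rfl | ha'
    · rcases List.mem_cons.1 hb with rfl | hb'
      · omega
      · exact Or.inl ⟨rfl, hb'⟩
    · rcases List.mem_cons.1 hb with rfl | hb'
      · have := hl.1 a ha'; omega
      · exact Or.inr (ih hl.2 ha' hb')

lemma bef_antisymm {l : List ℕ} (hl : l.Nodup) {a b : ℕ} (h : bef l a b) (h' : bef l b a) : False := by
  induction l with
  | nil => exact absurd h id
  | cons x l ih =>
    rw [List.nodup_cons] at hl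
    rcases h' with ⟨rfl, h'⟩ | h'
    · rcases h with ⟨rfl, h⟩ | h
      · exact absurd h hl.1
      · exact absurd (bef_mem h).2 hl.1
    · rcases h with ⟨rfl, h⟩ | h
      · exact hl.1 (bef_mem h').2
      · exact (ih hl.2 h h')

def rr (w : List ℕ) (a b : ℕ) : Prop := a < b ∧ bef w a b

def GS (w : List ℕ) (k m : ℕ) : Prop := ∃ s : Finset ℕ, (∀ a ∈ s, a ∈ w) ∧ s.card = m ∧ KI (rr w) k s

def KE (w w' : List ℕ) : Prop :=
  w.Perm w' ∧ ∀ u v : List ℕ, (u ++ w ++ v).Nodup → ∀ k m, GS (u ++ w ++ v) k m ↔ GS (u ++ w' ++ v) k m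

lemma KE.refl (w : List ℕ) : KE w w := ⟨List.Perm.refl _, fun _ _ _ _ _ => Iff.rfl⟩

lemma KE_nodup {u w w' v : List ℕ} (h : w.Perm w') : (u ++ w ++ v).Nodup ↔ (u ++ w' ++ v).Nodup :=
  ((h.append_left u).append_right v).nodup_iff

lemma KE.symm {w w' : List ℕ} (h : KE w w') : KE w' w :=
  ⟨h.1.symm, fun u v hn k m => (h.2 u v ((KE_nodup h.1).2 hn) k m).symm⟩

lemma KE.trans {w w' w'' : List ℕ} (h : KE w w') (h' : KE w' w'') : KE w w'' :=
  ⟨h.1.trans h'.1, fun u v hn k m => (h.2 u v hn k m).trans (h'.2 u v ((KE_nodup h.1).1 hn) k m)⟩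

lemma KE.append {w w' : List ℕ} (h : KE w w') (p q : List ℕ) : KE (p ++ w ++ q) (p ++ w' ++ q) := by
  refine ⟨(h.1.append_left p).append_right q, fun u v hn k m => ?_⟩
  have := h.2 (u ++ p) (q ++ v) (by simpa [List.append_assoc] using hn) k m
  simpa [List.append_assoc] using this

lemma KE_of_not_nodup {w w' : List ℕ} (h : w.Perm w') (hn : ¬ w.Nodup) : KE w w' :=
  ⟨h, fun u v h' => absurd (h'.of_append_left.of_append_right) hn⟩

lemma bef_swap {l m : List ℕ} {p q a b : ℕ} (h1 : ¬ (a = p ∧ b = q)) (h2 : ¬ (a = q ∧ b = p)) :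
    bef (l ++ p :: q :: m) a b ↔ bef (l ++ q :: p :: m) a b := by
  simp only [bef_append, bef, List.mem_cons]
  by_cases ha : a = p <;> by_cases hb : a = q <;> simp_all [or_comm] <;> try tauto

lemma bef_adj (l m : List ℕ) (p q : ℕ) : bef (l ++ p :: q :: m) p q := by
  simp [bef_append, bef]

lemma adj_left {l m : List ℕ} {p q a : ℕ} (hn : (l ++ p :: q :: m).Nodup) (h : bef (l ++ p :: q :: m) a q) :
    a = p ∨ bef (l ++ p :: q :: m) a p := by
  simp only [List.nodup_append, List.nodup_cons, List.mem_cons] at hn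
  rw [bef_append] at h ⊢
  rcases h with h | h | h
  · exact absurd rfl (hn.2.2 q (bef_mem h).2 q (by simp))
  · exact Or.inr (Or.inr (Or.inl ⟨h.1, by simp⟩))
  · rcases h with h | h | h
    · exact Or.inl h.1
    · exact absurd h.2 hn.2.1.2.1
    · exact absurd (bef_mem h).2 hn.2.1.2.1

lemma adj_right {l m : List ℕ} {p q b : ℕ} (hn : (l ++ p :: q :: m).Nodup) (h : bef (l ++ p :: q :: m) p b) :
    b = q ∨ bef (l ++ p :: q :: m) q b := by
  simp only [List.nodup_append, List.nodup_cons, List.mem_cons] at hn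
  rw [bef_append] at h ⊢
  rcases h with h | h | h
  · exact absurd rfl (hn.2.2 p (bef_mem h).1 p (by simp))
  · exact absurd rfl (hn.2.2 p h.1 p (by simp))
  · rcases h with h | h | h
    · rcases List.mem_cons.1 h.2 with h' | h'
      · exact Or.inl h'
      · refine Or.inr (Or.inr (Or.inr (Or.inr (Or.inl ⟨rfl, h'⟩))))
    · exact absurd (Or.inl h.1) hn.2.1.1
    · exact absurd (Or.inr (bef_mem h).1) hn.2.1.1

lemma rr_swap {l m : List ℕ} {p q : ℕ} (hpq : p < q) (hn : (l ++ p :: q :: m).Nodup) (a b : ℕ) :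
    rr (l ++ q :: p :: m) a b ↔ rr (l ++ p :: q :: m) a b ∧ ¬ (a = p ∧ b = q) := by
  unfold rr
  by_cases h1 : a = p ∧ b = q
  · obtain ⟨rfl, rfl⟩ := h1
    have hn' : (l ++ b :: a :: m).Nodup := ((List.Perm.swap a b m).append_left l).nodup_iff.2 hn
    simp only [and_self, not_true, and_false, iff_false]
    rintro ⟨_, h⟩
    exact bef_antisymm hn' h (bef_adj _ _ _ _)
  · by_cases h2 : a = q ∧ b = p
    · obtain ⟨rfl, rfl⟩ := h2
      constructor
      · rintro ⟨h, _⟩; omega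
      · rintro ⟨⟨h, _⟩, _⟩; omega
    · rw [bef_swap (l := l) (m := m) h1 h2]; tauto

lemma rr_trans {w : List ℕ} (hn : w.Nodup) (a b c : ℕ) (h : rr w a b) (h' : rr w b c) : rr w a c :=
  ⟨h.1.trans h'.1, bef_trans hn h.2 h'.2⟩

lemma GS_swap_sub {l m : List ℕ} {p q : ℕ} (hpq : p < q) (hn : (l ++ p :: q :: m).Nodup) {k t : ℕ}
    (h : GS (l ++ q :: p :: m) k t) : GS (l ++ p :: q :: m) k t := by
  obtain ⟨s, hs, hc, hk⟩ := h
  refine ⟨s, fun a ha => ?_, hc, KI_mono (fun a b h => ((rr_swap hpq hn a b).1 h).1) hk⟩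
  exact ((List.Perm.swap p q m).append_left l).mem_iff.1 (hs a ha)

lemma KE_K1 {x y z : ℕ} (h1 : x < y) (h2 : y < z) : KE [y, x, z] [y, z, x] := by
  refine ⟨List.Perm.cons _ (List.Perm.swap _ _ _), fun u v hn k m => ?_⟩
  have e1 : u ++ [y, x, z] ++ v = (u ++ [y]) ++ x :: z :: v := by simp
  have e2 : u ++ [y, z, x] ++ v = (u ++ [y]) ++ z :: x :: v := by simp
  have e3 : (u ++ [y]) ++ x :: z :: v = u ++ y :: x :: (z :: v) := by simp
  rw [e2, e1]
  rw [e1] at hn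
  refine ⟨?_, GS_swap_sub (h1.trans h2) hn⟩
  rintro ⟨s, hs, hc, hk⟩
  set w := (u ++ [y]) ++ x :: z :: v with hw
  obtain ⟨s', hc', hs', hk'⟩ := exchange (x := x) (y := y) (z := z) (rr_trans hn) (fun a h => lt_irrefl _ h.1)
    ⟨h2, by rw [hw]; simp [bef_append, bef]⟩ h1.ne' (fun a h => ⟨h.1.trans h1, by
      rw [e3] at hn h ⊢
      rcases adj_left hn h.2 with h' | h'
      · have := h.1; omega
      · exact h'⟩) (fun b h => Or.inr ⟨h1.trans h.1, by
      rw [e3] at hn h ⊢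
      rcases adj_right hn h.2 with h' | h'
      · have := h.1; omega
      · exact h'⟩) (fun a h h' => by
      rcases adj_left hn h'.2 with h3 | h3
      · have := h.1; omega
      · exact bef_antisymm hn h3 h.2) hk
  refine ⟨s', fun a ha => ?_, hc'.trans hc, KI_mono (fun a b h => (rr_swap (h1.trans h2) hn a b).2 h) hk'⟩
  refine ((List.Perm.swap x z v).append_left (u ++ [y])).mem_iff.2 ?_
  rcases mem_insert.1 (hs' ha) with h | h
  · subst h; simp
  · exact hs a h

lemma KE_K2 {x y z : ℕ} (h1 : x < y) (h2 : y < z) : KE [x, z, y] [z, x, y] := by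
  refine ⟨List.Perm.swap _ _ _, fun u v hn k m => ?_⟩
  have e1 : u ++ [x, z, y] ++ v = u ++ x :: z :: (y :: v) := by simp
  have e2 : u ++ [z, x, y] ++ v = u ++ z :: x :: (y :: v) := by simp
  have e3 : u ++ x :: z :: (y :: v) = (u ++ [x]) ++ z :: y :: v := by simp
  rw [e2, e1]
  rw [e1] at hn
  refine ⟨?_, GS_swap_sub (h1.trans h2) hn⟩
  rintro ⟨s, hs, hc, hk⟩
  set w := u ++ x :: z :: (y :: v) with hw
  obtain ⟨s', hc', hs', hk'⟩ := exchange (r := fun a b => rr w b a) (x := z) (y := y) (z := x)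
    (fun a b c h h' => rr_trans hn _ _ _ h' h) (fun a h => lt_irrefl _ h.1)
    ⟨h1, by rw [hw]; simp [bef_append, bef]⟩ h2.ne (fun a h => ⟨h2.trans h.1, by
      rw [e3] at hn h ⊢
      rcases adj_right hn h.2 with h' | h'
      · have := h.1; omega
      · exact h'⟩) (fun b h => Or.inr ⟨h.1.trans h2, by
      rw [e3] at hn h ⊢
      rcases adj_left hn h.2 with h' | h'
      · have := h.1; omega
      · exact h'⟩) (fun a h h' => by
      rcases adj_right hn h'.2 with h3 | h3
      · have := h.1; omega
      · exact bef_antisymm hn h3 h.2) (KI_flip hk)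
  refine ⟨s', fun a ha => ?_, hc'.trans hc, KI_flip (KI_mono (fun a b h => (rr_swap (h1.trans h2) hn b a).2 ⟨h.1, fun h3 => h.2 ⟨h3.2, h3.1⟩⟩) hk')⟩
  refine ((List.Perm.swap x z (y :: v)).append_left u).mem_iff.2 ?_
  rcases mem_insert.1 (hs' ha) with h | h
  · subst h; simp
  · exact hs a h


def bump : List ℕ → ℕ → List ℕ × Option ℕ
  | [], v => ([v], none)
  | r :: R, v => if v < r then (v :: R, some r) else (r :: (bump R v).1, (bump R v).2)

lemma bump_perm (R : List ℕ) (v : ℕ) : (R ++ [v]).Perm ((bump R v).2.toList ++ (bump R v).1) := by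
  induction R with
  | nil => simp [bump]
  | cons r R ih =>
    simp only [bump]
    split_ifs with h
    · simp only [Option.toList_some, List.cons_append, List.nil_append]
      exact List.Perm.cons _ (by simpa using List.perm_append_singleton v R)
    · rw [List.cons_append]
      exact (List.Perm.cons r ih).trans List.perm_middle.symm

lemma bump_some {R : List ℕ} {v b : ℕ} (h : (bump R v).2 = some b) : v < b ∧ b ∈ R := by
  induction R with
  | nil => simp [bump] at h
  | cons r R ih =>
    simp only [bump] at h
    split_ifs at h with h1
    · simp at h; subst h; exact ⟨h1, by simp⟩
    · exact ⟨(ih h).1, List.mem_cons_of_mem _ (ih h).2⟩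

lemma bump_head {R : List ℕ} {v b : ℕ} (h : (bump R v).2 = some b) :
    ∃ h t, (bump R v).1 = h :: t ∧ h < b := by
  cases R with
  | nil => simp [bump] at h
  | cons r R =>
    have h2 := bump_some h
    simp only [bump] at h ⊢
    split_ifs at h ⊢ with h1
    · simp at h; subst h; exact ⟨v, R, rfl, h1⟩
    · exact ⟨r, _, rfl, by omega⟩

lemma mem_bump {R : List ℕ} {v a : ℕ} (h : a ∈ (bump R v).1) : a ∈ R ∨ a = v := by
  have := (bump_perm R v).mem_iff (a := a)
  simp only [List.mem_append, List.mem_singleton] at this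
  exact this.2 (Or.inr h)

lemma bump_sorted {R : List ℕ} {v : ℕ} (hR : R.Pairwise (· < ·)) (hv : v ∉ R) : (bump R v).1.Pairwise (· < ·) := by
  induction R with
  | nil => simp [bump]
  | cons r R ih =>
    rw [List.pairwise_cons] at hR
    simp only [List.mem_cons, not_or] at hv
    simp only [bump]
    split_ifs with h
    · exact List.pairwise_cons.2 ⟨fun a ha => h.trans (hR.1 a ha), hR.2⟩
    · refine List.pairwise_cons.2 ⟨fun a ha => ?_, ih hR.2 hv.2⟩
      rcases mem_bump ha with h' | h'
      · exact hR.1 a h'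
      · omega

lemma KE_slide {R : List ℕ} {r v : ℕ} (hR : (r :: R).Pairwise (· < ·)) (hv : v < r) :
    KE (r :: R ++ [v]) (r :: v :: R) := by
  induction R generalizing r with
  | nil => exact KE.refl _
  | cons s R ih =>
    have h1 := List.pairwise_cons.1 hR
    have hrs := h1.1 s (by simp)
    have a := (ih h1.2 (hv.trans hrs)).append [r] []
    have b := (KE_K1 hv hrs).symm.append [] R
    simp only [List.append_nil, List.nil_append, List.cons_append] at a b ⊢
    exact a.trans b

lemma KE_bump {R : List ℕ} {v : ℕ} (hR : R.Pairwise (· < ·)) :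
    KE (R ++ [v]) ((bump R v).2.toList ++ (bump R v).1) := by
  by_cases hv : v ∈ R
  · refine KE_of_not_nodup (bump_perm R v) fun h => ?_
    rw [List.nodup_append] at h
    exact h.2.2 v hv v (by simp) rfl
  induction R with
  | nil => exact KE.refl _
  | cons r R ih =>
    have h1 := List.pairwise_cons.1 hR
    simp only [List.mem_cons, not_or] at hv
    have ih := ih h1.2 hv.2
    simp only [bump]
    split_ifs with h
    · exact KE_slide hR h
    · have a := ih.append [r] []
      rcases ho : (bump R v).2 with _ | b
      · rw [ho] at a
        simpa using a
      · obtain ⟨y, t, hy, hyb⟩ := bump_head ho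
        have hry : r < y := by
          rcases mem_bump (show y ∈ (bump R v).1 by rw [hy]; simp) with h' | h'
          · exact h1.1 y h'
          · omega
        have c := (KE_K2 hry hyb).append [] t
        rw [ho] at a
        simp only [hy, Option.toList_some, List.append_nil, List.nil_append, List.cons_append] at a c ⊢
        exact a.trans c

lemma bump_inj {R R0 : List ℕ} {v v0 : ℕ} (hR : R.Pairwise (· < ·)) (hR0 : R0.Pairwise (· < ·))
    (hl : R.length = R0.length) (h : bump R v = bump R0 v0) : R = R0 ∧ v = v0 := by
  induction R generalizing R0 with
  | nil =>
    have : R0 = [] := List.length_eq_zero_iff.1 hl.symm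
    subst this
    simpa [bump] using h
  | cons r R ih =>
    cases R0 with
    | nil => simp at hl
    | cons r0 R0 =>
      have h1 := List.pairwise_cons.1 hR
      have h10 := List.pairwise_cons.1 hR0
      have hl' : R.length = R0.length := by simpa using hl
      simp only [bump] at h
      split_ifs at h with a b b
      · simp only [Prod.mk.injEq, List.cons.injEq, Option.some.injEq] at h
        obtain ⟨⟨rfl, rfl⟩, rfl⟩ := h
        exact ⟨rfl, rfl⟩
      · simp only [Prod.mk.injEq, List.cons.injEq] at h
        obtain ⟨y, t, hy, hyb⟩ := bump_head h.2.symm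
        have := h1.1 y (by rw [h.1.2, hy]; simp)
        omega
      · simp only [Prod.mk.injEq, List.cons.injEq] at h
        obtain ⟨y, t, hy, hyb⟩ := bump_head h.2
        have := h10.1 y (by rw [← h.1.2, hy]; simp)
        omega
      · simp only [Prod.mk.injEq, List.cons.injEq] at h
        obtain ⟨rfl, rfl⟩ := ih h1.2 h10.2 hl' (Prod.ext h.1.2 h.2)
        exact ⟨by rw [h.1.1], rfl⟩

def bumpO (R : List ℕ) : Option ℕ → List ℕ × Option ℕ
  | none => (R, none)
  | some v => bump R v

lemma bumpO_perm (R : List ℕ) (c : Option ℕ) : (R ++ c.toList).Perm ((bumpO R c).2.toList ++ (bumpO R c).1) := by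
  cases c with
  | none => simp [bumpO]
  | some v => exact bump_perm R v

lemma KE_bumpO {R : List ℕ} (c : Option ℕ) (hR : R.Pairwise (· < ·)) :
    KE (R ++ c.toList) ((bumpO R c).2.toList ++ (bumpO R c).1) := by
  cases c with
  | none => simpa [bumpO] using KE.refl R
  | some v => exact KE_bump hR

lemma bumpO_inj {R R0 : List ℕ} {v v0 : Option ℕ} (hR : R.Pairwise (· < ·)) (hR0 : R0.Pairwise (· < ·))
    (hl : R.length = R0.length) (h : bumpO R v = bumpO R0 v0) : R = R0 ∧ v = v0 := by
  have p := (bumpO_perm R v).length_eq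
  have p0 := (bumpO_perm R0 v0).length_eq
  rw [h] at p
  have q := p.trans p0.symm
  simp only [List.length_append, hl] at q
  cases v with
  | none =>
    cases v0 with
    | none => simp only [bumpO, Prod.mk.injEq] at h; exact ⟨h.1, rfl⟩
    | some v0 => simp at q
  | some v =>
    cases v0 with
    | none => simp at q
    | some v0 =>
      obtain ⟨h1, h2⟩ := bump_inj hR hR0 hl h
      exact ⟨h1, by rw [h2]⟩

def carry (T : ℕ → List ℕ) (v : ℕ) : ℕ → Option ℕ
  | 0 => some v
  | i + 1 => (bumpO (T i) (carry T v i)).2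

def ins (T : ℕ → List ℕ) (v : ℕ) (i : ℕ) : List ℕ := (bumpO (T i) (carry T v i)).1

def readw (T : ℕ → List ℕ) : ℕ → List ℕ
  | 0 => []
  | m + 1 => T m ++ readw T m

lemma mem_readw {T : ℕ → List ℕ} {m a : ℕ} : a ∈ readw T m ↔ ∃ i < m, a ∈ T i := by
  induction m with
  | zero => simp [readw]
  | succ m ih =>
    simp only [readw, List.mem_append, ih]
    constructor
    · rintro (h | ⟨i, h1, h2⟩)
      · exact ⟨m, by omega, h⟩
      · exact ⟨i, by omega, h2⟩
    · rintro ⟨i, h1, h2⟩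
      by_cases h : i = m
      · subst h; exact Or.inl h2
      · exact Or.inr ⟨i, by omega, h2⟩

lemma KE_ins {T : ℕ → List ℕ} (hT : ∀ i, (T i).Pairwise (· < ·)) (v m : ℕ) :
    KE (readw T m ++ [v]) ((carry T v m).toList ++ readw (ins T v) m) := by
  induction m with
  | zero => exact KE.refl _
  | succ m ih =>
    have a := ih.append (T m) []
    have b := (KE_bumpO (carry T v m) (hT m)).append [] (readw (ins T v) m)
    simp only [readw, carry, ins, List.append_nil, List.nil_append, List.append_assoc] at a b ⊢
    exact a.trans b

lemma carry_none {T : ℕ → List ℕ} {v i : ℕ} (h : T i = []) : carry T v (i + 1) = none := by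
  rw [carry, h]
  cases carry T v i <;> rfl

def cnt (R : List ℕ) (x : ℕ) : ℕ := R.countP (fun r => decide (r < x))

structure Tab (T : ℕ → List ℕ) (m : ℕ) : Prop where
  sorted : ∀ i, (T i).Pairwise (· < ·)
  col : ∀ i x, cnt (T (i + 1)) x ≤ cnt (T i) x
  fin : ∀ i, m ≤ i → T i = []
  nodup : (readw T m).Nodup

lemma cnt_cons (r : ℕ) (R : List ℕ) (x : ℕ) : cnt (r :: R) x = cnt R x + if r < x then 1 else 0 := by
  simp [cnt, List.countP_cons]

lemma cnt_append (R S : List ℕ) (x : ℕ) : cnt (R ++ S) x = cnt R x + cnt S x := by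
  simp [cnt]

lemma cnt_perm {R S : List ℕ} (h : R.Perm S) (x : ℕ) : cnt R x = cnt S x := h.countP_eq _

lemma cnt_mono (R : List ℕ) {x y : ℕ} (h : x ≤ y) : cnt R x ≤ cnt R y := by
  unfold cnt
  refine List.countP_mono_left fun a _ ha => ?_
  simp at ha ⊢; omega

lemma cnt_lt {R : List ℕ} {x y : ℕ} (h : x < y) (hx : x ∈ R) : cnt R x < cnt R y := by
  induction R with
  | nil => simp at hx
  | cons r R ih =>
    rw [cnt_cons, cnt_cons]
    rcases List.mem_cons.1 hx with rfl | hx'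
    · have := cnt_mono R h.le
      simp [h]; omega
    · have := ih hx'
      split_ifs <;> omega

lemma bump_gap {R : List ℕ} {v x : ℕ} (hR : R.Pairwise (· < ·)) (hv : v ∉ R)
    (h : ∀ o, (bump R v).2 = some o → x ≤ o) : cnt R x ≤ cnt R v := by
  induction R with
  | nil => simp [cnt]
  | cons r R ih =>
    have h1 := List.pairwise_cons.1 hR
    simp only [List.mem_cons, not_or] at hv
    rw [cnt_cons, cnt_cons]
    simp only [bump] at h
    split_ifs at h with h2
    · have hx := h r rfl
      have : cnt R x = 0 := by
        unfold cnt; rw [List.countP_eq_zero]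
        intro a ha; have := h1.1 a ha; simp; omega
      rw [this, if_neg (by omega)]; omega
    · have := ih h1.2 hv.2 h
      rw [if_pos (show r < v by omega)]
      split_ifs <;> omega


lemma Tab.mem_iff {T : ℕ → List ℕ} {m : ℕ} (h : Tab T m) {a : ℕ} : a ∈ readw T m ↔ ∃ i, a ∈ T i := by
  rw [mem_readw]
  constructor
  · rintro ⟨i, _, hi⟩; exact ⟨i, hi⟩
  · rintro ⟨i, hi⟩
    refine ⟨i, ?_, hi⟩
    by_contra hc
    rw [h.fin i (by omega)] at hi
    simp at hi

lemma Tab.readw_nodup {T : ℕ → List ℕ} {m : ℕ} (h : Tab T m) (j : ℕ) : (readw T j).Nodup := by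
  have up : ∀ j, m ≤ j → (readw T j).Nodup := by
    intro j hj
    induction j, hj using Nat.le_induction with
    | base => exact h.nodup
    | succ j hj ih => rw [readw, h.fin j hj]; simpa using ih
  have down : ∀ d j, (readw T (j + d)).Nodup → (readw T j).Nodup := by
    intro d
    induction d with
    | zero => intro j h; exact h
    | succ d ih =>
      intro j h
      apply ih
      rw [← add_assoc, readw] at h
      exact h.of_append_right
  exact down m j (up _ (by omega))

lemma Tab.nodup' {T : ℕ → List ℕ} {m v : ℕ} (h : Tab T m) (hv : v ∉ readw T m) (j : ℕ) : (readw T j ++ [v]).Nodup := by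
  rw [List.nodup_append]
  refine ⟨h.readw_nodup j, by simp, ?_⟩
  intro a ha b hb hab
  simp at hb
  subst hb; subst hab
  obtain ⟨i, _, hi⟩ := mem_readw.1 ha
  exact hv (h.mem_iff.2 ⟨i, hi⟩)

lemma Tab.carry_notMem {T : ℕ → List ℕ} {m v : ℕ} (h : Tab T m) (hv : v ∉ readw T m) (i x : ℕ)
    (hc : carry T v i = some x) : x ∉ T i := by
  have h1 := (((KE_ins h.sorted v i).append (T i) []).1).nodup_iff.1 (by
    have := h.nodup' hv (i + 1)
    simpa [readw, List.append_assoc] using this)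
  rw [hc] at h1
  intro hx
  simp only [List.append_assoc, List.nodup_append] at h1
  exact h1.2.2 x hx x (by simp) rfl

lemma Tab.ins {T : ℕ → List ℕ} {m v : ℕ} (h : Tab T m) (hv : v ∉ readw T m) :
    KE (readw T m ++ [v]) (readw (ins T v) (m + 1)) ∧ Tab (ins T v) (m + 1) := by
  have hm : T m = [] := h.fin m le_rfl
  have hK : KE (readw T m ++ [v]) (readw (_root_.ins T v) (m + 1)) := by
    have := KE_ins h.sorted v (m + 1)
    rw [carry_none hm] at this
    simpa [readw, hm] using this
  refine ⟨hK, ?_, ?_, ?_, hK.1.nodup_iff.1 (h.nodup' hv m)⟩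
  · intro i
    unfold _root_.ins
    rcases hc : carry T v i with _ | x
    · exact h.sorted i
    · exact bump_sorted (h.sorted i) (h.carry_notMem hv i x hc)
  · intro i x
    have p1 := cnt_perm (bumpO_perm (T i) (carry T v i)) x
    have p2 := cnt_perm (bumpO_perm (T (i + 1)) (carry T v (i + 1))) x
    have hco := h.col i x
    unfold _root_.ins
    rcases hc : carry T v i with _ | a
    · have hc2 : carry T v (i + 1) = none := by rw [carry, hc]; rfl
      rw [hc2]; exact hco
    · rw [hc] at p1
      have hc2 : carry T v (i + 1) = (bump (T i) a).2 := by rw [carry, hc]; rfl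
      rcases hc3 : carry T v (i + 1) with _ | o
      · rw [hc3] at hc2
        simp only [bumpO, ← hc2, cnt_append] at p1 ⊢
        have : cnt (Option.toList (none : Option ℕ)) x = 0 := by simp [cnt]
        omega
      · have hc2' : (bump (T i) a).2 = some o := by rw [← hc2, hc3]
        have hao := bump_some hc2'
        rw [hc3] at p2
        simp only [bumpO, hc2', cnt_append, Option.toList_some, cnt_cons] at p1 p2 ⊢
        have e0 : cnt [] x = 0 := by simp [cnt]
        by_cases hxo : o < x
        · rw [if_pos hxo] at p1 p2
          rw [if_pos (by omega)] at p1
          by_cases hg : ∀ q, (bump (T (i + 1)) o).2 = some q → x ≤ q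
          · have g1 := bump_gap (h.sorted _) (h.carry_notMem hv (i + 1) o hc3) hg
            have g2 := cnt_lt hxo hao.2
            have g3 := h.col i o
            omega
          · push Not at hg
            obtain ⟨q, hq, hqx⟩ := hg
            rw [hq] at p2
            simp only [Option.toList_some, cnt_cons, if_pos hqx] at p2
            omega
        · rw [if_neg hxo] at p1 p2
          omega
  · intro i hi
    obtain ⟨j, rfl⟩ : ∃ j, i = j + 1 := ⟨i - 1, by omega⟩
    unfold _root_.ins
    rw [carry_none (h.fin j (by omega)), h.fin (j + 1) (by omega)]
    rfl

lemma Tab.len_anti {T : ℕ → List ℕ} {m : ℕ} (h : Tab T m) : Antitone fun i => (T i).length := by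
  rw [antitone_iff]
  intro i
  have hb : ∀ R : List ℕ, ∃ N, ∀ x, N ≤ x → cnt R x = R.length := by
    intro R
    induction R with
    | nil => exact ⟨0, by simp [cnt]⟩
    | cons r R ih =>
      obtain ⟨N, hN⟩ := ih
      refine ⟨max N (r + 1), fun x hx => ?_⟩
      rw [cnt_cons, hN x (by omega), if_pos (by omega)]; rfl
  obtain ⟨N, hN⟩ := hb (T i)
  obtain ⟨N', hN'⟩ := hb (T (i + 1))
  have := h.col i (max N N')
  rw [hN _ (by omega), hN' _ (by omega)] at this
  exact this

lemma Tab.disj {T : ℕ → List ℕ} {m : ℕ} (h : Tab T m) {i j a : ℕ} (hi : a ∈ T i) (hj : a ∈ T j) : i = j := by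
  have key : ∀ {i j}, a ∈ T i → a ∈ T j → ¬ i < j := by
    intro i j hi hj hij
    have := h.readw_nodup (j + 1)
    rw [readw, List.nodup_append] at this
    exact this.2.2 a hj a (mem_readw.2 ⟨i, hij, hi⟩) rfl
  have h1 := key hi hj
  have h2 := key hj hi
  omega

lemma bef_readw {T : ℕ → List ℕ} {m i a b : ℕ} (hi : i < m) (h : bef (T i) a b) : bef (readw T m) a b := by
  induction m with
  | zero => omega
  | succ m ih =>
    rw [readw, bef_append]
    by_cases h' : i = m
    · subst h'; exact Or.inl h
    · exact Or.inr (Or.inr (ih (by omega)))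

lemma bef_readw' {T : ℕ → List ℕ} {m i j a b : ℕ} (hj : j < m) (hij : i < j) (hb : b ∈ T j) (ha : a ∈ T i) :
    bef (readw T m) b a := by
  induction m with
  | zero => omega
  | succ m ih =>
    rw [readw, bef_append]
    by_cases h' : j = m
    · subst h'; exact Or.inr (Or.inl ⟨hb, mem_readw.2 ⟨i, hij, ha⟩⟩)
    · exact Or.inr (Or.inr (ih (by omega)))

lemma sorted_nodup {R : List ℕ} (h : R.Pairwise (· < ·)) : R.Nodup := h.imp (fun h => h.ne)

lemma cnt_inj {R : List ℕ} {a b : ℕ} (ha : a ∈ R) (hb : b ∈ R) (h : cnt R a = cnt R b) : a = b := by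
  rcases lt_trichotomy a b with h1 | h1 | h1
  · have := cnt_lt h1 ha; omega
  · exact h1
  · have := cnt_lt h1 hb; omega

lemma cnt_succ {R : List ℕ} (hR : R.Pairwise (· < ·)) {a : ℕ} (ha : a ∈ R) : cnt R a + 1 ≤ cnt R (a + 1) :=
  cnt_lt (by omega) ha

lemma cnt_lt_length {R : List ℕ} {a : ℕ} (ha : a ∈ R) : cnt R a < R.length :=
  (cnt_lt (Nat.lt_succ_self a) ha).trans_le List.countP_le_length

/-- Greene, lower bound -/
lemma Tab.greene_lower {T : ℕ → List ℕ} {m : ℕ} (h : Tab T m) (j : ℕ) :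
    GS (readw T m) j (∑ i ∈ range j, (T i).length) := by
  set rowOf : ℕ → ℕ := fun a => if h : ∃ i, a ∈ T i then h.choose else 0
  have hrow : ∀ {a i}, a ∈ T i → rowOf a = i := by
    intro a i hi
    have hex : ∃ i, a ∈ T i := ⟨i, hi⟩
    simp only [rowOf, dif_pos hex]
    exact h.disj hex.choose_spec hi
  refine ⟨(range j).biUnion fun i => (T i).toFinset, ?_, ?_, rowOf, ?_, ?_⟩
  · intro a ha
    simp only [mem_biUnion, List.mem_toFinset] at ha
    obtain ⟨i, _, hi⟩ := ha
    exact h.mem_iff.2 ⟨i, hi⟩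
  · rw [card_biUnion]
    · exact sum_congr rfl fun i _ => List.toFinset_card_of_nodup (sorted_nodup (h.sorted i))
    · intro x _ y _ hxy
      refine Finset.disjoint_left.2 ?_
      intro a ha hb
      exact hxy (h.disj (List.mem_toFinset.1 ha) (List.mem_toFinset.1 hb))
  · intro a ha
    simp only [mem_biUnion, List.mem_toFinset] at ha
    obtain ⟨i, hij, hi⟩ := ha
    rw [hrow hi]; exact mem_range.1 hij
  · intro a ha b hb hab hc
    simp only [mem_biUnion, List.mem_toFinset] at ha hb
    obtain ⟨i, hij, hi⟩ := ha
    obtain ⟨i', hij', hi'⟩ := hb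
    rw [hrow hi, hrow hi'] at hc
    subst hc
    have him : i < m := by
      by_contra hc
      rw [h.fin i (by omega)] at hi; simp at hi
    rcases lt_or_gt_of_ne hab with hlt | hlt
    · exact Or.inl ⟨hlt, bef_readw him (bef_pairwise (h.sorted i) hi hi' hlt)⟩
    · exact Or.inr ⟨hlt, bef_readw him (bef_pairwise (h.sorted i) hi' hi hlt)⟩

lemma Tab.greene_upper {T : ℕ → List ℕ} {m : ℕ} (h : Tab T m) {j t : ℕ} (hg : GS (readw T m) j t) :
    t ≤ ∑ i ∈ range j, (T i).length := by
  obtain ⟨s, hs, rfl, c, hc1, hc2⟩ := hg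
  set rowOf : ℕ → ℕ := fun a => if h : ∃ i, a ∈ T i then h.choose else 0
  have hrow : ∀ a ∈ s, a ∈ T (rowOf a) := by
    intro a ha
    have hex : ∃ i, a ∈ T i := h.mem_iff.1 (hs a ha)
    simp only [rowOf, dif_pos hex]
    exact hex.choose_spec
  set col : ℕ → ℕ := fun a => cnt (T (rowOf a)) a
  have hanti := h.len_anti
  have hcnt_anti : ∀ x, Antitone fun i => cnt (T i) x := fun x => antitone_iff.2 fun i => h.col i x
  have hrm : ∀ a ∈ s, rowOf a < m := by
    intro a ha
    have := hrow a ha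
    by_contra hc
    rw [h.fin _ (by omega)] at this; simp at this
  have hcol : ∀ a ∈ s, col a < (T (rowOf a)).length := fun a ha => cnt_lt_length (hrow a ha)
  -- same column, different rows
  have key : ∀ a ∈ s, ∀ b ∈ s, col a = col b → rowOf a < rowOf b → c a ≠ c b := by
    intro a ha b hb hcol hlt hcc
    have hab : a < b := by
      have h1 := cnt_succ (h.sorted _) (hrow b hb)
      have h2 := hcnt_anti (b + 1) hlt.le
      simp only at h2
      by_contra hge
      have h3 := cnt_mono (T (rowOf a)) (show b + 1 ≤ a + 1 by omega)
      have hne : a ≠ b := by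
        rintro rfl; omega
      have h4 := cnt_mono (T (rowOf a)) (show b + 1 ≤ a by omega)
      simp only [col] at hcol
      omega
    have hbef := bef_readw' (hrm b hb) hlt (hrow b hb) (hrow a ha)
    rcases hc2 a ha b hb hab.ne hcc with h' | h'
    · exact bef_antisymm h.nodup h'.2 hbef
    · have := h'.1; omega
  have colinj : ∀ p, ∀ a ∈ s.filter (fun a => col a = p), ∀ b ∈ s.filter (fun a => col a = p), rowOf a = rowOf b → a = b := by
    intro p a ha b hb hr
    rw [mem_filter] at ha hb
    have h1 := hrow a ha.1
    have h2 := hrow b hb.1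
    have e : col a = col b := ha.2.trans hb.2.symm
    simp only [col] at e
    rw [hr] at h1 e
    exact cnt_inj h1 h2 e
  have hp : ∀ p, (s.filter (fun a => col a = p)).card ≤ ((range j).filter fun i => p < (T i).length).card := by
    intro p
    by_cases hall : ∀ i < j, p < (T i).length
    · rw [filter_true_of_mem (fun i hi => hall i (mem_range.1 hi))]
      refine card_le_card_of_injOn c (fun a ha => ?_) ?_
      · rw [mem_coe, mem_filter] at ha
        simpa using hc1 a ha.1
      · intro a ha b hb hab
        rw [mem_coe] at ha hb
        have ha' := mem_filter.1 ha
        have hb' := mem_filter.1 hb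
        have e : col a = col b := ha'.2.trans hb'.2.symm
        rcases lt_trichotomy (rowOf a) (rowOf b) with h1 | h1 | h1
        · exact absurd hab (key a ha'.1 b hb'.1 e h1)
        · exact colinj p a ha b hb h1
        · exact absurd hab.symm (key b hb'.1 a ha'.1 e.symm h1)
    · push Not at hall
      obtain ⟨i0, hi0, hlen⟩ := hall
      refine card_le_card_of_injOn rowOf (fun a ha => ?_) ?_
      · rw [mem_coe, mem_filter] at ha
        rw [mem_coe, mem_filter, mem_range]
        have h1 := hcol a ha.1
        rw [ha.2] at h1
        refine ⟨?_, h1⟩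
        by_contra hge
        have := hanti (show i0 ≤ rowOf a by omega)
        simp only at this
        omega
      · intro a ha b hb hab
        exact colinj p a ha b hb hab
  have hcard : s.card = ∑ p ∈ range (T 0).length, (s.filter (fun a => col a = p)).card := by
    refine card_eq_sum_card_fiberwise fun a ha => ?_
    have h1 := hcol a ha
    have := hanti (Nat.zero_le (rowOf a))
    simp only at this
    rw [mem_coe, mem_range]; omega
  rw [hcard]
  refine (sum_le_sum fun p _ => hp p).trans ?_
  simp only [card_filter]
  rw [sum_comm]
  refine sum_le_sum fun i _ => ?_
  rw [← card_filter]
  have : ((range (T 0).length).filter fun p => p < (T i).length) ⊆ range (T i).length := by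
    intro p hp; simpa using (mem_filter.1 hp).2
  simpa using card_le_card this


/-- insertion tableau of the reverse of a list -/
def PP : List ℕ → ℕ → List ℕ
  | [] => fun _ => []
  | v :: w => ins (PP w) v

lemma PP_tab : ∀ {w : List ℕ}, w.Nodup → KE w.reverse (readw (PP w) w.length) ∧ Tab (PP w) w.length
  | [], _ => by
    refine ⟨KE.refl _, ⟨fun i => by simp [PP], fun i x => le_rfl, fun i _ => rfl, by simp [readw]⟩⟩
  | v :: w, h => by
    rw [List.nodup_cons] at h
    obtain ⟨hK, hT⟩ := PP_tab h.2
    have hv : v ∉ readw (PP w) w.length := by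
      rw [← hK.1.mem_iff, List.mem_reverse]; exact h.1
    obtain ⟨hK2, hT2⟩ := hT.ins hv
    refine ⟨?_, hT2⟩
    have := hK.append [] [v]
    simp only [List.nil_append] at this
    rw [List.reverse_cons]
    exact this.trans hK2

def sh (T : ℕ → List ℕ) (i : ℕ) : ℕ := (T i).length

lemma GS_PP {w : List ℕ} (h : w.Nodup) (k m : ℕ) : GS w.reverse k m ↔ GS (readw (PP w) w.length) k m := by
  have := (PP_tab h).1.2 [] [] (by simpa using h) k m
  simpa using this

lemma sh_ins {T : ℕ → List ℕ} {m v : ℕ} (h : Tab T m) : ∃ l, l ≤ m ∧ sh (ins T v) = sh T + ee l := by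
  have hcar : ∀ i, carry T v i = none → carry T v (i + 1) = none := by
    intro i hi; rw [carry, hi]; rfl
  have hex : ∃ l, carry T v (l + 1) = none := ⟨m, carry_none (h.fin m le_rfl)⟩
  set l := Nat.find hex with hl
  have hl1 : carry T v (l + 1) = none := Nat.find_spec hex
  have hl2 : ∀ i ≤ l, carry T v i ≠ none := by
    intro i hi hc
    cases i with
    | zero => simp [carry] at hc
    | succ i => exact Nat.find_min hex (show i < Nat.find hex by omega) hc
  have hl3 : ∀ i, l < i → carry T v i = none := by
    intro i hi
    induction i, hi using Nat.le_induction with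
    | base => exact hl1
    | succ i _ ih => exact hcar i ih
  refine ⟨l, Nat.find_min' hex (carry_none (h.fin m le_rfl)), ?_⟩
  funext i
  have p := (bumpO_perm (T i) (carry T v i)).length_eq
  simp only [List.length_append] at p
  change _ + _ = (carry T v (i + 1)).toList.length + (ins T v i).length at p
  simp only [sh, Pi.add_apply, ee_apply]
  have hlen : ∀ o : Option ℕ, o ≠ none → o.toList.length = 1 := by
    intro o ho; cases o with
    | none => exact absurd rfl ho
    | some _ => rfl
  rcases lt_trichotomy i l with h1 | h1 | h1
  · rw [hlen _ (hl2 i h1.le), hlen _ (hl2 (i + 1) h1)] at p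
    rw [if_neg h1.ne]; omega
  · subst h1
    rw [hlen _ (hl2 l le_rfl), hl1] at p
    simp at p ⊢; omega
  · rw [hl3 i h1, hl3 (i + 1) (by omega)] at p
    rw [if_neg h1.ne']
    simp at p; omega

lemma ins_inj {T T0 : ℕ → List ℕ} {m v v0 : ℕ} (h : Tab T m) (h0 : Tab T0 m) (hs : sh T = sh T0)
    (he : ins T v = ins T0 v0) : T = T0 ∧ v = v0 := by
  have step : ∀ i, carry T v (i + 1) = carry T0 v0 (i + 1) → T i = T0 i ∧ carry T v i = carry T0 v0 i := by
    intro i hc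
    refine bumpO_inj (h.sorted i) (h0.sorted i) (congrFun hs i) (Prod.ext (congrFun he i) hc)
  have hm : ∀ i, m ≤ i → carry T v (i + 1) = carry T0 v0 (i + 1) := fun i hi => by
    rw [carry_none (h.fin i hi), carry_none (h0.fin i hi)]
  have down : ∀ d i, i + d = m + 1 → carry T v i = carry T0 v0 i := by
    intro d
    induction d with
    | zero => intro i hi; have : i = m + 1 := by omega
              subst this; exact hm m le_rfl
    | succ d ih => intro i hi; exact (step i (ih (i + 1) (by omega))).2
  have all : ∀ i, carry T v i = carry T0 v0 i := by
    intro i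
    by_cases hi : i ≤ m
    · exact down (m + 1 - i) i (by omega)
    · obtain ⟨j, rfl⟩ : ∃ j, i = j + 1 := ⟨i - 1, by omega⟩
      exact hm j (by omega)
  refine ⟨funext fun i => (step i (all _)).1, ?_⟩
  have := all 0
  simpa [carry] using this

/-- number of words with a given insertion tableau -/
lemma card_words_le {B : ℕ} : ∀ (n : ℕ), n ≤ B → ∀ (T : ℕ → List ℕ) (F : Finset (List ℕ)),
    (∀ w ∈ F, w.Nodup ∧ w.length = n ∧ PP w = T) → F.card ≤ ff B n (sh T)
  | 0, _, T, F, hF => by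
    have hsub : F ⊆ {[]} := fun w hw => by
      rw [mem_singleton]; exact List.length_eq_zero_iff.1 (hF w hw).2.1
    rcases F.eq_empty_or_nonempty with rfl | ⟨w, hw⟩
    · simp
    · have hw0 := mem_singleton.1 (hsub hw)
      have hT := (hF w hw).2.2
      have : sh T = 0 := by rw [← hT, hw0]; rfl
      rw [this, ff, if_pos rfl]
      simpa using card_le_card hsub
  | n + 1, hn, T, F, hF => by
    rcases F.eq_empty_or_nonempty with rfl | ⟨w0, hw0⟩
    · simp
    have hTtab : Tab T (n + 1) := by
      have := (PP_tab (hF w0 hw0).1).2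
      rwa [(hF w0 hw0).2.1, (hF w0 hw0).2.2] at this
    have hanti : Antitone (sh T) := hTtab.len_anti
    rw [ff, if_pos hanti]
    -- classify by row of new box
    have hcls : ∀ w ∈ F, ∃ l, l < B ∧ sh T = sh (PP w.tail) + ee l := by
      intro w hw
      obtain ⟨h1, h2, h3⟩ := hF w hw
      cases w with
      | nil => simp at h2
      | cons v w =>
        have h2' : w.length = n := by simpa using h2
        have ht := (PP_tab (List.nodup_cons.1 h1).2).2
        obtain ⟨l, hl, he⟩ := sh_ins (v := v) ht
        exact ⟨l, by omega, by rw [← h3]; exact he⟩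
    choose! L hL1 hL2 using hcls
    rw [card_eq_sum_card_fiberwise (f := L) (t := range B) (fun w hw => by simpa using hL1 w hw)]
    refine sum_le_sum fun l hl => ?_
    rcases (F.filter fun w => L w = l).eq_empty_or_nonempty with he | ⟨w1, hw1⟩
    · simp [he]
    have hw1' := mem_filter.1 hw1
    have hsub1 : ∀ w ∈ F.filter (fun w => L w = l), 0 < sh T l ∧ sh (PP w.tail) = sh T - ee l := by
      intro w hw
      have hw' := mem_filter.1 hw
      have := hL2 w hw'.1
      rw [hw'.2] at this
      rw [this]
      exact ⟨by simp [ee_apply], add_sub_ee.symm⟩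
    rw [if_pos (hsub1 w1 hw1).1]
    have huniq : ∀ w ∈ F.filter (fun w => L w = l), PP w.tail = PP w1.tail ∧ w.head? = w1.head? := by
      intro w hw
      have hw' := mem_filter.1 hw
      have s1 := (hsub1 w hw).2
      have s2 := (hsub1 w1 hw1).2
      obtain ⟨a1, a2, a3⟩ := hF w hw'.1
      obtain ⟨b1, b2, b3⟩ := hF w1 hw1'.1
      cases w with
      | nil => simp at a2
      | cons v w =>
        cases w1 with
        | nil => simp at b2
        | cons v1 w1 =>
          simp only [List.tail_cons] at s1 s2
          have t1 := (PP_tab (List.nodup_cons.1 a1).2).2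
          have t2 := (PP_tab (List.nodup_cons.1 b1).2).2
          have ea : w.length = n := by simpa using a2
          have eb : w1.length = n := by simpa using b2
          rw [ea] at t1; rw [eb] at t2
          obtain ⟨r1, r2⟩ := ins_inj (v := v) (v0 := v1) t1 t2 (s1.trans s2.symm) (a3.trans b3.symm)
          exact ⟨r1, by simp [r2]⟩
    have hinj : Set.InjOn List.tail (F.filter (fun w => L w = l) : Set (List ℕ)) := by
      intro w hw w' hw' ht
      have hw := mem_coe.1 hw
      have hw' := mem_coe.1 hw'
      have q1 := (huniq w hw).2.trans (huniq w' hw').2.symm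
      have a2 := (hF w (mem_filter.1 hw).1).2.1
      have b2 := (hF w' (mem_filter.1 hw').1).2.1
      cases w with
      | nil => simp at a2
      | cons v w =>
        cases w' with
        | nil => simp at b2
        | cons v1 w1 => simp at q1 ht; rw [q1, ht]
    rw [← card_image_of_injOn hinj]
    have := card_words_le (B := B) n (by omega) (PP w1.tail) ((F.filter (fun w => L w = l)).image List.tail) (by
      intro u hu
      obtain ⟨w, hw, rfl⟩ := mem_image.1 hu
      obtain ⟨a1, a2, a3⟩ := hF w (mem_filter.1 hw).1
      refine ⟨a1.sublist (List.tail_sublist w), by simp [a2], (huniq w hw).1⟩)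
    rwa [(hsub1 w1 hw1).2] at this

lemma readw_filter (T : ℕ → List ℕ) (p : ℕ → Bool) (m : ℕ) :
    readw (fun i => (T i).filter p) m = (readw T m).filter p := by
  induction m with
  | zero => rfl
  | succ m ih => simp [readw, ih]

lemma cnt_filter (R : List ℕ) (M x : ℕ) : cnt (R.filter (fun a => decide (a < M))) x = cnt R (min x M) := by
  unfold cnt
  rw [List.countP_filter]
  congr 1
  funext a
  simp

lemma sorted_max {R : List ℕ} (hR : R.Pairwise (· < ·)) {M : ℕ} (hM : ∀ a ∈ R, a ≤ M) :
    R = R.filter (fun a => decide (a < M)) ++ (if M ∈ R then [M] else []) := by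
  induction R with
  | nil => simp
  | cons r R ih =>
    have h1 := List.pairwise_cons.1 hR
    have ih := ih h1.2 (fun a ha => hM a (List.mem_cons_of_mem _ ha))
    by_cases hr : r < M
    · have hne : M ≠ r := hr.ne'
      rw [List.filter_cons_of_pos (by simpa using hr), List.cons_append]
      congr 1
      simpa only [List.mem_cons, hne, false_or] using ih
    · have hrM : r = M := le_antisymm (hM r (by simp)) (by omega)
      subst hrM
      have : R = [] := by
        rw [List.eq_nil_iff_forall_not_mem]
        intro a ha
        have := h1.1 a ha
        have := hM a (List.mem_cons_of_mem _ ha)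
        omega
      subst this
      simp

lemma card_tab_le {B : ℕ} : ∀ (n : ℕ), n ≤ B → ∀ (V : Finset ℕ), V.card = n → ∀ (lam : ℕ → ℕ) (F : Finset (ℕ → List ℕ)),
    (∀ T ∈ F, Tab T B ∧ (∀ a, (∃ i, a ∈ T i) ↔ a ∈ V) ∧ sh T = lam) → F.card ≤ ff B n lam
  | 0, _, V, hV, lam, F, hF => by
    have hV0 := card_eq_zero.1 hV
    have hsub : F ⊆ {fun _ => []} := fun T hT => by
      rw [mem_singleton]
      funext i
      rw [List.eq_nil_iff_forall_not_mem]
      intro a ha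
      have := ((hF T hT).2.1 a).1 ⟨i, ha⟩
      simp [hV0] at this
    rcases F.eq_empty_or_nonempty with rfl | ⟨w, hw⟩
    · simp
    · have hw0 := mem_singleton.1 (hsub hw)
      have hT := (hF w hw).2.2
      have : lam = 0 := by rw [← hT, hw0]; rfl
      rw [this, ff, if_pos rfl]
      simpa using card_le_card hsub
  | n + 1, hn, V, hV, lam, F, hF => by
    rcases F.eq_empty_or_nonempty with rfl | ⟨T0, hT0⟩
    · simp
    have hanti : Antitone lam := by
      rw [← (hF T0 hT0).2.2]; exact (hF T0 hT0).1.len_anti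
    rw [ff, if_pos hanti]
    have hne : V.Nonempty := card_pos.1 (by omega)
    set M := V.max' hne with hMdef
    have hMV : M ∈ V := max'_mem V hne
    have hMmax : ∀ a ∈ V, a ≤ M := fun a ha => le_max' V a ha
    have hrow : ∀ T ∈ F, ∃ l, l < B ∧ M ∈ T l := by
      intro T hT
      obtain ⟨i, hi⟩ := ((hF T hT).2.1 M).2 hMV
      refine ⟨i, ?_, hi⟩
      by_contra hc
      rw [(hF T hT).1.fin i (by omega)] at hi; simp at hi
    choose! L hL1 hL2 using hrow
    rw [card_eq_sum_card_fiberwise (f := L) (t := range B) (fun w hw => by simpa using hL1 w hw)]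
    refine sum_le_sum fun l hl => ?_
    set res : (ℕ → List ℕ) → (ℕ → List ℕ) := fun T i => (T i).filter (fun a => decide (a < M)) with hres
    have hdec : ∀ T ∈ F.filter (fun w => L w = l), ∀ i, T i = res T i ++ (if i = l then [M] else []) := by
      intro T hT i
      have hT' := mem_filter.1 hT
      have hMl : M ∈ T l := by have := hL2 T hT'.1; rwa [hT'.2] at this
      have := sorted_max ((hF T hT'.1).1.sorted i) (M := M) (fun a ha => hMmax a (((hF T hT'.1).2.1 a).1 ⟨i, ha⟩))
      refine this.trans (congrArg _ ?_)
      by_cases h : i = l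
      · subst h; simp [hMl]
      · rw [if_neg h, if_neg]
        intro h2; exact h ((hF T hT'.1).1.disj h2 hMl)
    have hsh : ∀ T ∈ F.filter (fun w => L w = l), lam = sh (res T) + ee l := by
      intro T hT
      rw [← (hF T (mem_filter.1 hT).1).2.2]
      funext i
      simp only [sh, Pi.add_apply, ee_apply]
      conv_lhs => rw [hdec T hT i]
      rw [List.length_append]
      split_ifs <;> simp
    rcases (F.filter fun w => L w = l).eq_empty_or_nonempty with he | ⟨T1, hT1⟩
    · simp [he]
    have h0 : 0 < lam l := by rw [hsh T1 hT1]; simp [ee_apply]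
    rw [if_pos h0]
    have hinj : Set.InjOn res (F.filter (fun w => L w = l) : Set (ℕ → List ℕ)) := by
      intro T hT T' hT' ht
      funext i
      rw [hdec T hT i, hdec T' hT' i, ht]
    rw [← card_image_of_injOn hinj]
    refine card_tab_le n (by omega) (V.erase M) (by rw [card_erase_of_mem hMV]; omega) _ _ ?_
    intro U hU
    obtain ⟨T, hT, rfl⟩ := mem_image.1 hU
    obtain ⟨a1, a2, a3⟩ := hF T (mem_filter.1 hT).1
    refine ⟨⟨fun i => (a1.sorted i).filter _, fun i x => ?_, fun i hi => ?_, ?_⟩, fun a => ?_, ?_⟩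
    · simp only [hres, cnt_filter]; exact a1.col i _
    · simp [hres, a1.fin i hi]
    · simp only [hres, readw_filter]; exact a1.nodup.filter _
    · simp only [hres, List.mem_filter, decide_eq_true_eq, mem_erase]
      constructor
      · rintro ⟨i, h1, h2⟩
        exact ⟨h2.ne, (a2 a).1 ⟨i, h1⟩⟩
      · rintro ⟨h1, h2⟩
        obtain ⟨i, hi⟩ := (a2 a).2 h2
        exact ⟨i, hi, lt_of_le_of_ne (hMmax a h2) h1⟩
    · rw [hsh T hT, add_sub_ee]


lemma bef_getElem : ∀ (l : List ℕ) (i j : ℕ) (hij : i < j) (hj : j < l.length), bef l (l[i]'(hij.trans hj)) l[j]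
  | [], i, j, hij, hj => by simp at hj
  | x :: l, i, 0, hij, hj => by omega
  | x :: l, 0, j + 1, hij, hj => Or.inl ⟨rfl, by simp⟩
  | x :: l, i + 1, j + 1, hij, hj => Or.inr (by
      simpa using bef_getElem l i j (by omega) (by simpa using hj))

def wd {n : ℕ} (σ : Equiv.Perm (Fin n)) : List ℕ := List.ofFn fun i => (σ i : ℕ)

lemma val_inj {n : ℕ} (σ : Equiv.Perm (Fin n)) : Function.Injective fun i => (σ i : ℕ) :=
  fun i j h => σ.injective (Fin.ext h)

lemma wd_nodup {n : ℕ} (σ : Equiv.Perm (Fin n)) : (wd σ).Nodup := List.nodup_ofFn.2 (val_inj σ)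

lemma wd_bef {n : ℕ} (σ : Equiv.Perm (Fin n)) {i j : Fin n} (h : i < j) : bef (wd σ) (σ i) (σ j) := by
  have := bef_getElem (wd σ) i j h (by simp [wd])
  simpa [wd] using this

lemma wd_mem {n : ℕ} (σ : Equiv.Perm (Fin n)) (a : ℕ) : a ∈ wd σ ↔ ∃ i, (σ i : ℕ) = a := by
  simp [wd, List.mem_ofFn]

lemma wd_inj {n : ℕ} : Function.Injective (wd (n := n)) := by
  intro σ τ h
  have := List.ofFn_injective h
  ext i
  exact congrFun this i

lemma maxInc_ge_of_GS {n : ℕ} (σ : Equiv.Perm (Fin n)) {k m : ℕ} (h : GS (wd σ) k m) : m ≤ maxIncUnion k σ := by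
  obtain ⟨s, hs, rfl, c, h1, h2⟩ := h
  set C : Fin k → Finset (Fin n) := fun t => univ.filter fun i => (σ i : ℕ) ∈ s ∧ c (σ i) = t
  have hmono : ∀ t : Fin k, StrictMonoOn (fun i => σ i) ((C t : Finset (Fin n)) : Set (Fin n)) := by
    intro t i hi j hj hij
    simp only [C, coe_filter, mem_univ, true_and, Set.mem_setOf_eq] at hi hj
    have hne : (σ i : ℕ) ≠ σ j := fun h => hij.ne (val_inj σ h)
    rcases h2 _ hi.1 _ hj.1 hne (hi.2.trans hj.2.symm) with h | h
    · exact h.1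
    · exact absurd h.2 (fun h' => bef_antisymm (wd_nodup σ) h' (wd_bef σ hij))
  have hle := le_sup (f := fun c : Fin k → Finset (Fin n) =>
    if ∀ t : Fin k, StrictMonoOn (fun i => σ i) ((c t : Finset (Fin n)) : Set (Fin n))
    then (Finset.univ.biUnion c).card else 0) (mem_univ C)
  simp only [if_pos hmono] at hle
  refine le_trans ?_ hle
  have : s ⊆ (univ.biUnion C).image (fun i => (σ i : ℕ)) := by
    intro a ha
    obtain ⟨i, rfl⟩ := (wd_mem σ a).1 (hs a ha)
    refine mem_image.2 ⟨i, mem_biUnion.2 ⟨⟨c (σ i), h1 _ ha⟩, mem_univ _, ?_⟩, rfl⟩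
    simp [C, ha]
  exact (card_le_card this).trans card_image_le

lemma GS_of_maxInc {n : ℕ} (σ : Equiv.Perm (Fin n)) (k : ℕ) : GS (wd σ) k (maxIncUnion k σ) := by
  obtain ⟨C, _, hC⟩ := exists_mem_eq_sup (univ : Finset (Fin k → Finset (Fin n))) ⟨fun _ => ∅, mem_univ _⟩
    (fun c : Fin k → Finset (Fin n) =>
    if ∀ t : Fin k, StrictMonoOn (fun i => σ i) ((c t : Finset (Fin n)) : Set (Fin n))
    then (Finset.univ.biUnion c).card else 0)
  rw [maxIncUnion, hC]
  split_ifs with hm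
  · refine ⟨(univ.biUnion C).image (fun i => (σ i : ℕ)), ?_, ?_,
      fun a => if h : ∃ t : Fin k, ∃ i ∈ C t, (σ i : ℕ) = a then (h.choose : ℕ) else 0, ?_, ?_⟩
    · intro a ha
      obtain ⟨i, _, rfl⟩ := mem_image.1 ha
      exact (wd_mem σ _).2 ⟨i, rfl⟩
    · exact card_image_of_injective _ (val_inj σ)
    · intro a ha
      obtain ⟨i, hi, rfl⟩ := mem_image.1 ha
      obtain ⟨t, _, ht⟩ := mem_biUnion.1 hi
      have hex : ∃ t : Fin k, ∃ i' ∈ C t, (σ i' : ℕ) = σ i := ⟨t, i, ht, rfl⟩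
      simp only [dif_pos hex]
      exact hex.choose.2
    · intro a ha b hb hab hc
      obtain ⟨i, hi, rfl⟩ := mem_image.1 ha
      obtain ⟨t, _, ht⟩ := mem_biUnion.1 hi
      have hex : ∃ t : Fin k, ∃ i' ∈ C t, (σ i' : ℕ) = σ i := ⟨t, i, ht, rfl⟩
      obtain ⟨j, hj, rfl⟩ := mem_image.1 hb
      obtain ⟨u, _, hu⟩ := mem_biUnion.1 hj
      have hex' : ∃ t : Fin k, ∃ i' ∈ C t, (σ i' : ℕ) = σ j := ⟨u, j, hu, rfl⟩
      simp only [dif_pos hex, dif_pos hex'] at hc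
      obtain ⟨i', hi', e⟩ := hex.choose_spec
      obtain ⟨j', hj', e'⟩ := hex'.choose_spec
      have e1 := val_inj σ e
      have e2 := val_inj σ e'
      subst e1; subst e2
      rw [← Fin.ext hc] at hj'
      have hne : i' ≠ j' := fun h => hab (by rw [h])
      rcases lt_or_gt_of_ne hne with h | h
      · exact Or.inl ⟨hm _ hi' hj' h, wd_bef σ h⟩
      · exact Or.inr ⟨hm _ hj' hi' h, wd_bef σ h⟩
  · exact ⟨∅, by simp, by simp, fun _ => 0, by simp, by simp⟩

def shp {n : ℕ} (σ : Equiv.Perm (Fin n)) : ℕ → ℕ := sh (PP (wd σ).reverse)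

lemma wdr_nodup {n : ℕ} (σ : Equiv.Perm (Fin n)) : (wd σ).reverse.Nodup := List.nodup_reverse.2 (wd_nodup σ)

lemma maxInc_eq {n : ℕ} (σ : Equiv.Perm (Fin n)) (k : ℕ) : maxIncUnion k σ = ∑ i ∈ range k, shp σ i := by
  have hT := (PP_tab (wdr_nodup σ)).2
  have hG := fun m => GS_PP (wdr_nodup σ) k m
  simp only [List.reverse_reverse] at hG
  apply le_antisymm
  · exact hT.greene_upper ((hG _).1 (GS_of_maxInc σ k))
  · exact maxInc_ge_of_GS σ ((hG _).2 (hT.greene_lower k))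

lemma rowLen_eq {n : ℕ} (σ : Equiv.Perm (Fin n)) (i : ℕ) : rowLen (i + 1) σ = shp σ i := by
  rw [rowLen, maxInc_eq, maxInc_eq, Nat.add_sub_cancel, sum_range_succ]; omega

lemma length_readw (T : ℕ → List ℕ) (m : ℕ) : (readw T m).length = ∑ i ∈ range m, sh T i := by
  induction m with
  | zero => rfl
  | succ m ih => rw [readw, List.length_append, sum_range_succ, ih, sh]; ring

lemma Tab.mono {T : ℕ → List ℕ} {m m' : ℕ} (h : Tab T m) (hm : m ≤ m') : Tab T m' :=
  ⟨h.sorted, h.col, fun i hi => h.fin i (hm.trans hi), h.readw_nodup m'⟩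

lemma shp_tab {n B : ℕ} (hB : n ≤ B) (σ : Equiv.Perm (Fin n)) : Tab (PP (wd σ).reverse) B := by
  have := (PP_tab (wdr_nodup σ)).2
  exact this.mono (by simpa [wd] using hB)

lemma shp_mem {n B : ℕ} (hB : n ≤ B) (σ : Equiv.Perm (Fin n)) : shp σ ∈ Lam B n := by
  have hT := shp_tab hB σ
  have hT' := shp_tab le_rfl σ
  have hK := (PP_tab (wdr_nodup σ)).1.1.length_eq
  rw [length_readw] at hK
  simp only [List.length_reverse] at hK
  have hl : (wd σ).length = n := by simp [wd]
  rw [hl] at hK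
  rw [mem_Lam]
  refine ⟨?_, fun i hi => by simp [shp, sh, hT.fin i hi]⟩
  refine Eq.trans (Eq.symm ?_) hK.symm
  refine sum_subset (range_subset_range.2 hB) fun i _ hi => ?_
  simp at hi
  simp [sh, hT'.fin i hi]

lemma card_shp_le {n B : ℕ} (hB : n ≤ B) (lam : ℕ → ℕ) :
    (univ.filter fun σ : Equiv.Perm (Fin n) => shp σ = lam).card ≤ ff B n lam ^ 2 := by
  set S := univ.filter fun σ : Equiv.Perm (Fin n) => shp σ = lam
  set ψ : Equiv.Perm (Fin n) → (ℕ → List ℕ) := fun σ => PP (wd σ).reverse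
  rw [card_eq_sum_card_image ψ S, pow_two]
  have h1 : ∀ T ∈ S.image ψ, (S.filter fun σ => ψ σ = T).card ≤ ff B n lam := by
    intro T hT
    obtain ⟨τ, hτ, rfl⟩ := mem_image.1 hT
    have hinj : Function.Injective fun σ : Equiv.Perm (Fin n) => (wd σ).reverse :=
      List.reverse_injective.comp wd_inj
    rw [← card_image_of_injective _ hinj]
    have := card_words_le (B := B) n hB (ψ τ) ((S.filter fun σ => ψ σ = ψ τ).image fun σ => (wd σ).reverse) (by
      intro w hw
      obtain ⟨σ, hσ, rfl⟩ := mem_image.1 hw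
      exact ⟨wdr_nodup σ, by simp [wd], (mem_filter.1 hσ).2⟩)
    have e : sh (ψ τ) = lam := (mem_filter.1 hτ).2
    rwa [e] at this
  refine (sum_le_card_nsmul _ _ _ h1).trans ?_
  rw [smul_eq_mul]
  refine Nat.mul_le_mul_right _ (card_tab_le n hB (range n) (card_range n) lam _ ?_)
  intro T hT
  obtain ⟨τ, hτ, rfl⟩ := mem_image.1 hT
  refine ⟨shp_tab hB τ, fun a => ?_, (mem_filter.1 hτ).2⟩
  have hT := (PP_tab (wdr_nodup τ)).2
  rw [← hT.mem_iff, ← (PP_tab (wdr_nodup τ)).1.1.mem_iff, List.reverse_reverse, wd_mem, mem_range]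
  constructor
  · rintro ⟨i, rfl⟩; exact (τ i).2
  · intro h; exact ⟨τ.symm ⟨a, h⟩, by simp⟩

lemma card_perm' (n : ℕ) : (univ : Finset (Equiv.Perm (Fin n))).card = n.factorial := by
  rw [card_univ, Fintype.card_perm, Fintype.card_fin]

lemma card_shp {n B : ℕ} (hB : n ≤ B) {lam : ℕ → ℕ} (hl : lam ∈ Lam B n) :
    (univ.filter fun σ : Equiv.Perm (Fin n) => shp σ = lam).card = ff B n lam ^ 2 := by
  have h := sum_eq_sum_iff_of_le (s := Lam B n) (fun lam _ => card_shp_le hB lam)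
  refine h.1 ?_ lam hl
  rw [← card_eq_sum_card_fiberwise (fun σ _ => shp_mem hB σ), card_perm']
  have := ff_total B n hB
  exact_mod_cast this.symm

lemma sum_shp {n B : ℕ} (hB : n ≤ B) (g : (ℕ → ℕ) → ℝ) :
    ∑ σ : Equiv.Perm (Fin n), g (shp σ) = ∑ lam ∈ Lam B n, g lam * (ff B n lam : ℝ) ^ 2 := by
  rw [← sum_fiberwise_of_maps_to (fun σ _ => shp_mem hB σ)]
  refine sum_congr rfl fun lam hl => ?_
  rw [sum_congr rfl (g := fun _ => g lam) (fun σ hσ => by rw [(mem_filter.1 hσ).2]), sum_const, card_shp hB hl,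
    nsmul_eq_mul]
  push_cast; ring

noncomputable def EE {n : ℕ} (f : Equiv.Perm (Fin n) → ℝ) : ℝ := (∑ σ, f σ) / (n.factorial : ℝ)

noncomputable def vR (n i : ℕ) : ℝ :=
  EE (fun σ : Equiv.Perm (Fin (n + 1)) => (shp σ i : ℝ)) - EE (fun σ : Equiv.Perm (Fin n) => (shp σ i : ℝ))

lemma vR_eq {B n i : ℕ} (hn : n < B) (hi : i < B) : vR n i = vv B n i := by
  unfold vR EE
  rw [sum_shp (B := B) (by omega) (fun l => (l i : ℝ)), sum_shp (B := B) (by omega) (fun l => (l i : ℝ)),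
    ff_row B n i hn hi (fun t => (t : ℝ)), add_sub_cancel_left, vv]
  congr 1
  refine sum_congr rfl fun lam _ => ?_
  push_cast; ring

lemma vR_nonneg (n i : ℕ) : 0 ≤ vR n i := by
  rw [vR_eq (B := n + i + 1) (by omega) (by omega)]; exact vv_nonneg _ _ _

lemma vR_le (n i : ℕ) : √(n + 1) * vR n i ≤ 1 := by
  rw [vR_eq (B := n + i + 1) (by omega) (by omega)]; exact vv_le _ _ _ (by omega) (by omega)

lemma vR_mono (n k : ℕ) : ∑ i ∈ range k, vR (n + 1) i ≤ ∑ i ∈ range k, vR n i := by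
  have := vv_mono (n + k + 2) n k (by omega) (by omega)
  rw [sum_congr rfl fun i hi => vR_eq (B := n + k + 2) (n := n + 1) (by omega) (by have := mem_range.1 hi; omega),
    sum_congr rfl fun i hi => vR_eq (B := n + k + 2) (n := n) (by omega) (by have := mem_range.1 hi; omega)]
  exact this

lemma Pn_eq {n : ℕ} (p : Equiv.Perm (Fin n) → Prop) : Pn p = EE (fun σ => if p σ then 1 else 0) := by
  unfold Pn EE
  rw [Fintype.card_perm, Fintype.card_fin, card_filter]
  push_cast; rfl

lemma atom_row (n i s : ℕ) : Pn (fun σ : Equiv.Perm (Fin n) => rowLen (i + 1) σ = s) ≤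
    vR n i + 2 * √(2 * (1 - √(n + 1) * vR n i)) := by
  have := atom_bound (n + i + 1) n i (by omega) (by omega) s
  rw [← vR_eq (by omega) (by omega)] at this
  rw [Pn_eq, EE]
  simp only [rowLen_eq]
  rw [sum_shp (B := n + i + 1) (by omega) (fun l => if l i = s then 1 else 0)]
  simp only [ite_mul, one_mul, zero_mul, ← sum_filter]
  exact this

noncomputable def eS (k n : ℕ) : ℝ := EE (fun σ : Equiv.Perm (Fin n) => (maxIncUnion k σ : ℝ))

lemma eS_succ (k n : ℕ) : eS k (n + 1) - eS k n = ∑ i ∈ range k, vR n i := by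
  unfold eS vR EE
  simp only [maxInc_eq]
  push_cast
  rw [sum_comm, sum_comm (s := univ), sum_div, sum_div, ← sum_sub_distrib]


lemma fact_pos' (n : ℕ) : (0:ℝ) < (n.factorial : ℝ) := by exact_mod_cast n.factorial_pos

lemma EE_mono {n : ℕ} {f g : Equiv.Perm (Fin n) → ℝ} (h : ∀ σ, f σ ≤ g σ) : EE f ≤ EE g :=
  div_le_div_of_nonneg_right (sum_le_sum fun σ _ => h σ) (fact_pos' n).le

lemma EE_nonneg {n : ℕ} {f : Equiv.Perm (Fin n) → ℝ} (h : ∀ σ, 0 ≤ f σ) : 0 ≤ EE f :=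
  div_nonneg (sum_nonneg fun σ _ => h σ) (fact_pos' n).le

lemma EE_add {n : ℕ} (f g : Equiv.Perm (Fin n) → ℝ) : EE (fun σ => f σ + g σ) = EE f + EE g := by
  rw [EE, sum_add_distrib, add_div]; rfl

lemma EE_sub {n : ℕ} (f g : Equiv.Perm (Fin n) → ℝ) : EE (fun σ => f σ - g σ) = EE f - EE g := by
  rw [EE, sum_sub_distrib, sub_div]; rfl

lemma EE_smul {n : ℕ} (c : ℝ) (f : Equiv.Perm (Fin n) → ℝ) : EE (fun σ => c * f σ) = c * EE f := by
  rw [EE, ← mul_sum, mul_div_assoc]; rfl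

lemma EE_const {n : ℕ} (c : ℝ) : EE (fun _ : Equiv.Perm (Fin n) => c) = c := by
  rw [EE, sum_const, card_perm', nsmul_eq_mul, mul_div_cancel_left₀ _ (fact_pos' n).ne']

lemma EE_sum {n : ℕ} {ι : Type*} (s : Finset ι) (f : ι → Equiv.Perm (Fin n) → ℝ) :
    EE (fun σ => ∑ i ∈ s, f i σ) = ∑ i ∈ s, EE (f i) := by
  unfold EE; rw [sum_comm, sum_div]

lemma EE_sq_le {n : ℕ} (f : Equiv.Perm (Fin n) → ℝ) : (EE f) ^ 2 ≤ EE (fun σ => f σ ^ 2) := by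
  have h : 0 ≤ EE (fun σ => (f σ - EE f) ^ 2) := EE_nonneg fun σ => sq_nonneg _
  have e : EE (fun σ => (f σ - EE f) ^ 2) = EE (fun σ => f σ ^ 2) - (EE f) ^ 2 := by
    have : (fun σ => (f σ - EE f) ^ 2) = fun σ => (f σ ^ 2 - (2 * EE f) * f σ) + (EE f) ^ 2 := by
      funext σ; ring
    rw [this, EE_add, EE_sub, EE_smul, EE_const]; ring
  linarith

lemma EE_mulLeft {n : ℕ} (f : Equiv.Perm (Fin n) → ℝ) (τ : Equiv.Perm (Fin n)) :
    EE (fun σ => f (τ * σ)) = EE f := by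
  unfold EE; congr 1; exact Equiv.sum_comp (Equiv.mulLeft τ) f

lemma EE_mulRight {n : ℕ} (f : Equiv.Perm (Fin n) → ℝ) (τ : Equiv.Perm (Fin n)) :
    EE (fun σ => f (σ * τ)) = EE f := by
  unfold EE; congr 1; exact Equiv.sum_comp (Equiv.mulRight τ) f

def dc {n : ℕ} (p : Fin (n + 1)) (e : Equiv.Perm (Fin n)) : Equiv.Perm (Fin (n + 1)) :=
  Equiv.Perm.decomposeFin.symm (p, e)

lemma EE_dc {n : ℕ} (F : Equiv.Perm (Fin (n + 1)) → ℝ) :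
    EE F = (∑ p, EE fun e => F (dc p e)) / (n + 1 : ℝ) := by
  unfold EE dc
  rw [← Equiv.sum_comp Equiv.Perm.decomposeFin.symm F, Fintype.sum_prod_type, ← sum_div, div_div,
    Nat.factorial_succ]
  push_cast; rw [mul_comm]

lemma sum_dc {n : ℕ} (F : Equiv.Perm (Fin (n + 1)) → ℝ) (p : Fin (n + 1)) :
    ∑ e, F (dc p e) = ∑ σ ∈ univ.filter (fun σ : Equiv.Perm (Fin (n + 1)) => σ 0 = p), F σ := by
  rw [sum_filter, ← Equiv.sum_comp Equiv.Perm.decomposeFin.symm, Fintype.sum_prod_type]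
  simp [dc, Equiv.Perm.decomposeFin_symm_apply_zero]

lemma dc_zero {n : ℕ} (p : Fin (n + 1)) (e : Equiv.Perm (Fin n)) : dc p e 0 = p := by simp [dc]

lemma EE_dc_swap {n : ℕ} (F : Equiv.Perm (Fin (n + 1)) → ℝ) (p q : Fin (n + 1)) :
    EE (fun e => F (dc q e)) = EE (fun e => F (Equiv.swap p q * dc p e)) := by
  unfold EE
  rw [sum_dc F q, sum_dc (fun σ => F (Equiv.swap p q * σ)) p]
  congr 1
  symm
  refine sum_equiv (Equiv.mulLeft (Equiv.swap p q)) (fun σ => ?_) (fun σ _ => rfl)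
  simp only [mem_filter, mem_univ, true_and, Equiv.coe_mulLeft, Equiv.Perm.mul_apply]
  rw [Equiv.swap_apply_eq_iff, Equiv.swap_apply_right]

noncomputable def hS (n : ℕ) : ℝ := ∑ i ∈ range n, 1 / ((i : ℝ) + 1)

lemma hS_nonneg (n : ℕ) : 0 ≤ hS n := sum_nonneg fun i _ => by positivity

lemma sum_sq_pairs {N : ℕ} (g : Fin N → ℝ) (W : Fin N → Fin N → ℝ) (hW : ∀ p q, (max (g p - g q) 0) ^ 2 ≤ W p q) :
    N * ∑ p, g p ^ 2 - (∑ p, g p) ^ 2 ≤ ∑ p, ∑ q, W p q := by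
  have h1 : ∑ p, ∑ q, (g p - g q) ^ 2 = 2 * (N * ∑ p, g p ^ 2 - (∑ p, g p) ^ 2) := by
    have : ∀ p q, (g p - g q) ^ 2 = g p ^ 2 + g q ^ 2 - 2 * (g p * g q) := fun p q => by ring
    simp only [this, sum_sub_distrib, sum_add_distrib, sum_const, card_univ, Fintype.card_fin, nsmul_eq_mul,
      ← mul_sum, ← sum_mul]
    ring
  have h2 : ∑ p, ∑ q, (g p - g q) ^ 2 ≤ ∑ p, ∑ q, W p q + ∑ p, ∑ q, W q p := by
    rw [← sum_add_distrib]
    refine sum_le_sum fun p _ => ?_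
    rw [← sum_add_distrib]
    refine sum_le_sum fun q _ => ?_
    refine le_trans ?_ (add_le_add (hW p q) (hW q p))
    rcases le_total (g p) (g q) with h | h
    · rw [max_eq_right (by linarith), max_eq_left (by linarith)]; nlinarith
    · rw [max_eq_left (by linarith), max_eq_right (by linarith)]; nlinarith
  rw [sum_comm (f := fun p q => W q p)] at h2
  linarith

lemma var_bound : ∀ (n : ℕ) (f : Equiv.Perm (Fin n) → ℝ) (o : Equiv.Perm (Fin n) → Finset (Fin n)),
    (∀ σ τ, f σ - f τ ≤ (((o σ).filter fun i => σ i ≠ τ i).card : ℝ)) →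
    EE (fun σ => f σ ^ 2) - (EE f) ^ 2 ≤ 2 * (1 + hS n) * EE (fun σ => ((o σ).card : ℝ)) := by
  intro n
  induction n with
  | zero =>
    intro f o _
    have h0 : EE (fun σ => f σ ^ 2) - (EE f) ^ 2 = 0 := by
      unfold EE; simp
    rw [h0]
    have := EE_nonneg (f := fun σ => ((o σ).card : ℝ)) fun σ => by positivity
    have := hS_nonneg 0
    positivity
  | succ n ih =>
    intro f o ho
    set g : Fin (n + 1) → ℝ := fun p => EE fun e => f (dc p e) with hg
    set o' : Fin (n + 1) → Equiv.Perm (Fin n) → Finset (Fin n) := fun p e =>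
      univ.filter fun i => i.succ ∈ o (dc p e) with ho'
    have hcard : ∀ p e, ((o (dc p e)).card : ℝ) = (if 0 ∈ o (dc p e) then 1 else 0) + ((o' p e).card : ℝ) := by
      intro p e
      have := Finset.card_filter (fun i => i ∈ o (dc p e)) univ
      rw [Fin.sum_univ_succ, ← card_filter] at this
      simp only [filter_univ_mem] at this 
      rw [this]; push_cast; rfl
    have h1 : ∀ p, EE (fun e => f (dc p e) ^ 2) - (g p) ^ 2 ≤ 2 * (1 + hS n) * EE (fun e => ((o' p e).card : ℝ)) := by
      intro p
      refine ih (fun e => f (dc p e)) (o' p) fun e e' => ?_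
      refine (ho _ _).trans ?_
      norm_cast
      rw [← card_map (Fin.succEmb n)]
      refine card_le_card fun x hx => ?_
      obtain ⟨hx1, hx2⟩ := mem_filter.1 hx
      have hx0 : x ≠ 0 := by rintro rfl; exact hx2 (by rw [dc_zero, dc_zero])
      obtain ⟨y, rfl⟩ := Fin.exists_succ_eq.2 hx0
      refine mem_map.2 ⟨y, mem_filter.2 ⟨by simpa [ho'] using hx1, fun h => hx2 ?_⟩, rfl⟩
      simp [dc, h]
    set Z : Fin (n + 1) → Fin (n + 1) → Equiv.Perm (Fin n) → ℝ := fun p q e =>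
      (if 0 ∈ o (dc p e) then 1 else 0) + (if ∃ i ∈ o' p e, dc p e i.succ = q then 1 else 0) with hZ
    have hZ0 : ∀ p q e, 0 ≤ Z p q e := by
      intro p q e; simp only [hZ]; positivity
    have hZs : ∀ p q e, Z p q e ^ 2 ≤ 2 * (if 0 ∈ o (dc p e) then 1 else 0) +
        2 * (if ∃ i ∈ o' p e, dc p e i.succ = q then 1 else 0) := by
      intro p q e; simp only [hZ]; split_ifs <;> norm_num
    have h2 : ∀ p q, g p - g q ≤ EE (Z p q) := by
      intro p q
      simp only [hg]
      rw [EE_dc_swap f p q, ← EE_sub]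
      refine EE_mono fun e => (ho _ _).trans ?_
      by_cases hpq : p = q
      · subst hpq
        simpa [Equiv.swap_self] using hZ0 p p e
      have hsub : ((o (dc p e)).filter fun i => dc p e i ≠ (Equiv.swap p q * dc p e) i) ⊆
          ((o (dc p e)).filter fun i => i = 0) ∪ ((o (dc p e)).filter fun i => i ≠ 0 ∧ dc p e i = q) := by
        intro x hx
        obtain ⟨hx1, hx2⟩ := mem_filter.1 hx
        rw [mem_union, mem_filter, mem_filter]
        by_cases hx0 : x = 0
        · exact Or.inl ⟨hx1, hx0⟩
        · refine Or.inr ⟨hx1, hx0, ?_⟩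
          by_contra hq
          refine hx2 ?_
          rw [Equiv.Perm.mul_apply, Equiv.swap_apply_of_ne_of_ne _ hq]
          intro h
          rw [← dc_zero p e] at h
          rw [dc_zero p e] at h
          exact hx0 ((dc p e).injective (h.trans (dc_zero p e).symm))
      have hc := (card_le_card hsub).trans (card_union_le _ _)
      have hc' : (((o (dc p e)).filter fun i => dc p e i ≠ (Equiv.swap p q * dc p e) i).card : ℝ) ≤
        (((o (dc p e)).filter fun i => i = 0).card : ℝ) + (((o (dc p e)).filter fun i => i ≠ 0 ∧ dc p e i = q).card : ℝ) := by
        exact_mod_cast hc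
      refine hc'.trans (add_le_add ?_ ?_)
      · rw [filter_eq']
        split_ifs <;> simp
      · split_ifs with hex
        · norm_cast
          rw [card_le_one]
          intro a ha b hb
          exact (dc p e).injective ((mem_filter.1 ha).2.2.trans (mem_filter.1 hb).2.2.symm)
        · norm_cast
          rw [Nat.le_zero, card_eq_zero, filter_eq_empty_iff]
          rintro x hx ⟨hx0, hxq⟩
          obtain ⟨y, rfl⟩ := Fin.exists_succ_eq.2 hx0
          exact hex ⟨y, by simpa [ho'] using hx, hxq⟩
    have h3 := sum_sq_pairs g (fun p q => EE fun e => Z p q e ^ 2) (by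
      intro p q
      refine le_trans ?_ (EE_sq_le _)
      have : 0 ≤ EE (Z p q) := EE_nonneg (hZ0 p q)
      exact pow_le_pow_left₀ (le_max_right _ _) (max_le (h2 p q) this) 2)
    have h4 : ∀ p, ∑ q, EE (fun e => Z p q e ^ 2) ≤ 2 * (n + 1) * EE (fun e => if 0 ∈ o (dc p e) then (1:ℝ) else 0) +
        2 * EE (fun e => ((o' p e).card : ℝ)) := by
      intro p
      rw [← EE_sum, ← EE_smul, ← EE_smul, ← EE_add]
      refine EE_mono fun e => (sum_le_sum fun q _ => hZs p q e).trans ?_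
      rw [sum_add_distrib, ← mul_sum, ← mul_sum]
      refine add_le_add (by simp [mul_assoc]) (mul_le_mul_of_nonneg_left ?_ (by norm_num))
      rw [sum_boole]
      norm_cast
      refine le_trans (card_le_card ?_) (card_image_le (s := o' p e) (f := fun i => dc p e i.succ))
      intro q hq
      obtain ⟨i, hi, h⟩ := (mem_filter.1 hq).2
      exact mem_image.2 ⟨i, hi, h⟩
    rw [EE_dc (fun σ => f σ ^ 2), EE_dc f, EE_dc (fun σ => ((o σ).card : ℝ))]
    simp only [hcard, EE_add, sum_add_distrib]
    set A := ∑ p, EE (fun e => if 0 ∈ o (dc p e) then (1:ℝ) else 0) with hA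
    set Bq := ∑ p, EE (fun e => ((o' p e).card : ℝ)) with hB
    have hA0 : 0 ≤ A := sum_nonneg fun p _ => EE_nonneg fun e => by positivity
    have hB0 : 0 ≤ Bq := sum_nonneg fun p _ => EE_nonneg fun e => by positivity
    have s1 := sum_le_sum (s := univ) fun p _ => h1 p
    rw [sum_sub_distrib, ← mul_sum, ← hB] at s1
    have s2 := h3.trans (sum_le_sum fun p _ => h4 p)
    rw [sum_add_distrib, ← mul_sum, ← mul_sum, ← hA, ← hB] at s2
    have hN : (0:ℝ) < n + 1 := by positivity
    have e1 : hS (n + 1) = hS n + 1 / (n + 1 : ℝ) := by rw [hS, sum_range_succ]; rfl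
    have hh := hS_nonneg n
    push_cast at s2
    rw [div_pow, e1]
    have k1 : (∑ p, EE fun e => f (dc p e) ^ 2) / (n + 1 : ℝ) - (∑ p, g p) ^ 2 / (n + 1 : ℝ) ^ 2 =
      ((∑ p, EE fun e => f (dc p e) ^ 2) - ∑ p, g p ^ 2) / (n + 1) +
        ((n + 1) * ∑ p, g p ^ 2 - (∑ p, g p) ^ 2) / (n + 1 : ℝ) ^ 2 := by
      field_simp; ring
    rw [k1]
    refine (add_le_add (div_le_div_of_nonneg_right s1 hN.le) (div_le_div_of_nonneg_right s2 (by positivity))).trans ?_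
    have : 2 * (1 + (hS n + 1 / (n + 1 : ℝ))) * ((A + Bq) / (n + 1)) - (2 * (1 + hS n) * Bq / (n + 1) +
      (2 * (n + 1) * A + 2 * Bq) / (n + 1 : ℝ) ^ 2) = 2 * (hS n + 1 / (n + 1)) * A / (n + 1) := by
      field_simp; ring
    have : 0 ≤ 2 * (hS n + 1 / ((n:ℝ) + 1)) * A / (n + 1) := by positivity
    linarith


lemma exists_opt {n : ℕ} (k : ℕ) (σ : Equiv.Perm (Fin n)) : ∃ c : Fin k → Finset (Fin n),
    (∀ t, StrictMonoOn (fun i => σ i) ((c t : Finset (Fin n)) : Set (Fin n))) ∧ (univ.biUnion c).card = maxIncUnion k σ := by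
  obtain ⟨C, _, hC⟩ := exists_mem_eq_sup (univ : Finset (Fin k → Finset (Fin n))) ⟨fun _ => ∅, mem_univ _⟩
    (fun c : Fin k → Finset (Fin n) =>
    if ∀ t : Fin k, StrictMonoOn (fun i => σ i) ((c t : Finset (Fin n)) : Set (Fin n))
    then (Finset.univ.biUnion c).card else 0)
  by_cases hm : ∀ t : Fin k, StrictMonoOn (fun i => σ i) ((C t : Finset (Fin n)) : Set (Fin n))
  · refine ⟨C, hm, ?_⟩
    rw [maxIncUnion, hC, if_pos hm]
  · refine ⟨fun _ => ∅, fun t i hi => by simp at hi, ?_⟩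
    rw [maxIncUnion, hC, if_neg hm, card_eq_zero]; ext x; simp

lemma le_maxInc {n k : ℕ} (σ : Equiv.Perm (Fin n)) (c : Fin k → Finset (Fin n))
    (h : ∀ t, StrictMonoOn (fun i => σ i) ((c t : Finset (Fin n)) : Set (Fin n))) :
    (univ.biUnion c).card ≤ maxIncUnion k σ := by
  have hle := le_sup (f := fun c : Fin k → Finset (Fin n) =>
    if ∀ t : Fin k, StrictMonoOn (fun i => σ i) ((c t : Finset (Fin n)) : Set (Fin n))
    then (Finset.univ.biUnion c).card else 0) (mem_univ c)
  simp only [if_pos h] at hle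
  exact hle

noncomputable def cert {n : ℕ} (k : ℕ) (σ : Equiv.Perm (Fin n)) : Finset (Fin n) :=
  univ.biUnion (exists_opt k σ).choose

lemma cert_card {n : ℕ} (k : ℕ) (σ : Equiv.Perm (Fin n)) : (cert k σ).card = maxIncUnion k σ :=
  (exists_opt k σ).choose_spec.2

lemma cert_spec {n : ℕ} (k : ℕ) (σ τ : Equiv.Perm (Fin n)) :
    maxIncUnion k σ ≤ maxIncUnion k τ + ((cert k σ).filter fun i => σ i ≠ τ i).card := by
  have hm := (exists_opt k σ).choose_spec.1
  set C := (exists_opt k σ).choose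
  have h := le_maxInc τ (fun t => (C t).filter fun i => σ i = τ i) (by
    intro t i hi j hj hij
    simp only [coe_filter, Set.mem_setOf_eq] at hi hj
    have := hm t hi.1 hj.1 hij
    simpa only [hi.2, hj.2] using this)
  rw [← cert_card k σ, ← card_filter_add_card_filter_not (s := cert k σ) (fun i => σ i = τ i)]
  refine Nat.add_le_add_right (le_trans (card_le_card ?_) h) _
  intro i hi
  obtain ⟨h1, h2⟩ := mem_filter.1 hi
  obtain ⟨t, ht, h3⟩ := mem_biUnion.1 h1
  exact mem_biUnion.2 ⟨t, ht, mem_filter.2 ⟨h3, h2⟩⟩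

lemma var_S (k n : ℕ) : EE (fun σ : Equiv.Perm (Fin n) => ((maxIncUnion k σ : ℝ) - eS k n) ^ 2) ≤
    2 * (1 + hS n) * eS k n := by
  have h := var_bound n (fun σ => (maxIncUnion k σ : ℝ)) (cert k) (by
    intro σ τ
    have : (maxIncUnion k σ : ℝ) ≤ maxIncUnion k τ + ((cert k σ).filter fun i => σ i ≠ τ i).card := by
      exact_mod_cast cert_spec k σ τ
    linarith)
  simp only [cert_card] at h
  change _ - (eS k n) ^ 2 ≤ _ * eS k n at h
  refine le_trans (le_of_eq ?_) h
  have : (fun σ : Equiv.Perm (Fin n) => ((maxIncUnion k σ : ℝ) - eS k n) ^ 2) =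
      fun σ => ((maxIncUnion k σ : ℝ) ^ 2 - (2 * eS k n) * (maxIncUnion k σ : ℝ)) + (eS k n) ^ 2 := by
    funext σ; ring
  rw [this, EE_add, EE_sub, EE_smul, EE_const]
  change _ - 2 * eS k n * eS k n + _ = _
  ring

/-! moments -/

lemma EE_apply {N : ℕ} (G : Fin N → ℝ) (i : Fin N) : EE (fun σ => G (σ i)) = (∑ j, G j) / N := by
  have h : ∀ j, EE (fun σ => G (σ j)) = EE (fun σ => G (σ i)) := by
    intro j
    rw [← EE_mulRight (fun σ => G (σ j)) (Equiv.swap i j)]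
    simp
  have h2 : ∑ j : Fin N, EE (fun σ => G (σ j)) = ∑ j, G j := by
    rw [← EE_sum]
    have : (fun σ : Equiv.Perm (Fin N) => ∑ j, G (σ j)) = fun _ => ∑ j, G j := by
      funext σ; exact Equiv.sum_comp σ G
    rw [this, EE_const]
  simp only [h, sum_const, card_univ, Fintype.card_fin, nsmul_eq_mul] at h2
  have : (N : ℝ) ≠ 0 := by have := i.pos; positivity
  field_simp; linarith

lemma EE_apply2 {N : ℕ} (G : Fin N → ℝ) (hG : ∑ j, G j = 0) {i j : Fin N} (hij : i ≠ j) :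
    EE (fun σ => G (σ i) * G (σ j)) = - (∑ j, G j ^ 2) / (N * (N - 1)) := by
  have h : ∀ l, l ≠ i → EE (fun σ => G (σ i) * G (σ l)) = EE (fun σ => G (σ i) * G (σ j)) := by
    intro l hl
    rw [← EE_mulRight (fun σ => G (σ i) * G (σ l)) (Equiv.swap l j)]
    simp [Equiv.swap_apply_of_ne_of_ne hl.symm hij]
  have h2 : ∑ l : Fin N, EE (fun σ => G (σ i) * G (σ l)) = 0 := by
    rw [← EE_sum]
    have : (fun σ : Equiv.Perm (Fin N) => ∑ l, G (σ i) * G (σ l)) = fun _ => 0 := by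
      funext σ; rw [← mul_sum, Equiv.sum_comp σ G, hG, mul_zero]
    rw [this, EE_const]
  rw [← add_sum_erase _ _ (mem_univ i), sum_congr rfl (fun l hl => h l (mem_erase.1 hl).1), sum_const,
    card_erase_of_mem (mem_univ i), card_univ, Fintype.card_fin, nsmul_eq_mul] at h2
  have h3 := EE_apply (fun j => G j ^ 2) i
  have e : (fun σ : Equiv.Perm (Fin N) => G (σ i) * G (σ i)) = fun σ => G (σ i) ^ 2 := by funext σ; ring
  rw [e, h3] at h2
  have hN : 2 ≤ N := by
    have := Fin.val_ne_of_ne hij; have := i.2; have := j.2; omega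
  rw [Nat.cast_sub (by omega)] at h2
  have hN' : (2:ℝ) ≤ N := by exact_mod_cast hN
  have : (N:ℝ) - 1 ≠ 0 := by linarith
  have : (N:ℝ) ≠ 0 := by linarith
  push_cast at h2
  rw [eq_div_iff (by positivity)]
  field_simp at h2
  linarith

lemma EE_var {N : ℕ} (hN : 2 ≤ N) (G : Fin N → ℝ) (hG : ∑ j, G j = 0) (A : Finset (Fin N)) :
    EE (fun σ => (∑ i ∈ A, G (σ i)) ^ 2) = A.card * (N - A.card) * (∑ j, G j ^ 2) / (N * (N - 1)) := by
  have e : (fun σ : Equiv.Perm (Fin N) => (∑ i ∈ A, G (σ i)) ^ 2) =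
      fun σ => ∑ i ∈ A, ∑ j ∈ A, G (σ i) * G (σ j) := by
    funext σ; rw [pow_two, sum_mul_sum]
  rw [e, EE_sum]
  simp only [EE_sum]
  have h : ∀ i ∈ A, ∑ j ∈ A, EE (fun σ => G (σ i) * G (σ j)) = (∑ j, G j ^ 2) / N +
      (A.card - 1 : ℝ) * (- (∑ j, G j ^ 2) / (N * (N - 1))) := by
    intro i hi
    rw [← add_sum_erase _ _ hi, sum_congr rfl (fun l hl => EE_apply2 G hG (mem_erase.1 hl).1.symm), sum_const,
      card_erase_of_mem hi, nsmul_eq_mul, Nat.cast_sub (card_pos.2 ⟨i, hi⟩)]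
    have e : (fun σ : Equiv.Perm (Fin N) => G (σ i) * G (σ i)) = fun σ => G (σ i) ^ 2 := by funext σ; ring
    rw [e, EE_apply (fun j => G j ^ 2) i]
    push_cast; rfl
  rw [sum_congr rfl h, sum_const, nsmul_eq_mul]
  have hN' : (2:ℝ) ≤ N := by exact_mod_cast hN
  have : (N:ℝ) - 1 ≠ 0 := by linarith
  have : (N:ℝ) ≠ 0 := by linarith
  field_simp; ring

/-! patterns -/

noncomputable def pat {N : ℕ} (σ : Equiv.Perm (Fin N)) (I : Finset (Fin N)) : Equiv.Perm (Fin I.card) :=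
  (Tuple.sort fun x => σ (I.orderEmbOfFin rfl x))⁻¹

lemma pat_lt {N : ℕ} (σ : Equiv.Perm (Fin N)) (I : Finset (Fin N)) (x y : Fin I.card) :
    pat σ I x < pat σ I y ↔ σ (I.orderEmbOfFin rfl x) < σ (I.orderEmbOfFin rfl y) := by
  set h : Fin I.card → Fin N := fun x => σ (I.orderEmbOfFin rfl x) with hh
  have hinj : Function.Injective h := σ.injective.comp (I.orderEmbOfFin rfl).injective
  have hm : StrictMono (h ∘ Tuple.sort h) :=
    (Tuple.monotone_sort h).strictMono_of_injective (hinj.comp (Tuple.sort h).injective)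
  have := hm.lt_iff_lt (a := pat σ I x) (b := pat σ I y)
  rw [← this]
  simp [pat, hh]

lemma perm_eq_of_lt {m : ℕ} (π π' : Equiv.Perm (Fin m)) (h : ∀ x y, π x < π y ↔ π' x < π' y) : π = π' := by
  have hm : StrictMono (π' ∘ π.symm) := by
    intro a b hab
    rw [← π.apply_symm_apply a, ← π.apply_symm_apply b, h] at hab
    exact hab
  have : (⇑(π.symm.trans π')) = id := by
    have := Subsingleton.elim (OrderIso.refl (Fin m)) (hm.orderIsoOfSurjective _ (π'.surjective.comp π.symm.surjective))
    funext x
    have h2 := congrArg (fun f => f x) this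
    exact h2.symm
  ext x
  have := congrFun this (π x)
  simp at this
  rw [this]

noncomputable def iot {N : ℕ} (I : Finset (Fin N)) (τ : Equiv.Perm (Fin I.card)) : Equiv.Perm (Fin N) :=
  τ.extendDomain (I.orderIsoOfFin rfl).toEquiv

lemma iot_emb {N : ℕ} (I : Finset (Fin N)) (τ : Equiv.Perm (Fin I.card)) (x : Fin I.card) :
    iot I τ (I.orderEmbOfFin rfl x) = I.orderEmbOfFin rfl (τ x) := by
  have := Equiv.Perm.extendDomain_apply_image τ (I.orderIsoOfFin rfl).toEquiv x
  simpa [iot] using this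

lemma iot_out {N : ℕ} (I : Finset (Fin N)) (τ : Equiv.Perm (Fin I.card)) (x : Fin N) (hx : x ∉ I) :
    iot I τ x = x := Equiv.Perm.extendDomain_apply_not_subtype τ _ hx

lemma pat_mul {N : ℕ} (σ : Equiv.Perm (Fin N)) (I : Finset (Fin N)) (τ : Equiv.Perm (Fin I.card)) :
    pat (σ * iot I τ) I = pat σ I * τ := by
  refine perm_eq_of_lt _ _ fun x y => ?_
  rw [pat_lt]
  simp only [Equiv.Perm.mul_apply, iot_emb, pat_lt]

lemma EE_pat {N : ℕ} (k : ℕ) (I : Equiv.Perm (Fin N) → Finset (Fin N))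
    (hI : ∀ σ ρ : Equiv.Perm (Fin N), (∀ x, x ∉ I σ → ρ x = x) → I (σ * ρ) = I σ) :
    EE (fun σ => (maxIncUnion k (pat σ (I σ)) : ℝ)) = EE (fun σ => eS k (I σ).card) := by
  unfold EE
  congr 1
  rw [← sum_fiberwise (s := univ) (g := I), ← sum_fiberwise (s := univ) (g := I)]
  refine sum_congr rfl fun I0 _ => ?_
  set Q := univ.filter fun σ => I σ = I0 with hQ
  have e1 : ∑ σ ∈ Q, (maxIncUnion k (pat σ (I σ)) : ℝ) = ∑ σ ∈ Q, (maxIncUnion k (pat σ I0) : ℝ) :=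
    sum_congr rfl fun σ hσ => by rw [(mem_filter.1 hσ).2]
  have e2 : ∑ σ ∈ Q, eS k (I σ).card = ∑ σ ∈ Q, eS k I0.card :=
    sum_congr rfl fun σ hσ => by rw [(mem_filter.1 hσ).2]
  rw [e1, e2]
  have e3 : ∀ τ, ∑ σ ∈ Q, (maxIncUnion k (pat σ I0 * τ) : ℝ) = ∑ σ ∈ Q, (maxIncUnion k (pat σ I0) : ℝ) := by
    intro τ
    have hinv : ∀ x, x ∉ I0 → (iot I0 τ)⁻¹ x = x := fun x hx => by
      rw [Equiv.Perm.inv_eq_iff_eq, iot_out I0 τ x hx]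
    refine sum_bij' (fun σ _ => σ * iot I0 τ) (fun σ _ => σ * (iot I0 τ)⁻¹) ?_ ?_ ?_ ?_ ?_
    · intro σ hσ
      have h := (mem_filter.1 hσ).2
      refine mem_filter.2 ⟨mem_univ _, ?_⟩
      rw [hI, h]; rw [h]; exact iot_out I0 τ
    · intro σ hσ
      have h := (mem_filter.1 hσ).2
      refine mem_filter.2 ⟨mem_univ _, ?_⟩
      rw [hI, h]; rw [h]; exact hinv
    · intro σ _; simp
    · intro σ _; simp
    · intro σ _; rw [pat_mul]
  have e4 : ∀ σ ∈ Q, ∑ τ, (maxIncUnion k (pat σ I0 * τ) : ℝ) = (I0.card.factorial : ℝ) * eS k I0.card := by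
    intro σ _
    refine (Equiv.sum_comp (Equiv.mulLeft (pat σ I0)) (fun τ => (maxIncUnion k τ : ℝ))).trans ?_
    rw [eS, EE, mul_div_cancel₀ _ (fact_pos' _).ne']
  have e5 := sum_congr (rfl : Q = Q) e4
  rw [sum_comm, sum_congr rfl (fun τ _ => e3 τ), sum_const, card_perm', nsmul_eq_mul, ← mul_sum] at e5
  exact mul_left_cancel₀ (fact_pos' _).ne' e5

lemma maxInc_blocks {N : ℕ} (k : ℕ) (σ : Equiv.Perm (Fin N)) (I J : Finset (Fin N))
    (h : ∀ i ∈ I, ∀ j ∈ J, i < j ∧ σ i < σ j) :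
    maxIncUnion k (pat σ I) + maxIncUnion k (pat σ J) ≤ maxIncUnion k σ := by
  obtain ⟨c, hc, hc2⟩ := exists_opt k (pat σ I)
  obtain ⟨d, hd, hd2⟩ := exists_opt k (pat σ J)
  have key := le_maxInc σ (fun t => (c t).map (I.orderEmbOfFin rfl).toEmbedding ∪
    (d t).map (J.orderEmbOfFin rfl).toEmbedding) (by
    intro t x hx y hy hxy
    simp only [coe_union, coe_map, Set.mem_union, Set.mem_image] at hx hy
    rcases hx with ⟨a, ha, rfl⟩ | ⟨a, ha, rfl⟩ <;> rcases hy with ⟨b, hb, rfl⟩ | ⟨b, hb, rfl⟩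
    · simp only [RelEmbedding.coe_toEmbedding, OrderEmbedding.lt_iff_lt] at hxy ⊢
      exact (pat_lt σ I a b).1 (hc t ha hb hxy)
    · exact (h _ (orderEmbOfFin_mem I rfl a) _ (orderEmbOfFin_mem J rfl b)).2
    · exact absurd hxy (h _ (orderEmbOfFin_mem I rfl b) _ (orderEmbOfFin_mem J rfl a)).1.not_gt
    · simp only [RelEmbedding.coe_toEmbedding, OrderEmbedding.lt_iff_lt] at hxy ⊢
      exact (pat_lt σ J a b).1 (hd t ha hb hxy))
  refine le_trans ?_ key
  rw [← hc2, ← hd2, ← card_map (I.orderEmbOfFin rfl).toEmbedding, ← card_map (J.orderEmbOfFin rfl).toEmbedding,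
    ← card_union_of_disjoint]
  · refine card_le_card fun x hx => ?_
    simp only [mem_union, Finset.mem_map, mem_biUnion, mem_univ, true_and] at hx ⊢
    rcases hx with ⟨a, ⟨t, ht⟩, rfl⟩ | ⟨a, ⟨t, ht⟩, rfl⟩
    · exact ⟨t, Or.inl ⟨a, ht, rfl⟩⟩
    · exact ⟨t, Or.inr ⟨a, ht, rfl⟩⟩
  · rw [disjoint_left]
    intro x hx hy
    obtain ⟨a, _, rfl⟩ := Finset.mem_map.1 hx
    obtain ⟨b, _, hb⟩ := Finset.mem_map.1 hy
    have := (h _ (orderEmbOfFin_mem I rfl a) _ (orderEmbOfFin_mem J rfl b)).1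
    exact absurd hb this.ne'


lemma eS_zero (k : ℕ) : eS k 0 = 0 := by
  unfold eS EE
  have : ∀ σ : Equiv.Perm (Fin 0), maxIncUnion k σ = 0 := by
    intro σ
    obtain ⟨c, _, h⟩ := exists_opt k σ
    rw [← h, card_eq_zero]; ext x; exact x.elim0
  simp [this]

lemma eS_step (k n : ℕ) : eS k (n + 1) - eS k n ≤ 2 * k * (√((n + 1 : ℕ) : ℝ) - √(n : ℝ)) := by
  rw [eS_succ]
  have hs : (0:ℝ) < √(n + 1) := by positivity
  have h1 : ∀ i ∈ range k, vR n i ≤ 2 * (√((n + 1 : ℕ) : ℝ) - √(n : ℝ)) := by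
    intro i _
    have h := vR_le n i
    have a1 := Real.sq_sqrt (show (0:ℝ) ≤ (n:ℝ) + 1 by positivity)
    have a2 := Real.sq_sqrt (show (0:ℝ) ≤ (n:ℝ) by positivity)
    have a3 := Real.sqrt_le_sqrt (show (n:ℝ) ≤ n + 1 by linarith)
    push_cast
    refine le_of_mul_le_mul_left (h.trans ?_) hs
    nlinarith
  refine (sum_le_sum h1).trans ?_
  rw [sum_const, card_range, nsmul_eq_mul]
  linarith

lemma eS_mono (k : ℕ) : Monotone (eS k) := by
  refine monotone_nat_of_le_succ fun n => ?_
  have := eS_succ k n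
  have h : 0 ≤ ∑ i ∈ range k, vR n i := sum_nonneg fun i _ => vR_nonneg n i
  linarith

lemma eS_diff (k : ℕ) {m n : ℕ} (h : m ≤ n) : eS k n - eS k m ≤ 2 * k * (√(n : ℝ) - √(m : ℝ)) := by
  induction n, h using Nat.le_induction with
  | base => simp
  | succ n hn ih =>
    have := eS_step k n
    linarith

lemma eS_le (k n : ℕ) : eS k n ≤ 2 * k * √(n : ℝ) := by
  have := eS_diff k (Nat.zero_le n)
  simpa [eS_zero] using this

lemma eS_nonneg (k n : ℕ) : 0 ≤ eS k n := by
  have := eS_mono k (Nat.zero_le n); rwa [eS_zero] at this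

lemma eS_lower (k m : ℕ) {s : ℕ} (hs : 0 < s) : eS k (s ^ 2) - 2 * k / s * |(m:ℝ) - (s:ℝ) ^ 2| ≤ eS k m := by
  have hs' : (0:ℝ) < s := by exact_mod_cast hs
  rcases le_total (s ^ 2) m with h | h
  · have := eS_mono k h
    have : 0 ≤ 2 * k / s * |(m:ℝ) - (s:ℝ) ^ 2| := by positivity
    linarith
  · have h1 := eS_diff k h
    have h2 : (m:ℝ) ≤ (s:ℝ) ^ 2 := by exact_mod_cast h
    push_cast at h1
    rw [Real.sqrt_sq hs'.le] at h1
    rw [abs_of_nonpos (by linarith)]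
    have a2 := Real.sq_sqrt (show (0:ℝ) ≤ (m:ℝ) by positivity)
    have a3 := Real.sqrt_nonneg (m:ℝ)
    have h3 : (s:ℝ) - √m ≤ -((m:ℝ) - s ^ 2) / s := by
      rw [le_div_iff₀ hs']
      have : √(m:ℝ) ≤ s := Real.sqrt_le_iff.2 ⟨hs'.le, h2⟩
      nlinarith
    have : 2 * (k:ℝ) * (s - √m) ≤ 2 * k * (-((m:ℝ) - s ^ 2) / s) := by gcongr
    have e : 2 * (k:ℝ) * (-((m:ℝ) - s ^ 2) / s) = 2 * k / s * -((m:ℝ) - s ^ 2) := by ring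
    linarith

lemma card_lt_val {N a : ℕ} (h : a ≤ N) : (univ.filter fun i : Fin N => i.val < a).card = a := by
  rw [Fin.card_filter_val_lt]; omega

lemma super_aux (k s t : ℕ) (hs : 0 < s) (ht : 0 < t) :
    eS k (s ^ 2) + eS k (t ^ 2) - 4 * k ≤ eS k ((s + t) ^ 2) := by
  set N := (s + t) ^ 2 with hN
  set a := s * (s + t) with ha
  have haN : a ≤ N := by rw [ha, hN]; nlinarith
  have hN2 : 2 ≤ N := by rw [hN]; nlinarith
  have hs' : (1:ℝ) ≤ s := by exact_mod_cast hs
  have ht' : (1:ℝ) ≤ t := by exact_mod_cast ht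
  have hNr : (N:ℝ) = ((s:ℝ) + t) ^ 2 := by rw [hN]; push_cast; rfl
  have har : (a:ℝ) = (s:ℝ) * (s + t) := by rw [ha]; push_cast; rfl
  set I : Equiv.Perm (Fin N) → Finset (Fin N) := fun σ => univ.filter fun i => i.val < a ∧ (σ i).val < a with hI
  set J : Equiv.Perm (Fin N) → Finset (Fin N) := fun σ => univ.filter fun i => ¬ i.val < a ∧ ¬ (σ i).val < a with hJ
  have stab : ∀ (P : Fin N → Prop) (K : Equiv.Perm (Fin N) → Finset (Fin N)), (∀ σ x, x ∈ K σ ↔ P x ∧ P (σ x)) →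
      ∀ (σ ρ : Equiv.Perm (Fin N)), (∀ x, x ∉ K σ → ρ x = x) → K (σ * ρ) = K σ := by
    intro P K hK σ ρ h
    ext x
    rw [hK, hK, Equiv.Perm.mul_apply]
    by_cases hx : x ∈ K σ
    · have hy : ρ x ∈ K σ := by
        by_contra hy
        have := ρ.injective (h _ hy)
        rw [this] at hy; exact hy hx
      rw [hK] at hx hy
      tauto
    · rw [h x hx]
  have hEI := EE_pat k I (stab (fun i => i.val < a) I fun σ x => by simp [hI])
  have hEJ := EE_pat k J (stab (fun i => ¬ i.val < a) J fun σ x => by simp [hJ])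
  set G : Fin N → ℝ := fun j => (if j.val < a then 1 else 0) - (a:ℝ) / N with hG
  set A : Finset (Fin N) := univ.filter fun i => i.val < a with hA
  have hAc : A.card = a := card_lt_val haN
  have hN0 : (N:ℝ) ≠ 0 := by positivity
  have hsum1 : ∑ j : Fin N, (if j.val < a then (1:ℝ) else 0) = a := by
    rw [sum_boole]; exact_mod_cast hAc
  have hG0 : ∑ j, G j = 0 := by
    simp only [hG, sum_sub_distrib, hsum1, sum_const, card_univ, Fintype.card_fin, nsmul_eq_mul]
    field_simp; ring
  have hG2 : ∑ j, G j ^ 2 = a - (a:ℝ) ^ 2 / N := by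
    have : ∀ j, G j ^ 2 = (1 - 2 * ((a:ℝ) / N)) * (if j.val < a then 1 else 0) + ((a:ℝ) / N) ^ 2 := by
      intro j; simp only [hG]; split_ifs <;> ring
    simp only [this, sum_add_distrib, ← mul_sum, hsum1, sum_const, card_univ, Fintype.card_fin, nsmul_eq_mul]
    field_simp; ring
  have hX : ∀ σ, ∑ i ∈ A, G (σ i) = ((I σ).card : ℝ) - (s:ℝ) ^ 2 := by
    intro σ
    simp only [hG, sum_sub_distrib, sum_const, hAc, nsmul_eq_mul, sum_boole]
    congr 1
    · rw [hA, filter_filter]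
    · rw [har, hNr]; field_simp
  have hY : ∀ σ, ((J σ).card : ℝ) - (t:ℝ) ^ 2 = ((I σ).card : ℝ) - (s:ℝ) ^ 2 := by
    intro σ
    have e : ((J σ).card : ℝ) = ∑ i : Fin N, ((1 - (if i.val < a then (1:ℝ) else 0) - (if (σ i).val < a then (1:ℝ) else 0))
        + (if i.val < a ∧ (σ i).val < a then (1:ℝ) else 0)) := by
      rw [hJ, ← sum_boole]
      refine sum_congr rfl fun i _ => ?_
      by_cases h1 : i.val < a <;> by_cases h2 : (σ i).val < a <;> simp [h1, h2]
    have e2 : ∑ i : Fin N, (if (σ i).val < a then (1:ℝ) else 0) = a :=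
      (Equiv.sum_comp σ (fun i => if i.val < a then (1:ℝ) else 0)).trans hsum1
    rw [sum_add_distrib, sum_sub_distrib, sum_sub_distrib, hsum1, e2, sum_boole] at e
    rw [e]
    simp only [sum_const, card_univ, Fintype.card_fin, nsmul_eq_mul, hI]
    rw [hNr, har]; ring
  have hv := EE_var hN2 G hG0 A
  simp only [hX, hAc, hG2] at hv
  have hN1 : (0:ℝ) < (N:ℝ) - 1 := by rw [hNr]; nlinarith
  have hv2 : EE (fun σ => (((I σ).card : ℝ) - (s:ℝ) ^ 2) ^ 2) = (s:ℝ) ^ 2 * t ^ 2 / (N - 1) := by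
    rw [hv]
    have : (s:ℝ) + t ≠ 0 := by positivity
    rw [div_eq_div_iff (by positivity) (by positivity), har, hNr]
    field_simp; ring
  set D := EE (fun σ => |((I σ).card : ℝ) - (s:ℝ) ^ 2|) with hD
  have hD2 : D ^ 2 ≤ (s:ℝ) ^ 2 * t ^ 2 / (N - 1) := by
    have := EE_sq_le (fun σ => |((I σ).card : ℝ) - (s:ℝ) ^ 2|)
    simp only [sq_abs, hv2] at this
    exact this
  have hD0 : 0 ≤ D := EE_nonneg fun σ => abs_nonneg _
  have hDs : D ≤ s := by
    refine abs_le_of_sq_le_sq' (hD2.trans ?_) (by positivity) |>.2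
    rw [div_le_iff₀ hN1, hNr]; 
    refine mul_le_mul_of_nonneg_left ?_ (by positivity)
    nlinarith
  have hDt : D ≤ t := by
    refine abs_le_of_sq_le_sq' (hD2.trans ?_) (by positivity) |>.2
    rw [div_le_iff₀ hN1, hNr, mul_comm]
    refine mul_le_mul_of_nonneg_left ?_ (by positivity)
    nlinarith
  have f1 : eS k (s ^ 2) - 2 * k / s * D ≤ EE (fun σ => eS k (I σ).card) := by
    rw [← EE_const (n := N) (eS k (s ^ 2)), hD, ← EE_smul, ← EE_sub]
    exact EE_mono fun σ => eS_lower k _ hs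
  have f2 : eS k (t ^ 2) - 2 * k / t * D ≤ EE (fun σ => eS k (J σ).card) := by
    rw [← EE_const (n := N) (eS k (t ^ 2)), hD, ← EE_smul, ← EE_sub]
    refine EE_mono fun σ => ?_
    have := eS_lower k (J σ).card ht
    rwa [hY] at this
  have f3 : EE (fun σ => eS k (I σ).card) + EE (fun σ => eS k (J σ).card) ≤ eS k N := by
    rw [← hEI, ← hEJ, ← EE_add]
    refine EE_mono fun σ => ?_
    have := maxInc_blocks k σ (I σ) (J σ) (by
      intro i hi j hj
      have h1 := (mem_filter.1 hi).2
      have h2 := (mem_filter.1 hj).2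
      rw [Fin.lt_def, Fin.lt_def]
      omega)
    exact_mod_cast this
  have g1 : 2 * (k:ℝ) / s * D ≤ 2 * k := by
    rw [div_mul_eq_mul_div, div_le_iff₀ (by linarith)]; gcongr
  have g2 : 2 * (k:ℝ) / t * D ≤ 2 * k := by
    rw [div_mul_eq_mul_div, div_le_iff₀ (by linarith)]; gcongr
  linarith

lemma eS_sub (k : ℕ) : Subadditive (fun s : ℕ => 4 * k - eS k (s ^ 2)) := by
  intro s t
  rcases Nat.eq_zero_or_pos s with rfl | hs
  · simp [eS_zero]
  rcases Nat.eq_zero_or_pos t with rfl | ht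
  · simp [eS_zero]
  have := super_aux k s t hs ht
  simp only
  linarith

lemma eS_lim (k : ℕ) : ∃ c : ℝ, Tendsto (fun n : ℕ => eS k n / √(n:ℝ)) atTop (nhds c) := by
  have hb : BddBelow (Set.range fun s : ℕ => (4 * k - eS k (s ^ 2)) / (s:ℝ)) := by
    refine ⟨-(2 * k), ?_⟩
    rintro _ ⟨s, rfl⟩
    rcases Nat.eq_zero_or_pos s with rfl | hs
    · simp
    have hs' : (0:ℝ) < s := by exact_mod_cast hs
    have h := eS_le k (s ^ 2)
    push_cast at h
    rw [Real.sqrt_sq hs'.le] at h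
    simp only
    rw [le_div_iff₀ hs']
    have : (0:ℝ) ≤ k := by positivity
    linarith
  have h1 := (eS_sub k).tendsto_lim hb
  set l := (eS_sub k).lim
  have h2 : Tendsto (fun s : ℕ => eS k (s ^ 2) / (s:ℝ)) atTop (nhds (-l)) := by
    have h3 : Tendsto (fun s : ℕ => 4 * (k:ℝ) / (s:ℝ)) atTop (nhds 0) := tendsto_const_div_atTop_nhds_zero_nat _
    have := h3.sub h1
    rw [zero_sub] at this
    refine this.congr fun s => ?_
    ring
  refine ⟨-l, ?_⟩
  have hsq : Tendsto Nat.sqrt atTop atTop := by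
    refine tendsto_atTop.2 fun b => eventually_atTop.2 ⟨b * b, fun n hn => Nat.le_sqrt.2 hn⟩
  have h4 := h2.comp hsq
  have h5 : Tendsto (fun n : ℕ => ((Nat.sqrt n : ℕ):ℝ) / √(n:ℝ)) atTop (nhds 1) := by
    have lo : Tendsto (fun n : ℕ => 1 - 1 / √(n:ℝ)) atTop (nhds 1) := by
      have : Tendsto (fun n : ℕ => √(n:ℝ)) atTop atTop := Real.tendsto_sqrt_atTop.comp tendsto_natCast_atTop_atTop
      have := (this.const_div_atTop (1:ℝ)).const_sub 1
      simpa using this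
    refine tendsto_of_tendsto_of_tendsto_of_le_of_le' lo tendsto_const_nhds ?_ ?_
    · filter_upwards [eventually_gt_atTop 0] with n hn
      have hn' : (0:ℝ) < √(n:ℝ) := by positivity
      rw [sub_le_iff_le_add, ← add_div, le_div_iff₀ hn', one_mul]
      exact (Real.sqrt_le_iff.2 ⟨by positivity, by exact_mod_cast (Nat.lt_succ_sqrt' n).le⟩)
    · filter_upwards [eventually_gt_atTop 0] with n hn
      have hn' : (0:ℝ) < √(n:ℝ) := by positivity
      rw [div_le_one hn']
      exact Real.le_sqrt_of_sq_le (by exact_mod_cast Nat.sqrt_le' n)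
  have h6 := h4.mul h5
  rw [mul_one] at h6
  -- difference
  have h7 : Tendsto (fun n : ℕ => eS k n / √(n:ℝ) - ((fun s : ℕ => eS k (s ^ 2) / (s:ℝ)) ∘ Nat.sqrt) n *
      (((Nat.sqrt n : ℕ):ℝ) / √(n:ℝ))) atTop (nhds 0) := by
    have up : Tendsto (fun n : ℕ => 2 * (k:ℝ) * (1 - ((Nat.sqrt n : ℕ):ℝ) / √(n:ℝ))) atTop (nhds 0) := by
      have := (h5.const_sub 1).const_mul (2 * (k:ℝ))
      simpa using this
    refine tendsto_of_tendsto_of_tendsto_of_le_of_le' tendsto_const_nhds up ?_ ?_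
    all_goals
      filter_upwards [eventually_gt_atTop 0] with n hn
      have hn' : (0:ℝ) < √(n:ℝ) := by positivity
      have hq : (0:ℝ) < (Nat.sqrt n : ℕ) := by exact_mod_cast Nat.sqrt_pos.2 hn
      have e : eS k n / √(n:ℝ) - ((fun s : ℕ => eS k (s ^ 2) / (s:ℝ)) ∘ Nat.sqrt) n *
        (((Nat.sqrt n : ℕ):ℝ) / √(n:ℝ)) = (eS k n - eS k ((Nat.sqrt n) ^ 2)) / √(n:ℝ) := by
        simp only [Function.comp]; field_simp
      rw [e]
    · have := eS_mono k (Nat.sqrt_le' n)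
      exact div_nonneg (by linarith) hn'.le
    · have := eS_diff k (Nat.sqrt_le' n)
      push_cast at this
      rw [Real.sqrt_sq hq.le] at this
      rw [div_le_iff₀ hn']
      refine this.trans (le_of_eq ?_)
      field_simp
  have h8 := h7.add h6
  rw [zero_add] at h8
  refine h8.congr fun n => ?_
  ring


lemma Pn_mono {n : ℕ} {p q : Equiv.Perm (Fin n) → Prop} (h : ∀ σ, p σ → q σ) : Pn p ≤ Pn q := by
  rw [Pn_eq, Pn_eq]
  refine EE_mono fun σ => ?_
  by_cases hp : p σ
  · rw [if_pos hp, if_pos (h σ hp)]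
  · rw [if_neg hp]; split_ifs <;> norm_num

lemma Pn_nonneg {n : ℕ} (p : Equiv.Perm (Fin n) → Prop) : 0 ≤ Pn p := by
  rw [Pn_eq]; exact EE_nonneg fun σ => by split_ifs <;> norm_num

lemma Pn_le_one {n : ℕ} (p : Equiv.Perm (Fin n) → Prop) : Pn p ≤ 1 := by
  rw [Pn_eq]
  refine (EE_mono (g := fun _ => 1) fun σ => by split_ifs <;> norm_num).trans (EE_const 1).le

lemma Pn_markov {n : ℕ} (p : Equiv.Perm (Fin n) → Prop) (f : Equiv.Perm (Fin n) → ℝ) (c : ℝ) (hc : 0 < c)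
    (hf : ∀ σ, 0 ≤ f σ) (h : ∀ σ, p σ → c ≤ f σ) : Pn p ≤ EE f / c := by
  rw [Pn_eq, le_div_iff₀ hc, mul_comm, ← EE_smul]
  refine EE_mono fun σ => ?_
  by_cases hp : p σ
  · rw [if_pos hp, mul_one]; exact h σ hp
  · rw [if_neg hp, mul_zero]; exact hf σ

lemma Pn_exists_le {n : ℕ} {ι : Type*} (s : Finset ι) (p : ι → Equiv.Perm (Fin n) → Prop) :
    Pn (fun σ => ∃ i ∈ s, p i σ) ≤ ∑ i ∈ s, Pn (p i) := by
  simp only [Pn_eq]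
  rw [← EE_sum]
  refine EE_mono fun σ => ?_
  split_ifs with h
  · obtain ⟨i, hi, h⟩ := h
    have := single_le_sum (f := fun i => if p i σ then (1:ℝ) else 0) (fun i _ => by split_ifs <;> norm_num) hi
    simpa [h] using this
  · exact sum_nonneg fun i _ => by split_ifs <;> norm_num

lemma V_anti (k : ℕ) : Antitone (fun n => ∑ i ∈ range k, vR n i) := antitone_nat_of_succ_le fun n => vR_mono n k

lemma eS_add_le (k n M : ℕ) : eS k (n + M) - eS k n ≤ M * ∑ i ∈ range k, vR n i := by
  induction M with
  | zero => simp
  | succ M ih =>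
    have h := eS_succ k (n + M)
    have h2 := V_anti k (Nat.le_add_right n M)
    simp only at h2
    rw [← add_assoc]
    push_cast
    linarith

lemma sqrtn_atTop : Tendsto (fun n : ℕ => √(n:ℝ)) atTop atTop :=
  Real.tendsto_sqrt_atTop.comp tendsto_natCast_atTop_atTop

lemma V_lower (k : ℕ) (hc : Tendsto (fun n : ℕ => eS k n / √(n:ℝ)) atTop (nhds (2 * k))) (η : ℝ) (h0 : 0 < η) (h1 : η ≤ 1) :
    ∀ᶠ n : ℕ in atTop, k - (k + 4) * η ≤ √((n:ℝ) + 1) * ∑ i ∈ range k, vR n i := by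
  have hd : 2 * (k:ℝ) - η ^ 2 < 2 * k := by nlinarith
  obtain ⟨n0, hn0⟩ := eventually_atTop.1 (hc.eventually (lt_mem_nhds hd))
  obtain ⟨n1, hn1⟩ := exists_nat_gt (2 / η)
  filter_upwards [eventually_ge_atTop n0, eventually_ge_atTop n1, eventually_gt_atTop 0] with n hn hn' hpos
  set M := ⌊η * n⌋₊ with hM
  have hnr : (0:ℝ) < n := by exact_mod_cast hpos
  have hMle : (M:ℝ) ≤ η * n := Nat.floor_le (by positivity)
  have hη2 : 2 ≤ η * n := by
    have : (n1:ℝ) ≤ n := by exact_mod_cast hn'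
    have := (div_lt_iff₀ h0).1 hn1
    nlinarith
  have hMge : η * n / 2 ≤ M := by
    have := Nat.lt_floor_add_one (η * n)
    rw [← hM] at this; linarith
  have hMpos : (0:ℝ) < M := by linarith
  set V := ∑ i ∈ range k, vR n i with hV
  have hV0 : 0 ≤ V := sum_nonneg fun i _ => vR_nonneg n i
  have a1 := eS_add_le k n M
  have a2 := eS_le k n
  have a3 := (hn0 (n + M) (by omega)).le
  set x := √(n:ℝ) with hx
  set y := √((n + M : ℕ):ℝ) with hy
  have hx0 : 0 < x := by positivity
  have hx2 : x ^ 2 = n := Real.sq_sqrt hnr.le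
  have hy2 : y ^ 2 = n + M := by rw [hy, Real.sq_sqrt (by positivity)]; push_cast; rfl
  have hxy : x ≤ y := Real.sqrt_le_sqrt (by push_cast; linarith)
  have hy0 : 0 < y := by linarith
  rw [le_div_iff₀ hy0] at a3
  have hyx : y ≤ (1 + η / 2) * x := by
    refine abs_le_of_sq_le_sq' ?_ (by positivity) |>.2
    rw [mul_pow, hx2, hy2]; nlinarith
  have b1 : (2 * k) * (y - x) - η ^ 2 * y ≤ M * V := by rw [← hV] at a1; nlinarith
  have hMxy : (M:ℝ) = (y - x) * (y + x) := by nlinarith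
  -- (y-x) ≥ M/((2+η/2) x)
  have b2 : (M:ℝ) ≤ (y - x) * ((2 + η / 2) * x) := by
    rw [hMxy]; exact mul_le_mul_of_nonneg_left (by linarith) (by linarith)
  have b3 : η ^ 2 * y * x ≤ 3 * η * M := by
    have : y * x ≤ (1 + η / 2) * n := by rw [← hx2]; nlinarith
    have : η ^ 2 * (y * x) ≤ η ^ 2 * ((1 + η / 2) * n) := by gcongr
    have : η * ((1 + η / 2) * (η * n)) ≤ η * ((3 / 2) * (2 * M)) := by
      refine mul_le_mul_of_nonneg_left ?_ h0.le
      refine mul_le_mul (by linarith) (by linarith) (by positivity) (by norm_num)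
    nlinarith
  have b4 : k * M * (1 - η) ≤ 2 * k * ((y - x) * x) := by
    have hkk : (0:ℝ) ≤ k := by positivity
    have hz : 0 ≤ (y - x) * x := mul_nonneg (by linarith) hx0.le
    have : (1 - η) * M ≤ 2 * ((y - x) * x) := by
      have h3 : (1 - η) * M ≤ (1 - η) * ((y - x) * ((2 + η / 2) * x)) := mul_le_mul_of_nonneg_left b2 (by linarith)
      have h4 : (1 - η) * (2 + η / 2) ≤ 2 := by nlinarith
      have h5 := mul_le_mul_of_nonneg_right h4 hz
      calc _ ≤ _ := h3
        _ = (1 - η) * (2 + η / 2) * ((y - x) * x) := by ring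
        _ ≤ _ := h5
    have h6 := mul_le_mul_of_nonneg_left this hkk
    linarith
  have b5 : M * (k - (k + 3) * η) ≤ M * (x * V) := by
    have h6 := mul_le_mul_of_nonneg_left b1 hx0.le
    linarith
  have b6 := le_of_mul_le_mul_left b5 hMpos
  have : x * V ≤ √((n:ℝ) + 1) * V := mul_le_mul_of_nonneg_right (Real.sqrt_le_sqrt (by linarith)) hV0
  linarith

lemma v_lim (k : ℕ) (hc : Tendsto (fun n : ℕ => eS k n / √(n:ℝ)) atTop (nhds (2 * k))) (i : ℕ) (hi : i < k) :
    Tendsto (fun n : ℕ => √((n:ℝ) + 1) * vR n i) atTop (nhds 1) := by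
  refine tendsto_order.2 ⟨fun a ha => ?_, fun a ha => Eventually.of_forall fun n => (vR_le n i).trans_lt ha⟩
  set η : ℝ := min 1 ((1 - a) / (2 * (k + 4))) with hη
  have hk4 : (0:ℝ) < k + 4 := by positivity
  have h0 : 0 < η := lt_min one_pos (div_pos (by linarith) (by positivity))
  have h2 : (k + 4) * η ≤ (1 - a) / 2 := by
    have : η ≤ (1 - a) / (2 * (k + 4)) := min_le_right _ _
    calc (k + 4) * η ≤ (k + 4) * ((1 - a) / (2 * (k + 4))) := by gcongr
      _ = _ := by field_simp
  filter_upwards [V_lower k hc η h0 (min_le_left _ _)] with n hn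
  rw [← add_sum_erase _ _ (mem_range.2 hi), mul_add] at hn
  have : √((n:ℝ) + 1) * ∑ x ∈ (range k).erase i, vR n x ≤ k - 1 := by
    rw [mul_sum]
    refine (sum_le_card_nsmul _ _ 1 fun j _ => vR_le n j).trans ?_
    rw [card_erase_of_mem (mem_range.2 hi), card_range, nsmul_eq_mul, Nat.cast_sub (by omega)]
    simp
  linarith

lemma atoms_lim (k : ℕ) (hc : Tendsto (fun n : ℕ => eS k n / √(n:ℝ)) atTop (nhds (2 * k))) (i : ℕ) (hi : i < k) :
    Tendsto (fun n : ℕ => vR n i + 2 * √(2 * (1 - √((n:ℝ) + 1) * vR n i))) atTop (nhds 0) := by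
  have h1 := v_lim k hc i hi
  have h2 : Tendsto (fun n : ℕ => vR n i) atTop (nhds 0) := by
    have h3 : Tendsto (fun n : ℕ => √((n:ℝ) + 1)) atTop atTop := by
      have := sqrtn_atTop.comp (tendsto_add_atTop_nat 1)
      refine this.congr fun n => ?_
      simp
    have := h1.div_atTop h3
    refine this.congr fun n => ?_
    have : √((n:ℝ) + 1) ≠ 0 := by positivity
    field_simp
  have h4 := (((h1.const_sub 1).const_mul 2).sqrt).const_mul 2
  have := h2.add h4
  simpa using this

lemma hS_le (n : ℕ) : hS n ≤ 1 + Real.log n := by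
  have := harmonic_le_one_add_log n
  refine le_trans (le_of_eq ?_) this
  rw [hS, harmonic]; push_cast
  simp

lemma tail_lim (k : ℕ) (c : ℝ) (hc : Tendsto (fun n : ℕ => eS k n / √(n:ℝ)) atTop (nhds c)) (hck : c < 2 * k) (C : ℝ) :
    Tendsto (fun n : ℕ => Pn (fun σ : Equiv.Perm (Fin n) =>
      2 * k * √(n:ℝ) - C * (n:ℝ) ^ ((1:ℝ) / 6) ≤ (maxIncUnion k σ : ℝ))) atTop (nhds 0) := by
  set δ : ℝ := (2 * k - c) / 4 with hδ
  have hδ0 : 0 < δ := by rw [hδ]; linarith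
  have e1 : ∀ᶠ n : ℕ in atTop, eS k n / √(n:ℝ) < 2 * k - 3 * δ :=
    hc.eventually (gt_mem_nhds (by rw [hδ]; linarith))
  have e2 : Tendsto (fun n : ℕ => C * ((n:ℝ) ^ ((1:ℝ) / 6) / √(n:ℝ))) atTop (nhds 0) := by
    have h : Tendsto (fun n : ℕ => (n:ℝ) ^ (-((1:ℝ) / 3))) atTop (nhds 0) :=
      (tendsto_rpow_neg_atTop (by norm_num)).comp tendsto_natCast_atTop_atTop
    have := h.const_mul C
    rw [mul_zero] at this
    refine this.congr' ?_
    filter_upwards [eventually_gt_atTop 0] with n hn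
    have hn' : (0:ℝ) < n := by exact_mod_cast hn
    rw [Real.sqrt_eq_rpow, ← Real.rpow_sub hn']
    norm_num
  have e3 : ∀ᶠ n : ℕ in atTop, C * ((n:ℝ) ^ ((1:ℝ) / 6) / √(n:ℝ)) < δ := e2.eventually (gt_mem_nhds hδ0)
  have e4 : Tendsto (fun n : ℕ => (4 * k / δ ^ 2) * ((2 + Real.log n) / √(n:ℝ))) atTop (nhds 0) := by
    have h1 : Tendsto (fun n : ℕ => Real.log n / √(n:ℝ)) atTop (nhds 0) := by
      have := (isLittleO_log_rpow_atTop (r := 1 / 2) (by norm_num)).tendsto_div_nhds_zero.comp (tendsto_natCast_atTop_atTop (R := ℝ))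
      refine this.congr fun n => ?_
      simp [Real.sqrt_eq_rpow]
    have h2 := (sqrtn_atTop.const_div_atTop (2:ℝ)).add h1
    have := h2.const_mul (4 * k / δ ^ 2 : ℝ)
    simp only [add_zero, mul_zero] at this
    refine this.congr fun n => ?_
    ring
  refine tendsto_of_tendsto_of_tendsto_of_le_of_le' tendsto_const_nhds e4 (Eventually.of_forall fun n => Pn_nonneg _) ?_
  filter_upwards [e1, e3, eventually_gt_atTop 0] with n h1 h3 hn
  have hn' : (0:ℝ) < n := by exact_mod_cast hn
  have hs : 0 < √(n:ℝ) := by positivity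
  rw [div_lt_iff₀ hs] at h1
  have h3' : C * (n:ℝ) ^ ((1:ℝ) / 6) < δ * √(n:ℝ) := by
    rw [← mul_div_assoc, div_lt_iff₀ hs] at h3; exact h3
  refine (Pn_markov _ (fun σ => ((maxIncUnion k σ : ℝ) - eS k n) ^ 2) ((δ * √(n:ℝ)) ^ 2) (by positivity)
    (fun σ => sq_nonneg _) fun σ hσ => ?_).trans ?_
  · refine pow_le_pow_left₀ (by positivity) ?_ 2
    nlinarith
  · rw [div_le_iff₀ (by positivity)]
    refine (var_S k n).trans ?_
    have a1 := hS_le n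
    have a2 := eS_le k n
    have a3 := eS_nonneg k n
    have a4 := hS_nonneg n
    have hss := Real.sq_sqrt hn'.le
    calc 2 * (1 + hS n) * eS k n ≤ 2 * (2 + Real.log n) * (2 * k * √(n:ℝ)) := by
          refine mul_le_mul (by linarith) a2 a3 (by linarith)
      _ = 4 * k / δ ^ 2 * ((2 + Real.log n) / √(n:ℝ)) * (δ * √(n:ℝ)) ^ 2 := by
          field_simp
          ring


noncomputable def XX {n : ℕ} (A B : Finset (Fin n)) (σ : Equiv.Perm (Fin n)) : Finset (Fin n × Fin n) :=
  (A ×ˢ B).filter fun p => σ p.1 = p.2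

lemma mem_XX {n : ℕ} {A B : Finset (Fin n)} {σ : Equiv.Perm (Fin n)} {i j : Fin n} :
    (i, j) ∈ XX A B σ ↔ i ∈ A ∧ j ∈ B ∧ σ i = j := by
  simp [XX, and_assoc]

noncomputable def WW {n : ℕ} (A B : Finset (Fin n)) (x : Finset (Fin n × Fin n)) : Finset (Equiv.Perm (Fin n)) :=
  univ.filter fun σ => XX A B σ = x

lemma mem_WW {n : ℕ} {A B : Finset (Fin n)} {x : Finset (Fin n × Fin n)} {σ : Equiv.Perm (Fin n)} :
    σ ∈ WW A B x ↔ XX A B σ = x := by simp [WW]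

noncomputable def good {n : ℕ} (A B : Finset (Fin n)) (σ : Equiv.Perm (Fin n)) : Finset (Fin n) :=
  univ.filter fun d => d ∉ A ∧ σ d ∉ B

lemma card_XX {n : ℕ} (A B : Finset (Fin n)) (σ : Equiv.Perm (Fin n)) :
    (XX A B σ).card = (A.filter fun i => σ i ∈ B).card := by
  refine card_bij' (fun p _ => p.1) (fun i _ => (i, σ i)) ?_ ?_ ?_ ?_
  · rintro ⟨i, j⟩ h
    obtain ⟨h1, h2, rfl⟩ := mem_XX.1 h
    exact mem_filter.2 ⟨h1, h2⟩
  · intro i hi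
    obtain ⟨h1, h2⟩ := mem_filter.1 hi
    exact mem_XX.2 ⟨h1, h2, rfl⟩
  · rintro ⟨i, j⟩ h
    obtain ⟨h1, h2, rfl⟩ := mem_XX.1 h
    rfl
  · intro i _; rfl

lemma card_good {n : ℕ} (A B : Finset (Fin n)) (σ : Equiv.Perm (Fin n)) :
    (good A B σ).card + A.card + B.card = n + (XX A B σ).card := by
  have h1 : (univ.filter fun i => σ i ∈ B).card = B.card := by
    refine card_bij' (fun i _ => σ i) (fun i _ => σ.symm i) ?_ ?_ ?_ ?_
    · intro i hi; exact (mem_filter.1 hi).2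
    · intro i hi; exact mem_filter.2 ⟨mem_univ _, by simpa using hi⟩
    · intro i _; simp
    · intro i _; simp
  have h2 := card_union_add_card_inter A (univ.filter fun i => σ i ∈ B)
  have h3 : A ∩ (univ.filter fun i => σ i ∈ B) = A.filter fun i => σ i ∈ B := by
    ext i; simp
  have h4 : good A B σ = (A ∪ (univ.filter fun i => σ i ∈ B))ᶜ := by
    ext i; simp [good]
  rw [h4, card_compl, Fintype.card_fin, card_XX]
  have h5 := card_le_univ (A ∪ (univ.filter fun i => σ i ∈ B))
  rw [Fintype.card_fin] at h5
  rw [h3, h1] at h2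
  omega

lemma switch_sum {n : ℕ} (A B : Finset (Fin n)) (x : Finset (Fin n × Fin n)) (a b : Fin n) (hab : (a, b) ∈ x)
    (σ₁ : Equiv.Perm (Fin n)) (h₁ : σ₁ ∈ WW A B x) (h : Equiv.Perm (Fin n) → ℝ) :
    ∑ ρ ∈ WW A B (x.erase (a, b)), h ρ = ∑ σ ∈ WW A B x, ∑ d ∈ good A B σ, h (σ * Equiv.swap a d) := by
  rw [mem_WW] at h₁
  have hx : ∀ {i j}, (i, j) ∈ x ↔ i ∈ A ∧ j ∈ B ∧ σ₁ i = j := by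
    intro i j; rw [← h₁]; exact mem_XX
  obtain ⟨haA, hbB, hσab⟩ := hx.1 hab
  rw [sum_sigma']
  symm
  refine sum_bij' (fun p _ => p.1 * Equiv.swap a p.2) (fun ρ _ => ⟨ρ * Equiv.swap a (ρ⁻¹ b), ρ⁻¹ b⟩) ?_ ?_ ?_ ?_ ?_
  · rintro ⟨σ, d⟩ hp
    obtain ⟨h1, h2⟩ := mem_sigma.1 hp
    obtain ⟨hdA, hdB⟩ := (mem_filter.1 h2).2
    rw [mem_WW] at h1 ⊢
    have hx2 : ∀ {i j}, (i, j) ∈ x ↔ i ∈ A ∧ j ∈ B ∧ σ i = j := by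
      intro i j; rw [← h1]; exact mem_XX
    ext ⟨i, j⟩
    rw [mem_XX, mem_erase, hx2]
    by_cases hia : i = a
    · subst hia
      have e : (σ * Equiv.swap i d) i = σ d := by simp
      simp only at e ⊢
      rw [e]
      constructor
      · rintro ⟨_, h3, rfl⟩; exact absurd h3 hdB
      · rintro ⟨h3, _, _, h5⟩
        exact absurd (by rw [← h5, (hx2.1 hab).2.2]) h3
    · have hne : (i, j) ≠ (a, b) := fun e => hia (congrArg Prod.fst e)
      constructor
      · rintro ⟨h3, h4, h5⟩
        have hid : i ≠ d := by rintro rfl; exact hdA h3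
        rw [Equiv.Perm.mul_apply, Equiv.swap_apply_of_ne_of_ne hia hid] at h5
        exact ⟨hne, h3, h4, h5⟩
      · rintro ⟨_, h3, h4, h5⟩
        have hid : i ≠ d := by rintro rfl; exact hdA h3
        refine ⟨h3, h4, ?_⟩
        rw [Equiv.Perm.mul_apply, Equiv.swap_apply_of_ne_of_ne hia hid]
        exact h5
  · intro ρ hρ
    rw [mem_WW] at hρ
    have hx2 : ∀ {i j}, ((i, j) ≠ (a, b) ∧ (i, j) ∈ x) ↔ i ∈ A ∧ j ∈ B ∧ ρ i = j := by
      intro i j; rw [← mem_erase, ← hρ]; exact mem_XX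
    set d := ρ⁻¹ b with hd
    have hρd : ρ d = b := by simp [hd]
    have hdA : d ∉ A := by
      intro hdA
      obtain ⟨h3, h4⟩ := hx2.2 ⟨hdA, hbB, hρd⟩
      have := (hx.1 h4).2.2
      have := σ₁.injective (this.trans hσab.symm)
      exact h3 (by rw [this])
    have haB : ρ a ∉ B := by
      intro haB
      obtain ⟨h3, h4⟩ := hx2.2 ⟨haA, haB, rfl⟩
      have := (hx.1 h4).2.2
      exact h3 (by rw [← this, hσab])
    rw [mem_sigma]
    refine ⟨?_, ?_⟩
    · simp only [mem_WW]
      ext ⟨i, j⟩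
      rw [mem_XX]
      by_cases hia : i = a
      · subst hia
        rw [Equiv.Perm.mul_apply, Equiv.swap_apply_left, hρd, hx, hσab]
      · have hne : (i, j) ≠ (a, b) := fun e => hia (congrArg Prod.fst e)
        have : (i, j) ∈ x ↔ i ∈ A ∧ j ∈ B ∧ ρ i = j := by rw [← hx2]; tauto
        rw [this]
        refine and_congr_right fun h3 => ?_
        have hid : i ≠ d := by rintro rfl; exact hdA h3
        rw [Equiv.Perm.mul_apply, Equiv.swap_apply_of_ne_of_ne hia hid]
    · simp only [good, mem_filter, mem_univ, true_and]
      refine ⟨hdA, ?_⟩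
      rw [Equiv.Perm.mul_apply, Equiv.swap_apply_right]
      exact haB
  · rintro ⟨σ, d⟩ hp
    obtain ⟨h1, h2⟩ := mem_sigma.1 hp
    rw [mem_WW] at h1
    have hx2 : (a, b) ∈ XX A B σ := by rw [h1]; exact hab
    have e : σ a = b := (mem_XX.1 hx2).2.2
    have e2 : (σ * Equiv.swap a d)⁻¹ b = d := by
      rw [Equiv.Perm.inv_eq_iff_eq]; simp [e]
    simp only [e2, mul_assoc, Equiv.swap_mul_self, mul_one]
  · intro ρ hρ
    simp only [mul_assoc, Equiv.swap_mul_self, mul_one]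
  · rintro ⟨σ, d⟩ _; rfl

def UU {n : ℕ} (F : Equiv.Perm (Fin n) → Prop) (σ : Equiv.Perm (Fin n)) : Prop :=
  ∃ i j, F (σ * Equiv.swap i j)

lemma UU_self {n : ℕ} {F : Equiv.Perm (Fin n) → Prop} {σ : Equiv.Perm (Fin n)} (hn : 0 < n) (h : F σ) : UU F σ :=
  ⟨⟨0, hn⟩, ⟨0, hn⟩, by rw [Equiv.swap_self]; exact h⟩

lemma UU_iter_mono {n : ℕ} (hn : 0 < n) {F : Equiv.Perm (Fin n) → Prop} {r R : ℕ} (h : r ≤ R)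
    (σ : Equiv.Perm (Fin n)) (hs : UU^[r] F σ) : UU^[R] F σ := by
  induction R, h using Nat.le_induction with
  | base => exact hs
  | succ R _ ih => rw [Function.iterate_succ_apply']; exact UU_self hn ih

noncomputable def wF {n : ℕ} (A B : Finset (Fin n)) (x : Finset (Fin n × Fin n)) (F : Equiv.Perm (Fin n) → Prop) : ℝ :=
  ∑ σ ∈ WW A B x, if F σ then 1 else 0

lemma wF_mono {n : ℕ} (A B : Finset (Fin n)) (x : Finset (Fin n × Fin n)) {F G : Equiv.Perm (Fin n) → Prop}
    (h : ∀ σ, F σ → G σ) : wF A B x F ≤ wF A B x G := by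
  refine sum_le_sum fun σ _ => ?_
  by_cases hp : F σ
  · rw [if_pos hp, if_pos (h σ hp)]
  · rw [if_neg hp]; split_ifs <;> norm_num

lemma wF_not {n : ℕ} (A B : Finset (Fin n)) (x : Finset (Fin n × Fin n)) (F : Equiv.Perm (Fin n) → Prop) :
    wF A B x (fun σ => ¬ F σ) = (WW A B x).card - wF A B x F := by
  rw [eq_sub_iff_add_eq, wF, wF, ← sum_add_distrib, sum_congr rfl (g := fun _ => (1:ℝ))]
  · simp
  · intro σ _; by_cases h : F σ <;> simp [h]

lemma wF_step {n : ℕ} (A B : Finset (Fin n)) (hn : A.card + B.card < n) (x : Finset (Fin n × Fin n)) (a b : Fin n)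
    (hab : (a, b) ∈ x) (h₁ : (WW A B x).Nonempty) (F : Equiv.Perm (Fin n) → Prop) :
    (WW A B (x.erase (a, b))).Nonempty ∧
    wF A B (x.erase (a, b)) F * (WW A B x).card ≤ wF A B x (UU F) * (WW A B (x.erase (a, b))).card := by
  obtain ⟨σ₁, h₁⟩ := h₁
  have hs := switch_sum A B x a b hab σ₁ h₁
  set c : ℝ := (n:ℝ) + x.card - A.card - B.card with hc
  have hc0 : 0 < c := by
    have : (A.card : ℝ) + B.card < n := by exact_mod_cast hn
    rw [hc]; have : (0:ℝ) ≤ x.card := by positivity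
    linarith
  have hg : ∀ σ ∈ WW A B x, ((good A B σ).card : ℝ) = c := by
    intro σ hσ
    have h := card_good A B σ
    rw [mem_WW.1 hσ] at h
    have h' : ((good A B σ).card : ℝ) + A.card + B.card = n + x.card := by exact_mod_cast h
    rw [hc]; linarith
  have h1 : ((WW A B (x.erase (a, b))).card : ℝ) = (WW A B x).card * c := by
    have := hs (fun _ => 1)
    simp only [sum_const, nsmul_eq_mul, mul_one] at this
    rw [this, sum_congr rfl hg, sum_const, nsmul_eq_mul]
  have hpos : (0:ℝ) < (WW A B x).card := by exact_mod_cast card_pos.2 ⟨σ₁, h₁⟩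
  refine ⟨?_, ?_⟩
  · rw [← card_pos]
    have : (0:ℝ) < (WW A B (x.erase (a, b))).card := by rw [h1]; positivity
    exact_mod_cast this
  have h2 : wF A B (x.erase (a, b)) F ≤ wF A B x (UU F) * c := by
    rw [wF, hs, wF, sum_mul]
    refine sum_le_sum fun σ hσ => ?_
    by_cases hu : UU F σ
    · rw [if_pos hu, one_mul, ← hg σ hσ, sum_boole]
      exact_mod_cast card_filter_le _ _
    · rw [if_neg hu, zero_mul]
      refine le_of_eq (sum_eq_zero fun d _ => if_neg fun h => hu ⟨a, d, h⟩)
  rw [h1]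
  calc _ ≤ wF A B x (UU F) * c * (WW A B x).card := by gcongr
    _ = _ := by ring

lemma wF_chain {n : ℕ} (A B : Finset (Fin n)) (hn : A.card + B.card < n) (F : Equiv.Perm (Fin n) → Prop) :
    ∀ (r : ℕ) (x : Finset (Fin n × Fin n)), x.card = r → (WW A B x).Nonempty → (WW A B ∅).Nonempty ∧
    wF A B ∅ F * (WW A B x).card ≤ wF A B x (UU^[r] F) * (WW A B ∅).card := by
  intro r
  induction r with
  | zero =>
    intro x hx h
    rw [card_eq_zero] at hx
    subst hx
    exact ⟨h, le_rfl⟩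
  | succ r ih =>
    intro x hx h
    obtain ⟨⟨a, b⟩, hab⟩ : x.Nonempty := card_pos.1 (by omega)
    obtain ⟨hne, _⟩ := wF_step A B hn x a b hab h F
    obtain ⟨h0, h1⟩ := ih (x.erase (a, b)) (by rw [card_erase_of_mem hab]; omega) hne
    obtain ⟨_, h2⟩ := wF_step A B hn x a b hab h (UU^[r] F)
    refine ⟨h0, ?_⟩
    rw [Function.iterate_succ_apply']
    have p1 : (0:ℝ) < (WW A B (x.erase (a, b))).card := by exact_mod_cast card_pos.2 hne
    refine le_of_mul_le_mul_right ?_ p1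
    calc wF A B ∅ F * (WW A B x).card * (WW A B (x.erase (a, b))).card
        = (wF A B ∅ F * (WW A B (x.erase (a, b))).card) * (WW A B x).card := by ring
      _ ≤ (wF A B (x.erase (a, b)) (UU^[r] F) * (WW A B ∅).card) * (WW A B x).card := by gcongr
      _ = (wF A B (x.erase (a, b)) (UU^[r] F) * (WW A B x).card) * (WW A B ∅).card := by ring
      _ ≤ (wF A B x (UU (UU^[r] F)) * (WW A B (x.erase (a, b))).card) * (WW A B ∅).card := by gcongr
      _ = _ := by ring

def GG {n : ℕ} (R : ℕ) (F : Equiv.Perm (Fin n) → Prop) (σ : Equiv.Perm (Fin n)) : Prop :=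
  UU^[R] F σ ∧ UU^[R] (fun σ => ¬ F σ) σ

lemma wF_mid {n : ℕ} (A B : Finset (Fin n)) (hn : A.card + B.card < n) (F : Equiv.Perm (Fin n) → Prop) (R : ℕ)
    (x : Finset (Fin n × Fin n)) (hx : x.card ≤ R) :
    |wF A B x F - wF A B ∅ F / (WW A B ∅).card * (WW A B x).card| ≤ wF A B x (GG R F) := by
  have hn0 : 0 < n := by omega
  rcases (WW A B x).eq_empty_or_nonempty with he | hne
  · simp [wF, he]
  obtain ⟨h0, h1⟩ := wF_chain A B hn F _ x rfl hne
  obtain ⟨_, h2⟩ := wF_chain A B hn (fun σ => ¬ F σ) _ x rfl hne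
  have p0 : (0:ℝ) < (WW A B ∅).card := by exact_mod_cast card_pos.2 h0
  have q1 : wF A B ∅ F / (WW A B ∅).card * (WW A B x).card ≤ wF A B x (UU^[R] F) := by
    rw [div_mul_eq_mul_div, div_le_iff₀ p0]
    refine h1.trans (mul_le_mul_of_nonneg_right (wF_mono A B x fun σ => UU_iter_mono hn0 hx σ) p0.le)
  have q2 : (1 - wF A B ∅ F / (WW A B ∅).card) * (WW A B x).card ≤ wF A B x (UU^[R] (fun σ => ¬ F σ)) := by
    have e : (1 - wF A B ∅ F / (WW A B ∅).card) = wF A B ∅ (fun σ => ¬ F σ) / (WW A B ∅).card := by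
      rw [wF_not]; field_simp
    rw [e, div_mul_eq_mul_div, div_le_iff₀ p0]
    refine h2.trans (mul_le_mul_of_nonneg_right (wF_mono A B x fun σ => UU_iter_mono hn0 hx σ) p0.le)
  have q3 : wF A B x (UU^[R] F) ≤ wF A B x F + wF A B x (GG R F) := by
    rw [wF, wF, wF, ← sum_add_distrib]
    refine sum_le_sum fun σ _ => ?_
    by_cases hF : F σ
    · rw [if_pos hF]
      have : (0:ℝ) ≤ if GG R F σ then 1 else 0 := by split_ifs <;> norm_num
      have : (if UU^[R] F σ then (1:ℝ) else 0) ≤ 1 := by split_ifs <;> norm_num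
      linarith
    · rw [if_neg hF, zero_add]
      by_cases hU : UU^[R] F σ
      · rw [if_pos hU, if_pos]
        exact ⟨hU, UU_iter_mono hn0 (Nat.zero_le R) σ hF⟩
      · rw [if_neg hU]; split_ifs <;> norm_num
  have q4 : wF A B x (UU^[R] (fun σ => ¬ F σ)) ≤ wF A B x (fun σ => ¬ F σ) + wF A B x (GG R F) := by
    rw [wF, wF, wF, ← sum_add_distrib]
    refine sum_le_sum fun σ _ => ?_
    by_cases hF : F σ
    · rw [if_neg (not_not.2 hF), zero_add]
      by_cases hU : UU^[R] (fun σ => ¬ F σ) σ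
      · rw [if_pos hU, if_pos]
        exact ⟨UU_iter_mono hn0 (Nat.zero_le R) σ hF, hU⟩
      · rw [if_neg hU]; split_ifs <;> norm_num
    · rw [if_pos hF]
      have : (0:ℝ) ≤ if GG R F σ then 1 else 0 := by split_ifs <;> norm_num
      have : (if UU^[R] (fun σ => ¬ F σ) σ then (1:ℝ) else 0) ≤ 1 := by split_ifs <;> norm_num
      linarith
  rw [wF_not] at q4
  rw [abs_le]
  constructor <;> linarith

lemma wF_total {n : ℕ} (A B : Finset (Fin n)) (D : Finset (Fin n × Fin n) → Prop) (F : Equiv.Perm (Fin n) → Prop) :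
    ∑ x ∈ univ.filter D, wF A B x F = Pn (fun σ => D (XX A B σ) ∧ F σ) * (n.factorial : ℝ) := by
  rw [Pn_eq, EE, div_mul_cancel₀ _ (fact_pos' n).ne', ← sum_fiberwise (s := univ) (g := XX A B), sum_filter]
  refine sum_congr rfl fun x _ => ?_
  split_ifs with hD
  · refine sum_congr rfl fun σ hσ => ?_
    rw [mem_WW.1 hσ]; simp [hD]
  · symm
    refine sum_eq_zero fun σ hσ => ?_
    rw [(mem_filter.1 hσ).2]; simp [hD]

lemma Pn_mid {n : ℕ} (A B : Finset (Fin n)) (hn : A.card + B.card < n) (F : Equiv.Perm (Fin n) → Prop) (R : ℕ) :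
    ∃ q : ℝ, 0 ≤ q ∧ q ≤ 1 ∧ ∀ D : Finset (Fin n × Fin n) → Prop, (∀ x, D x → x.card ≤ R) →
    |Pn (fun σ => D (XX A B σ) ∧ F σ) - q * Pn (fun σ => D (XX A B σ))| ≤ Pn (GG R F) := by
  have w0 : 0 ≤ wF A B ∅ F := sum_nonneg fun σ _ => by split_ifs <;> norm_num
  refine ⟨wF A B ∅ F / (WW A B ∅).card, by positivity, ?_, ?_⟩
  · refine div_le_one_of_le₀ ?_ (by positivity)
    have := wF_mono A B ∅ (F := F) (G := fun _ => True) fun _ _ => trivial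
    refine this.trans (le_of_eq ?_)
    simp [wF]
  intro D hD
  have h1 := wF_total A B D F
  have h2 := wF_total A B D (fun _ => True)
  have h3 := wF_total A B D (GG R F)
  simp only [and_true] at h2
  have h4 : ∀ x, wF A B x (fun _ => True) = (WW A B x).card := fun x => by simp [wF]
  simp only [h4] at h2
  have hf := fact_pos' n
  have h5 : |∑ x ∈ univ.filter D, (wF A B x F - wF A B ∅ F / (WW A B ∅).card * (WW A B x).card)| ≤
      ∑ x ∈ univ.filter D, wF A B x (GG R F) :=
    (abs_sum_le_sum_abs _ _).trans (sum_le_sum fun x hx => wF_mid A B hn F R x (hD x (mem_filter.1 hx).2))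
  rw [sum_sub_distrib, ← mul_sum, h1, h2, h3, ← mul_assoc, ← sub_mul, abs_mul, abs_of_pos hf] at h5
  refine (le_of_mul_le_mul_right h5 hf).trans (Pn_mono fun σ h => h.2)

lemma Pn_split {n : ℕ} (p q : Equiv.Perm (Fin n) → Prop) :
    Pn p = Pn (fun σ => q σ ∧ p σ) + Pn (fun σ => ¬ q σ ∧ p σ) := by
  rw [Pn_eq, Pn_eq, Pn_eq, ← EE_add]
  congr 1
  funext σ
  by_cases h1 : p σ <;> by_cases h2 : q σ <;> simp [h1, h2]

lemma indep_bound {n : ℕ} (A B : Finset (Fin n)) (hn : A.card + B.card < n) (E F : Equiv.Perm (Fin n) → Prop) (R : ℕ)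
    (hE : ∀ σ τ, XX A B σ = XX A B τ → E σ → E τ) :
    |Pn (fun σ => E σ ∧ F σ) - Pn E * Pn F| ≤ 2 * Pn (GG R F) + 4 * Pn (fun σ => ¬ (XX A B σ).card ≤ R) := by
  obtain ⟨q, hq0, hq1, hq⟩ := Pn_mid A B hn F R
  set D : Finset (Fin n × Fin n) → Prop := fun x => x.card ≤ R ∧ ∃ σ, XX A B σ = x ∧ E σ with hD
  have hDE : ∀ σ, D (XX A B σ) ↔ (XX A B σ).card ≤ R ∧ E σ := by
    intro σ
    constructor
    · rintro ⟨h1, τ, h2, h3⟩; exact ⟨h1, hE τ σ h2 h3⟩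
    · rintro ⟨h1, h2⟩; exact ⟨h1, σ, rfl, h2⟩
  have a1 := hq D (fun x h => h.1)
  have a2 := hq (fun x => x.card ≤ R) (fun x h => h)
  simp only [hDE, and_assoc] at a1
  set t := Pn (fun σ : Equiv.Perm (Fin n) => ¬ (XX A B σ).card ≤ R) with ht
  set g := Pn (GG R F)
  have s1 := Pn_split (fun σ => E σ ∧ F σ) (fun σ => (XX A B σ).card ≤ R)
  have s2 := Pn_split E (fun σ => (XX A B σ).card ≤ R)
  have s3 := Pn_split F (fun σ => (XX A B σ).card ≤ R)
  have s4 := Pn_split (fun _ : Equiv.Perm (Fin n) => True) (fun σ => (XX A B σ).card ≤ R)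
  have s5 : Pn (fun _ : Equiv.Perm (Fin n) => True) = 1 := by rw [Pn_eq]; simp [EE_const]
  simp only [and_true] at s4
  rw [s5, ← ht] at s4
  have b1 : Pn (fun σ => ¬ (XX A B σ).card ≤ R ∧ E σ ∧ F σ) ≤ t := Pn_mono fun σ h => h.1
  have b2 : Pn (fun σ => ¬ (XX A B σ).card ≤ R ∧ E σ) ≤ t := Pn_mono fun σ h => h.1
  have b3 : Pn (fun σ => ¬ (XX A B σ).card ≤ R ∧ F σ) ≤ t := Pn_mono fun σ h => h.1
  have c1 := Pn_nonneg (fun σ => ¬ (XX A B σ).card ≤ R ∧ E σ ∧ F σ)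
  have c2 := Pn_nonneg (fun σ => ¬ (XX A B σ).card ≤ R ∧ E σ)
  have c3 := Pn_nonneg (fun σ => ¬ (XX A B σ).card ≤ R ∧ F σ)
  have c4 := Pn_nonneg (GG R F)
  have e0 := Pn_nonneg E
  have e1 := Pn_le_one E
  rw [abs_le] at a1 a2
  -- P(F) within g + 2 t of q
  have f1 : |Pn F - q| ≤ g + 2 * t := by
    rw [abs_le]; constructor <;> nlinarith
  have f2 : |Pn (fun σ => E σ ∧ F σ) - q * Pn E| ≤ g + 2 * t := by
    rw [abs_le]; constructor <;> nlinarith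
  have f3 : |Pn E * (Pn F - q)| ≤ g + 2 * t := by
    rw [abs_mul, abs_of_nonneg e0]
    refine le_trans (mul_le_of_le_one_left (abs_nonneg _) e1) f1
  rw [abs_le] at f2 f3 ⊢
  constructor <;> linarith [f2.1, f2.2, f3.1, f3.2]


lemma maxDec_eq {n : ℕ} (j : ℕ) (σ : Equiv.Perm (Fin n)) : maxDecUnion j σ = maxIncUnion j (Fin.revPerm * σ) := by
  unfold maxDecUnion maxIncUnion
  congr 1
  funext c
  have : (∀ t : Fin j, StrictAntiOn (fun i => σ i) ((c t : Finset (Fin n)) : Set (Fin n))) ↔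
      ∀ t : Fin j, StrictMonoOn (fun i => (Fin.revPerm * σ : Equiv.Perm (Fin n)) i) ((c t : Finset (Fin n)) : Set (Fin n)) := by
    refine forall_congr' fun t => ?_
    constructor
    · intro h a ha b hb hab
      simpa using h ha hb hab
    · intro h a ha b hb hab
      simpa using h ha hb hab
  simp only [this]

lemma colLen_eq {n : ℕ} (j : ℕ) (σ : Equiv.Perm (Fin n)) : colLen j σ = rowLen j (Fin.revPerm * σ) := by
  rw [colLen, rowLen, maxDec_eq, maxDec_eq]

lemma maxInc_swap {n : ℕ} (k : ℕ) (σ : Equiv.Perm (Fin n)) (i j : Fin n) :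
    maxIncUnion k σ ≤ maxIncUnion k (σ * Equiv.swap i j) + 2 := by
  refine (cert_spec k σ (σ * Equiv.swap i j)).trans (Nat.add_le_add_left ?_ _)
  refine le_trans (card_le_card (t := {i, j}) ?_) card_le_two
  intro x hx
  have h := (mem_filter.1 hx).2
  rw [mem_insert, mem_singleton]
  by_contra hne
  push Not at hne
  exact h (by rw [Equiv.Perm.mul_apply, Equiv.swap_apply_of_ne_of_ne hne.1 hne.2])

lemma row_swap {n : ℕ} (k : ℕ) (σ : Equiv.Perm (Fin n)) (i j : Fin n) :
    |(rowLen (k + 1) (σ * Equiv.swap i j) : ℝ) - rowLen (k + 1) σ| ≤ 4 := by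
  have h1 := maxInc_swap k σ i j
  have h2 := maxInc_swap (k + 1) σ i j
  have h3 := maxInc_swap k (σ * Equiv.swap i j) i j
  have h4 := maxInc_swap (k + 1) (σ * Equiv.swap i j) i j
  rw [mul_assoc, Equiv.swap_mul_self, mul_one] at h3 h4
  have e1 : maxIncUnion (k + 1) σ = maxIncUnion k σ + rowLen (k + 1) σ := by
    rw [rowLen_eq, maxInc_eq, maxInc_eq, sum_range_succ]
  have e2 : maxIncUnion (k + 1) (σ * Equiv.swap i j) = maxIncUnion k (σ * Equiv.swap i j) +
      rowLen (k + 1) (σ * Equiv.swap i j) := by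
    rw [rowLen_eq, maxInc_eq, maxInc_eq, sum_range_succ]
  have g1 : rowLen (k + 1) (σ * Equiv.swap i j) ≤ rowLen (k + 1) σ + 4 := by omega
  have g2 : rowLen (k + 1) σ ≤ rowLen (k + 1) (σ * Equiv.swap i j) + 4 := by omega
  have g1' : (rowLen (k + 1) (σ * Equiv.swap i j) : ℝ) ≤ rowLen (k + 1) σ + 4 := by exact_mod_cast g1
  have g2' : (rowLen (k + 1) σ : ℝ) ≤ rowLen (k + 1) (σ * Equiv.swap i j) + 4 := by exact_mod_cast g2
  rw [abs_le]; constructor <;> linarith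

lemma col_swap {n : ℕ} (k : ℕ) (σ : Equiv.Perm (Fin n)) (i j : Fin n) :
    |(colLen (k + 1) (σ * Equiv.swap i j) : ℝ) - colLen (k + 1) σ| ≤ 4 := by
  rw [colLen_eq, colLen_eq, ← mul_assoc]; exact row_swap k _ i j

lemma UU_iter_dist {n : ℕ} {F : Equiv.Perm (Fin n) → Prop} (R : ℕ) (σ : Equiv.Perm (Fin n)) (h : UU^[R] F σ) :
    ∃ ρ, F ρ ∧ ∀ k, |(rowLen (k + 1) ρ : ℝ) - rowLen (k + 1) σ| ≤ 4 * R ∧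
      |(colLen (k + 1) ρ : ℝ) - colLen (k + 1) σ| ≤ 4 * R := by
  induction R generalizing σ with
  | zero => exact ⟨σ, h, fun k => by simp⟩
  | succ R ih =>
    rw [Function.iterate_succ_apply'] at h
    obtain ⟨i, j, h⟩ := h
    obtain ⟨ρ, hρ, h2⟩ := ih _ h
    refine ⟨ρ, hρ, fun k => ?_⟩
    have a1 := row_swap k σ i j
    have a2 := col_swap k σ i j
    obtain ⟨b1, b2⟩ := h2 k
    push_cast
    rw [abs_le] at a1 a2 b1 b2
    constructor
    · rw [abs_le]; constructor <;> linarith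
    · rw [abs_le]; constructor <;> linarith

lemma row_near (n i : ℕ) (thr : ℝ) (R : ℕ) :
    Pn (fun σ : Equiv.Perm (Fin n) => |(rowLen (i + 1) σ : ℝ) - thr| ≤ 4 * R) ≤
      (8 * R + 1) * (vR n i + 2 * √(2 * (1 - √(n + 1) * vR n i))) := by
  set m := ⌈thr - 4 * R⌉₊ with hm
  have h1 : Pn (fun σ : Equiv.Perm (Fin n) => |(rowLen (i + 1) σ : ℝ) - thr| ≤ 4 * R) ≤
      Pn (fun σ : Equiv.Perm (Fin n) => ∃ s ∈ Icc m (m + 8 * R), rowLen (i + 1) σ = s) := by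
    refine Pn_mono fun σ h => ⟨_, mem_Icc.2 ⟨?_, ?_⟩, rfl⟩
    · rw [abs_le] at h
      exact Nat.ceil_le.2 (by linarith)
    · rw [abs_le] at h
      have := Nat.le_ceil (thr - 4 * R)
      have h3 : (rowLen (i + 1) σ : ℝ) ≤ m + 8 * R := by rw [hm]; linarith
      exact_mod_cast h3
  refine h1.trans ((Pn_exists_le _ _).trans ?_)
  refine (sum_le_card_nsmul _ _ _ fun s _ => atom_row n i s).trans ?_
  rw [Nat.card_Icc, nsmul_eq_mul]
  have : m + 8 * R + 1 - m = 8 * R + 1 := by omega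
  rw [this]; push_cast; exact le_rfl

lemma Pn_mulLeft {n : ℕ} (p : Equiv.Perm (Fin n) → Prop) (τ : Equiv.Perm (Fin n)) :
    Pn (fun σ => p (τ * σ)) = Pn p := by
  rw [Pn_eq, Pn_eq]; exact EE_mulLeft (fun σ => if p σ then 1 else 0) τ

lemma col_near (n i : ℕ) (thr : ℝ) (R : ℕ) :
    Pn (fun σ : Equiv.Perm (Fin n) => |(colLen (i + 1) σ : ℝ) - thr| ≤ 4 * R) ≤
      (8 * R + 1) * (vR n i + 2 * √(2 * (1 - √(n + 1) * vR n i))) := by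
  simp only [colLen_eq]
  rw [Pn_mulLeft (fun σ : Equiv.Perm (Fin n) => |(rowLen (i + 1) σ : ℝ) - thr| ≤ 4 * R)]
  exact row_near n i thr R

lemma GG_bound (k n R : ℕ) (tI tD : ℕ → ℝ) (F : Equiv.Perm (Fin n) → Prop)
    (hF : ∀ σ, F σ ↔ ∀ i < k, tI i < (rowLen (i + 1) σ : ℝ) ∧ tD i < (colLen (i + 1) σ : ℝ)) :
    Pn (GG R F) ≤ ∑ i ∈ range k, 2 * ((8 * R + 1) * (vR n i + 2 * √(2 * (1 - √(n + 1) * vR n i)))) := by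
  have h1 : Pn (GG R F) ≤ Pn (fun σ : Equiv.Perm (Fin n) => ∃ i ∈ range k, (|(rowLen (i + 1) σ : ℝ) - tI i| ≤ 4 * R ∨
      |(colLen (i + 1) σ : ℝ) - tD i| ≤ 4 * R)) := by
    refine Pn_mono fun σ h => ?_
    obtain ⟨ρ, hρ, h1⟩ := UU_iter_dist R σ h.1
    obtain ⟨ρ', hρ', h2⟩ := UU_iter_dist R σ h.2
    rw [hF] at hρ hρ'
    push Not at hρ'
    obtain ⟨i, hi, h3⟩ := hρ'
    refine ⟨i, mem_range.2 hi, ?_⟩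
    obtain ⟨a1, a2⟩ := hρ i hi
    obtain ⟨b1, b2⟩ := h1 i
    obtain ⟨c1, c2⟩ := h2 i
    rw [abs_le] at b1 b2 c1 c2
    by_cases h4 : tI i < (rowLen (i + 1) ρ' : ℝ)
    · right
      have := h3 h4
      rw [abs_le]; constructor <;> linarith
    · left
      push Not at h4
      rw [abs_le]; constructor <;> linarith
  refine h1.trans ((Pn_exists_le _ _).trans (sum_le_sum fun i _ => ?_))
  have h2 : Pn (fun σ : Equiv.Perm (Fin n) => (|(rowLen (i + 1) σ : ℝ) - tI i| ≤ 4 * R ∨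
      |(colLen (i + 1) σ : ℝ) - tD i| ≤ 4 * R)) ≤ Pn (fun σ : Equiv.Perm (Fin n) => |(rowLen (i + 1) σ : ℝ) - tI i| ≤ 4 * R) +
      Pn (fun σ : Equiv.Perm (Fin n) => |(colLen (i + 1) σ : ℝ) - tD i| ≤ 4 * R) := by
    rw [Pn_eq, Pn_eq, Pn_eq, ← EE_add]
    refine EE_mono fun σ => ?_
    by_cases g1 : |(rowLen (i + 1) σ : ℝ) - tI i| ≤ 4 * R <;>
      by_cases g2 : |(colLen (i + 1) σ : ℝ) - tD i| ≤ 4 * R <;> simp [g1, g2]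
  have h3 := row_near n i (tI i) R
  have h4 := col_near n i (tD i) R
  linarith

noncomputable def EA (n M : ℕ) : Finset (Fin n) := univ.filter fun i => i.val < M ∨ n ≤ i.val + M

lemma EA_card (n M : ℕ) : (EA n M).card ≤ 2 * M := by
  have h : EA n M ⊆ (univ.filter fun i : Fin n => i.val < M) ∪ (univ.filter fun i : Fin n => (Fin.rev i).val < M) := by
    intro i hi
    have hh := (mem_filter.1 hi).2
    rw [mem_union, mem_filter, mem_filter, Fin.val_rev]
    have hi2 := i.2
    rcases hh with h | h
    · left; exact ⟨mem_univ _, h⟩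
    · right; exact ⟨mem_univ _, by omega⟩
  refine (card_le_card h).trans ((card_union_le _ _).trans ?_)
  have h1 : (univ.filter fun i : Fin n => i.val < M).card ≤ M := by rw [Fin.card_filter_val_lt]; omega
  have h2 : (univ.filter fun i : Fin n => (Fin.rev i).val < M).card ≤ M := by
    refine le_trans ?_ h1
    refine card_le_card_of_injOn Fin.rev ?_ (Fin.rev_injective.injOn)
    intro i hi
    simpa using hi
  omega

lemma rho_iff {n : ℕ} (hn : 0 < n) (m : ℝ) (σ : Equiv.Perm (Fin n)) : rhoInfTilde σ < m ↔
    ∃ i, (n:ℝ) - m * √(n:ℝ) < ((((σ i : ℕ) : ℤ) - ((i : ℕ) : ℤ)).natAbs : ℝ) := by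
  have hs : 0 < √(n:ℝ) := by positivity
  rw [rhoInfTilde, div_lt_iff₀ hs]
  constructor
  · intro h
    obtain ⟨i, _, hi⟩ := exists_mem_eq_sup (univ : Finset (Fin n)) ⟨⟨0, hn⟩, mem_univ _⟩
      (fun i : Fin n => (((σ i : ℕ) : ℤ) - ((i : ℕ) : ℤ)).natAbs)
    refine ⟨i, ?_⟩
    rw [← hi]
    change (n:ℝ) - m * √(n:ℝ) < (rhoInf σ : ℝ)
    linarith
  · rintro ⟨i, hi⟩
    have h : (((σ i : ℕ) : ℤ) - ((i : ℕ) : ℤ)).natAbs ≤ rhoInf σ :=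
      le_sup (f := fun i : Fin n => (((σ i : ℕ) : ℤ) - ((i : ℕ) : ℤ)).natAbs) (mem_univ i)
    have h' : ((((σ i : ℕ) : ℤ) - ((i : ℕ) : ℤ)).natAbs : ℝ) ≤ rhoInf σ := by exact_mod_cast h
    linarith

lemma rho_dep {n : ℕ} (hn : 0 < n) (m : ℝ) (M : ℕ) (hM : m * √(n:ℝ) ≤ M) (σ τ : Equiv.Perm (Fin n))
    (h : XX (EA n M) (EA n M) σ = XX (EA n M) (EA n M) τ) (hσ : rhoInfTilde σ < m) : rhoInfTilde τ < m := by
  rw [rho_iff hn] at hσ ⊢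
  obtain ⟨i, hi⟩ := hσ
  refine ⟨i, ?_⟩
  have h1 : (n:ℝ) < ((((σ i : ℕ) : ℤ) - ((i : ℕ) : ℤ)).natAbs : ℝ) + M := by linarith
  have h2 : n < (((σ i : ℕ) : ℤ) - ((i : ℕ) : ℤ)).natAbs + M := by exact_mod_cast h1
  have hi1 := i.2
  have hi2 := (σ i).2
  have hmem : (i, σ i) ∈ XX (EA n M) (EA n M) σ := by
    rw [mem_XX]
    refine ⟨?_, ?_, rfl⟩
    · simp only [EA, mem_filter, mem_univ, true_and]; omega
    · simp only [EA, mem_filter, mem_univ, true_and]; omega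
  rw [h, mem_XX] at hmem
  rw [hmem.2.2]; exact hi

lemma EE_XX {n : ℕ} (A B : Finset (Fin n)) : EE (fun σ => ((XX A B σ).card : ℝ)) = A.card * B.card / n := by
  have : (fun σ => ((XX A B σ).card : ℝ)) = fun σ : Equiv.Perm (Fin n) => ∑ i ∈ A, (if σ i ∈ B then (1:ℝ) else 0) := by
    funext σ; rw [card_XX, sum_boole]
  rw [this, EE_sum]
  have h : ∀ i ∈ A, EE (fun σ : Equiv.Perm (Fin n) => if σ i ∈ B then (1:ℝ) else 0) = B.card / n := by
    intro i _
    rw [EE_apply (fun j => if j ∈ B then (1:ℝ) else 0) i, sum_boole, filter_univ_mem]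
  rw [sum_congr rfl h, sum_const, nsmul_eq_mul, mul_div_assoc]

lemma main_small (k : ℕ) (mρ : ℝ) (mI mD : ℕ → ℝ) (c : ℝ)
    (hc : Tendsto (fun n : ℕ => eS k n / √(n:ℝ)) atTop (nhds c)) (hck : c < 2 * k) :
    Tendsto (fun n : ℕ =>
        Pn (fun σ : Equiv.Perm (Fin n) =>
            rhoInfTilde σ < mρ ∧
              ∀ j ∈ Finset.Icc 1 k, mI j < rowLenTilde j σ ∧ mD j < colLenTilde j σ) -
          Pn (fun σ : Equiv.Perm (Fin n) => rhoInfTilde σ < mρ) *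
            Pn (fun σ : Equiv.Perm (Fin n) =>
              ∀ j ∈ Finset.Icc 1 k, mI j < rowLenTilde j σ ∧ mD j < colLenTilde j σ))
      atTop (nhds 0) := by
  have ht := tail_lim k c hc hck (-∑ i ∈ range k, mI (i + 1))
  refine squeeze_zero_norm' ?_ ht
  filter_upwards [eventually_gt_atTop 0] with n hn
  have hn' : (0:ℝ) < n := by exact_mod_cast hn
  set F := fun σ : Equiv.Perm (Fin n) => ∀ j ∈ Finset.Icc 1 k, mI j < rowLenTilde j σ ∧ mD j < colLenTilde j σ with hF
  have h1 : Pn F ≤ Pn (fun σ : Equiv.Perm (Fin n) =>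
      2 * k * √(n:ℝ) - (-∑ i ∈ range k, mI (i + 1)) * (n:ℝ) ^ ((1:ℝ) / 6) ≤ (maxIncUnion k σ : ℝ)) := by
    refine Pn_mono fun σ h => ?_
    rw [maxInc_eq]
    push_cast
    have h2 : ∀ i ∈ range k, 2 * √(n:ℝ) + mI (i + 1) * (n:ℝ) ^ ((1:ℝ) / 6) ≤ (shp σ i : ℝ) := by
      intro i hi
      have h3 := (h (i + 1) (mem_Icc.2 ⟨by omega, by have := mem_range.1 hi; omega⟩)).1
      rw [rowLenTilde, lt_div_iff₀ (by positivity), rowLen_eq] at h3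
      linarith
    have h3 := sum_le_sum h2
    rw [sum_add_distrib, sum_const, card_range, nsmul_eq_mul, ← sum_mul] at h3
    linarith
  have p1 : Pn (fun σ => rhoInfTilde σ < mρ ∧ F σ) ≤ Pn F := Pn_mono fun σ h => h.2
  have p2 := Pn_nonneg (fun σ => rhoInfTilde σ < mρ ∧ F σ)
  have p3 : Pn (fun σ : Equiv.Perm (Fin n) => rhoInfTilde σ < mρ) * Pn F ≤ Pn F :=
    mul_le_of_le_one_left (Pn_nonneg _) (Pn_le_one _)
  have p4 : 0 ≤ Pn (fun σ : Equiv.Perm (Fin n) => rhoInfTilde σ < mρ) * Pn F := mul_nonneg (Pn_nonneg _) (Pn_nonneg _)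
  refine le_trans ?_ h1
  rw [Real.norm_eq_abs, abs_le]
  constructor <;> linarith

lemma main_big (k : ℕ) (mρ : ℝ) (mI mD : ℕ → ℝ)
    (hc : Tendsto (fun n : ℕ => eS k n / √(n:ℝ)) atTop (nhds (2 * k))) :
    Tendsto (fun n : ℕ =>
        Pn (fun σ : Equiv.Perm (Fin n) =>
            rhoInfTilde σ < mρ ∧
              ∀ j ∈ Finset.Icc 1 k, mI j < rowLenTilde j σ ∧ mD j < colLenTilde j σ) -
          Pn (fun σ : Equiv.Perm (Fin n) => rhoInfTilde σ < mρ) *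
            Pn (fun σ : Equiv.Perm (Fin n) =>
              ∀ j ∈ Finset.Icc 1 k, mI j < rowLenTilde j σ ∧ mD j < colLenTilde j σ))
      atTop (nhds 0) := by
  rw [Metric.tendsto_atTop']
  intro ε hε
  set K : ℝ := 4 * (|mρ| + 1) ^ 2 with hK
  have hK0 : 0 < K := by positivity
  obtain ⟨R, hR⟩ := exists_nat_gt (8 * K / ε)
  have hlim : Tendsto (fun n : ℕ => 2 * ∑ i ∈ range k, 2 * ((8 * (R:ℝ) + 1) *
      (vR n i + 2 * √(2 * (1 - √((n:ℝ) + 1) * vR n i))))) atTop (nhds 0) := by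
    have : Tendsto (fun n : ℕ => ∑ i ∈ range k, 2 * ((8 * (R:ℝ) + 1) *
      (vR n i + 2 * √(2 * (1 - √((n:ℝ) + 1) * vR n i))))) atTop (nhds (∑ i ∈ range k, 0)) := by
      refine tendsto_finsetSum _ fun i hi => ?_
      have := ((atoms_lim k hc i (mem_range.1 hi)).const_mul (8 * (R:ℝ) + 1)).const_mul 2
      simpa using this
    have := this.const_mul 2
    simpa using this
  have hev := hlim.eventually (gt_mem_nhds (show (0:ℝ) < ε / 2 by linarith))
  obtain ⟨n2, hn2⟩ := exists_nat_gt ((4 * (|mρ| + 1)) ^ 2)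
  obtain ⟨N0, hN0⟩ := eventually_atTop.1 (hev.and ((eventually_ge_atTop n2).and (eventually_gt_atTop 0)))
  refine ⟨N0, fun n hn => ?_⟩
  obtain ⟨h1, h2, h3⟩ := hN0 n hn.le
  have hn' : (1:ℝ) ≤ n := by exact_mod_cast h3
  have hs1 : 1 ≤ √(n:ℝ) := Real.one_le_sqrt.2 hn'
  have hss := Real.sq_sqrt (show (0:ℝ) ≤ n by linarith)
  set F := fun σ : Equiv.Perm (Fin n) => ∀ j ∈ Finset.Icc 1 k, mI j < rowLenTilde j σ ∧ mD j < colLenTilde j σ with hF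
  set M := ⌈|mρ| * √(n:ℝ)⌉₊ with hM
  have hM1 : mρ * √(n:ℝ) ≤ M := le_trans (mul_le_mul_of_nonneg_right (le_abs_self _) (by linarith)) (Nat.le_ceil _)
  have hM2 : (M:ℝ) ≤ (|mρ| + 1) * √(n:ℝ) := by
    have := (Nat.ceil_lt_add_one (show 0 ≤ |mρ| * √(n:ℝ) by positivity)).le
    rw [← hM] at this
    linarith
  set A := EA n M with hA
  have hAc := EA_card n M
  rw [← hA] at hAc
  have hAr : (A.card : ℝ) ≤ 2 * M := by exact_mod_cast hAc
  have hAn : A.card + A.card < n := by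
    have h4 : 4 * (|mρ| + 1) < √(n:ℝ) := by
      refine Real.lt_sqrt_of_sq_lt (hn2.trans_le ?_)
      exact_mod_cast h2
    have : (A.card : ℝ) + A.card < n := by
      calc (A.card : ℝ) + A.card ≤ 4 * ((|mρ| + 1) * √(n:ℝ)) := by linarith
        _ = (4 * (|mρ| + 1)) * √(n:ℝ) := by ring
        _ < √(n:ℝ) * √(n:ℝ) := by gcongr
        _ = n := Real.mul_self_sqrt (by linarith)
    exact_mod_cast this
  have hb := indep_bound A A hAn (fun σ => rhoInfTilde σ < mρ) F R (fun σ τ h hσ => rho_dep h3 mρ M hM1 σ τ h hσ)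
  have hp6 : (0:ℝ) < (n:ℝ) ^ ((1:ℝ) / 6) := by positivity
  have hg := GG_bound k n R (fun i => mI (i + 1) * (n:ℝ) ^ ((1:ℝ) / 6) + 2 * √(n:ℝ))
    (fun i => mD (i + 1) * (n:ℝ) ^ ((1:ℝ) / 6) + 2 * √(n:ℝ)) F (by
      intro σ
      have key : ∀ j, (mI j < rowLenTilde j σ ∧ mD j < colLenTilde j σ) ↔
          (mI j * (n:ℝ) ^ ((1:ℝ) / 6) + 2 * √(n:ℝ) < (rowLen j σ : ℝ) ∧
            mD j * (n:ℝ) ^ ((1:ℝ) / 6) + 2 * √(n:ℝ) < (colLen j σ : ℝ)) := by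
        intro j
        rw [rowLenTilde, colLenTilde, lt_div_iff₀ hp6, lt_div_iff₀ hp6, lt_sub_iff_add_lt, lt_sub_iff_add_lt]
      constructor
      · intro h i hi
        exact (key (i + 1)).1 (h (i + 1) (mem_Icc.2 ⟨by omega, by omega⟩))
      · intro h j hj
        obtain ⟨h5, h6⟩ := mem_Icc.1 hj
        obtain ⟨i, rfl⟩ : ∃ i, j = i + 1 := ⟨j - 1, by omega⟩
        exact (key (i + 1)).2 (h i (by omega)))
  have ht : Pn (fun σ => ¬ (XX A A σ).card ≤ R) ≤ K / (R + 1) := by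
    refine (Pn_markov _ (fun σ => ((XX A A σ).card : ℝ)) ((R:ℝ) + 1) (by positivity) (fun σ => by positivity)
      fun σ h => ?_).trans ?_
    · push Not at h; exact_mod_cast h
    · refine div_le_div_of_nonneg_right ?_ (by positivity)
      rw [EE_XX, div_le_iff₀ (by linarith)]
      have h7 : (A.card : ℝ) ≤ 2 * ((|mρ| + 1) * √(n:ℝ)) := by linarith
      calc (A.card : ℝ) * A.card ≤ (2 * ((|mρ| + 1) * √(n:ℝ))) * (2 * ((|mρ| + 1) * √(n:ℝ))) := by gcongr
        _ = 4 * (|mρ| + 1) ^ 2 * √(n:ℝ) ^ 2 := by ring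
        _ = K * n := by rw [hss, hK]
  have hR2 : 4 * (K / (R + 1)) < ε / 2 := by
    rw [div_lt_iff₀ hε] at hR
    rw [← mul_div_assoc, div_lt_iff₀ (by positivity)]
    nlinarith
  rw [Real.dist_eq, sub_zero]
  refine hb.trans_lt ?_
  linarith

lemma final_indep (k : ℕ) (mρ : ℝ) (mI mD : ℕ → ℝ) :
    Tendsto (fun n : ℕ =>
        Pn (fun σ : Equiv.Perm (Fin n) =>
            rhoInfTilde σ < mρ ∧
              ∀ j ∈ Finset.Icc 1 k, mI j < rowLenTilde j σ ∧ mD j < colLenTilde j σ) -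
          Pn (fun σ : Equiv.Perm (Fin n) => rhoInfTilde σ < mρ) *
            Pn (fun σ : Equiv.Perm (Fin n) =>
              ∀ j ∈ Finset.Icc 1 k, mI j < rowLenTilde j σ ∧ mD j < colLenTilde j σ))
      atTop (nhds 0) := by
  obtain ⟨c, hc⟩ := eS_lim k
  have hle : c ≤ 2 * k := by
    refine le_of_tendsto hc ?_
    filter_upwards [eventually_gt_atTop 0] with n hn
    have hn' : (0:ℝ) < n := by exact_mod_cast hn
    rw [div_le_iff₀ (Real.sqrt_pos.2 hn')]
    exact eS_le k n
  rcases hle.lt_or_eq with h | h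
  · exact main_small k mρ mI mD c hc h
  · rw [h] at hc; exact main_big k mρ mI mD hc

/-- `ρ̃_∞` is asymptotically independent of the random vector
`(I_1, …, I_k, D_1, …, D_k)` of the first `k` rows and columns of the RSK shape. -/
theorem rhoInfTilde_asymp_indep_RSK (k : ℕ) (mρ : ℝ) (mI mD : ℕ → ℝ) :
    Tendsto (fun n : ℕ =>
        Pn (fun σ : Equiv.Perm (Fin n) =>
            rhoInfTilde σ < mρ ∧
              ∀ j ∈ Finset.Icc 1 k, mI j < rowLenTilde j σ ∧ mD j < colLenTilde j σ) -
          Pn (fun σ : Equiv.Perm (Fin n) => rhoInfTilde σ < mρ) *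
            Pn (fun σ : Equiv.Perm (Fin n) =>
              ∀ j ∈ Finset.Icc 1 k, mI j < rowLenTilde j σ ∧ mD j < colLenTilde j σ))
      atTop (nhds 0) := by
  exact final_indep k mρ mI mD
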